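/- arXiv:1609.03049 — 2 statements merged into one kernel-verified Lean document; each statement's English description precedes it below -/
import Mathlib

section
/- Let N be a 3-connected matroid having a U_{2,4}-minor and with corank r*(N) \ge 3. Then there exists an element e of N such that co(N\\e) is 3-connected and has a U_{2,4}-minor. -/
/-!
For finite `N`, let `M` be the dual: it is 3-connected with a `U_{2,4}`-minor and rank at least
three, and an element `e` is wanted for which the simplification of `M ／ {e}` is 3-connected with a
`U_{2,4}`-minor. A `U_{2,4}`-minor of `M` is a set `L` of corank two together with four points, any
two of which span `M` with `L`, and contracting an `e ∈ L` keeps it. The simplification of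
`M ／ {e}` can then fail to be 3-connected only because of a vertical 3-separation `(P, Q)` with `e`
in the closure of both sides.

Given such a separation for an `e ∈ L`, one side, say `P`, has rank at most one in `M ／ L`, and
every element of `P` outside the closure of `Q` lies in some other such `L'`, modulo which `P` has
again rank at most one. Choose the separation with `P` of least rank, and inclusion-minimal.
Uncrossing it with a vertical separation at another element `x` of `P` shows, by submodularity, that
`P` is the union of two lines through `x`. This cannot hold for two suitable elements `x` at once,
for then `P` would be a line. So some element of `P` has no vertical separation.

An infinite `N` has finite rank, since in infinite rank every partition counts as a separation. Some
element outside a finite set carrying the `U_{2,4}`-minor has a 3-connected deletion: otherwise the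
separations of these deletions, all of which split a fixed finite set, would converge along an
ultrafilter to a 2-separation of `N`. A 3-connected deletion is its own cosimplification.
-/

open Set Matroid

universe u

namespace BLFormal

/-! ### Matroid preliminaries -/

/-- A circuit of a matroid: a minimal dependent set. -/
def Circuit {α : Type u} (M : Matroid α) (C : Set α) : Prop := Minimal M.Dep C

/-- Deletion of a set of elements from a matroid. -/
def del {α : Type u} (M : Matroid α) (D : Set α) : Matroid α := M ↾ (M.E \ D)

/-- Contraction of a set of elements of a matroid, defined by duality. -/
def con {α : Type u} (M : Matroid α) (C : Set α) : Matroid α := (del M✶ C)✶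

/-- `N` is a minor of `M` if it is obtained by a contraction followed by a deletion. -/
def IsMinor {α : Type u} (N M : Matroid α) : Prop := ∃ C D : Set α, N = del (con M C) D

/-- `N` is a proper (strict) minor of `M`. -/
def IsStrictMinor {α : Type u} (N M : Matroid α) : Prop := IsMinor N M ∧ N ≠ M

/-- The rank of a set `X` in the matroid `M`, as an extended natural number:
the supremum of the cardinalities of the independent subsets of `X`. -/
noncomputable def eRk {α : Type u} (M : Matroid α) (X : Set α) : ℕ∞ :=
  ⨆ I : {I : Set α // M.Indep I ∧ I ⊆ X}, (I : Set α).encard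

/-- The rank `r(M)` of a matroid, as an extended natural number. -/
noncomputable def eRank {α : Type u} (M : Matroid α) : ℕ∞ := eRk M M.E

/-- A loop of a matroid. -/
def MLoop {α : Type u} (M : Matroid α) (e : α) : Prop := M.Dep {e}

/-- A coloop of a matroid: a loop of the dual. -/
def MColoop {α : Type u} (M : Matroid α) (e : α) : Prop := MLoop M✶ e

/-- A `k`-separation of a matroid: a partition `(X, Y)` of the ground set with
`|X|, |Y| ≥ k` and `r(X) + r(Y) - r(M) ≤ k - 1`. -/
def IsKSep {α : Type u} (M : Matroid α) (k : ℕ) (X Y : Set α) : Prop :=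
  X ∪ Y = M.E ∧ Disjoint X Y ∧ (k : ℕ∞) ≤ X.encard ∧ (k : ℕ∞) ≤ Y.encard ∧
    eRk M X + eRk M Y ≤ eRank M + ((k - 1 : ℕ) : ℕ∞)

/-- A matroid is connected if it has no 1-separation. -/
def MConnected {α : Type u} (M : Matroid α) : Prop := ¬ ∃ X Y, IsKSep M 1 X Y

/-- A matroid is 3-connected if it is connected and has no 2-separation. -/
def ThreeConnected {α : Type u} (M : Matroid α) : Prop :=
  MConnected M ∧ ¬ ∃ X Y, IsKSep M 2 X Y

/-- Two elements of a matroid form a series pair if no circuit contains exactly one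
of them, and some circuit contains both. -/
def SeriesPair {α : Type u} (M : Matroid α) (e f : α) : Prop :=
  (∀ C, Circuit M C → (e ∈ C ↔ f ∈ C)) ∧ ∃ C, Circuit M C ∧ e ∈ C ∧ f ∈ C

/-- A series class: a maximal set in which every two elements form a series pair. -/
def IsSeriesClass {α : Type u} (M : Matroid α) (S : Set α) : Prop :=
  Maximal (fun T => T.Nonempty ∧ ∀ e ∈ T, ∀ f ∈ T, SeriesPair M e f) S

/-- `N` is a cosimplification `co(M)` of `M`: it is obtained from `M` by contracting
all coloops and, in each series class, all but one element. -/
def IsCosimplification {α : Type u} (M N : Matroid α) : Prop :=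
  ∃ D ⊆ M.E, N = con M D ∧ (∀ e, MColoop M e → e ∈ D) ∧
    ∀ S, IsSeriesClass M S → ∃ x ∈ S, S \ D = {x}

/-- `M` is isomorphic to the uniform matroid `U_{k, n}`: the ground set has `n` elements
and the circuits are precisely the `(k+1)`-element subsets of the ground set. -/
def IsUnif {α : Type u} (k n : ℕ) (M : Matroid α) : Prop :=
  M.E.encard = n ∧ ∀ C, Circuit M C ↔ C ⊆ M.E ∧ C.encard = k + 1

/-- `M` has a `U_{2,4}`-minor. -/
def HasU24Minor {α : Type u} (M : Matroid α) : Prop := ∃ N, IsMinor N M ∧ IsUnif 2 4 N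

/-- `M` is isomorphic to the direct sum `U_{2,4} ⊕ U_{0,1}` of `U_{2,4}` and a loop:
its ground set consists of a 4-element set `X` together with one further element `l`,
and its circuits are `{l}` and the 3-element subsets of `X`. -/
def IsU24PlusLoop {α : Type u} (M : Matroid α) : Prop :=
  ∃ (X : Set α) (l : α), l ∉ X ∧ M.E = insert l X ∧ X.encard = 4 ∧
    ∀ C, Circuit M C ↔ (C = {l} ∨ (C ⊆ X ∧ C.encard = 3))

/-- `M` is isomorphic to the Fano matroid `F₇`: the rank-3 matroid represented over
`GF(2)` by the seven nonzero vectors of `GF(2)³`. -/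
def IsFano {α : Type u} (M : Matroid α) : Prop :=
  ∃ v : α → (Fin 3 → ZMod 2),
    Set.BijOn v M.E {w | w ≠ 0} ∧
    ∀ I ⊆ M.E, (M.Indep I ↔ LinearIndependent (ZMod 2) (fun x : I => v x))

/-! ### Graphs (with loops and parallel edges allowed) -/

/-- A graph on vertex type `V`, with edge set `E` living in the ambient edge type `α`;
each edge is sent to the unordered pair of its end-vertices. -/
structure Graph (V : Type u) (α : Type u) where
  E : Set α
  inc : α → Sym2 V

namespace Graph

variable {V : Type u} {α : Type u}

/-- The vertices incident with an edge set `C`. -/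
def vertsOf (G : Graph V α) (C : Set α) : Set V := {v | ∃ e ∈ C, v ∈ G.inc e}

/-- The vertex set of a graph (we consider graphs without isolated vertices). -/
def verts (G : Graph V α) : Set V := G.vertsOf G.E

/-- Deletion of a set of edges from a graph. -/
def delete (G : Graph V α) (D : Set α) : Graph V α := ⟨G.E \ D, G.inc⟩

/-- The degree of a vertex `v` in the edge set `C`, with loops counting twice. -/
noncomputable def deg (G : Graph V α) (C : Set α) (v : V) : ℕ :=
  {e ∈ C | v ∈ G.inc e}.ncard + {e ∈ C | G.inc e = Sym2.diag v}.ncard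

/-- Two vertices are adjacent via an edge of `C`. -/
def AdjOn (G : Graph V α) (C : Set α) (u v : V) : Prop := ∃ e ∈ C, G.inc e = s(u, v)

/-- The subgraph with edge set `C` is connected. -/
def ConnectedOn (G : Graph V α) (C : Set α) : Prop :=
  ∀ u ∈ G.vertsOf C, ∀ v ∈ G.vertsOf C, Relation.ReflTransGen (G.AdjOn C) u v

/-- `C` is a cycle of `G` : the edge set of a connected 2-regular subgraph. -/
def IsCycle (G : Graph V α) (C : Set α) : Prop :=
  C ⊆ G.E ∧ C.Finite ∧ C.Nonempty ∧ (∀ v ∈ G.vertsOf C, G.deg C v = 2) ∧ G.ConnectedOn C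

/-- A graph is 2-edge-connected if each of its edges lies in a cycle. -/
def TwoEdgeConnected (G : Graph V α) : Prop := ∀ e ∈ G.E, ∃ C, G.IsCycle C ∧ e ∈ C

/-- A graph is connected if it has at least one vertex and any two of its
vertices are joined by a path. -/
def Connected (G : Graph V α) : Prop := G.verts.Nonempty ∧ G.ConnectedOn G.E

/-- Delete a vertex from a graph (removing all edges incident with it). -/
def delVert (G : Graph V α) (v : V) : Graph V α := ⟨{e ∈ G.E | v ∉ G.inc e}, G.inc⟩

/-- A graph is 2-connected if it is connected and stays connected after the
deletion of any vertex. -/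
def TwoConnected (G : Graph V α) : Prop :=
  G.Connected ∧ ∀ v ∈ G.verts, (G.delVert v).Connected

/-- `X` contains at least two (distinct) cycles of `G`. -/
def HasTwoCycles (G : Graph V α) (X : Set α) : Prop :=
  ∃ C₁ C₂, G.IsCycle C₁ ∧ G.IsCycle C₂ ∧ C₁ ≠ C₂ ∧ C₁ ⊆ X ∧ C₂ ⊆ X

/-- The circuits of the bicircular lift matroid of `G`: edge sets containing at
least two cycles and minimal with this property. -/
def LiftCircuit (G : Graph V α) (X : Set α) : Prop :=
  Minimal (fun Y => Y ⊆ G.E ∧ G.HasTwoCycles Y) X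

/-- Two edges of a graph form a series pair if no cycle contains exactly one of
them, and some cycle contains both. -/
def SeriesPair (G : Graph V α) (e f : α) : Prop :=
  (∀ C, G.IsCycle C → (e ∈ C ↔ f ∈ C)) ∧ ∃ C, G.IsCycle C ∧ e ∈ C ∧ f ∈ C

end Graph

/-- `N` is the bicircular lift matroid `L(G)` of `G` : its ground set is `E(G)`
and its circuits are the lift circuits of `G`. -/
def IsLiftRep {V α : Type u} (G : Graph V α) (N : Matroid α) : Prop :=
  N.E = G.E ∧ ∀ C, Circuit N C ↔ G.LiftCircuit C

/-- `N` is the cycle matroid `M(G)` of `G` : its ground set is `E(G)` and its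
circuits are the cycles of `G`. -/
def IsGraphicRep {V α : Type u} (G : Graph V α) (N : Matroid α) : Prop :=
  N.E = G.E ∧ ∀ C, Circuit N C ↔ G.IsCycle C

/-- A matroid is bicircular lift if it is (isomorphic to) `L(G)` for some graph `G`. -/
def IsBicircularLift {α : Type u} (N : Matroid α) : Prop :=
  ∃ (V : Type u) (G : Graph V α), IsLiftRep G N

/-- A matroid is graphic if it is (isomorphic to) the cycle matroid of some graph. -/
def IsGraphic {α : Type u} (N : Matroid α) : Prop :=
  ∃ (V : Type u) (G : Graph V α), IsGraphicRep G N

/-- The class `BL-bar` of matroids that are graphic or bicircular lift. -/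
def InBL {α : Type u} (N : Matroid α) : Prop := IsGraphic N ∨ IsBicircularLift N

/-- `M` is an excluded minor for the class `BL-bar`. -/
def ExcludedMinorBL {α : Type u} (M : Matroid α) : Prop :=
  ¬ InBL M ∧ ∀ N, IsStrictMinor N M → InBL N

/-! ### Special graphs and subdivisions -/

/-- `G` is (a copy of) the complete graph `K₄`. -/
def IsK4 {V α : Type u} (G : Graph V α) : Prop :=
  ∃ v : Fin 4 → V, Function.Injective v ∧
    ∃ ed : {p : Sym2 (Fin 4) // ¬ p.IsDiag} → α, Function.Injective ed ∧
      G.E = Set.range ed ∧ ∀ p, G.inc (ed p) = Sym2.map v p.1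

/-- `G` is (a copy of) the complete graph `K₅`. -/
def IsK5 {V α : Type u} (G : Graph V α) : Prop :=
  ∃ v : Fin 5 → V, Function.Injective v ∧
    ∃ ed : {p : Sym2 (Fin 5) // ¬ p.IsDiag} → α, Function.Injective ed ∧
      G.E = Set.range ed ∧ ∀ p, G.inc (ed p) = Sym2.map v p.1

/-- `G` is (a copy of) the complete bipartite graph `K₃,₃`. -/
def IsK33 {V α : Type u} (G : Graph V α) : Prop :=
  ∃ a b : Fin 3 → V, Function.Injective a ∧ Function.Injective b ∧
    Set.range a ∩ Set.range b = ∅ ∧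
    ∃ ed : Fin 3 × Fin 3 → α, Function.Injective ed ∧
      G.E = Set.range ed ∧ ∀ p, G.inc (ed p) = s(a p.1, b p.2)

/-- `G` is (a copy of) the graph `K₂ⁿ` with two vertices joined by `n` parallel edges. -/
def IsK2n {V α : Type u} (n : ℕ) (G : Graph V α) : Prop :=
  ∃ u v : V, u ≠ v ∧ ∃ ed : Fin n → α, Function.Injective ed ∧
    G.E = Set.range ed ∧ ∀ i, G.inc (ed i) = s(u, v)

/-- `H` is obtained from `G` by subdividing a single edge. -/
def ElemSub {V α : Type u} (G H : Graph V α) : Prop :=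
  ∃ e ∈ G.E, ∃ (f g : α) (u v w : V),
    G.inc e = s(u, v) ∧ w ∉ G.verts ∧ f ≠ g ∧
    f ∉ G.E \ {e} ∧ g ∉ G.E \ {e} ∧
    H.E = (G.E \ {e}) ∪ {f, g} ∧
    H.inc f = s(u, w) ∧ H.inc g = s(w, v) ∧
    ∀ x ∈ G.E \ {e}, H.inc x = G.inc x

/-- `H` is a subdivision of `G` : it is obtained from `G` by repeatedly
subdividing edges. -/
def IsSubdivision {V α : Type u} (G H : Graph V α) : Prop :=
  Relation.ReflTransGen ElemSub G H

/-! ### 2-sums and simplification -/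

/-- `N` is the 2-sum `N₁ ⊕₂ᵉ N₂` of `N₁` and `N₂` along `e`. -/
def Is2Sum {α : Type u} (N N₁ N₂ : Matroid α) (e : α) : Prop :=
  N₁.E ∩ N₂.E = {e} ∧
  ¬ MLoop N₁ e ∧ ¬ MColoop N₁ e ∧ ¬ MLoop N₂ e ∧ ¬ MColoop N₂ e ∧
  N.E = (N₁.E ∪ N₂.E) \ {e} ∧
  ∀ C, Circuit N C ↔
    ((Circuit N₁ C ∧ e ∉ C) ∨ (Circuit N₂ C ∧ e ∉ C) ∨
      ∃ C₁ C₂, Circuit N₁ C₁ ∧ Circuit N₂ C₂ ∧ e ∈ C₁ ∧ e ∈ C₂ ∧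
        C = (C₁ \ {e}) ∪ (C₂ \ {e}))

/-- `H` is a simplification `si(G)` of `G` : it is obtained from `G` by deleting all
loops and all but one edge of each parallel class. -/
def IsSimplification {V α : Type u} (G H : Graph V α) : Prop :=
  H.inc = G.inc ∧ H.E ⊆ G.E ∧ (∀ e ∈ H.E, ¬ (G.inc e).IsDiag) ∧
    ∀ e ∈ G.E, ¬ (G.inc e).IsDiag → ∃! f, f ∈ H.E ∧ G.inc f = G.inc e

/-- `H` is 2-connected, or is obtained from a 2-connected graph and a single edge `K₂`
by identifying one end-vertex of the edge with a vertex of the 2-connected graph. -/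
def TwoConnOrPendant {V α : Type u} (H : Graph V α) : Prop :=
  H.TwoConnected ∨
    ∃ (e : α) (u w : V), e ∈ H.E ∧ H.inc e = s(u, w) ∧ u ≠ w ∧
      (H.delete {e}).TwoConnected ∧ u ∈ (H.delete {e}).verts ∧ w ∉ (H.delete {e}).verts

section Rank

variable {α : Type u} {M : Matroid α} {A B C D X Y : Set α} {x : α}

lemma eRk_eq_eRk (M : Matroid α) (X : Set α) : eRk M X = M.eRk X := by
  refine le_antisymm (iSup_le fun I ↦ I.2.1.encard_le_eRk_of_subset I.2.2) ?_
  obtain ⟨I, hI⟩ := M.exists_isBasis' X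
  rw [hI.eRk_eq_encard]
  exact le_iSup (fun I : {I : Set α // M.Indep I ∧ I ⊆ X} ↦ (I : Set α).encard)
    ⟨I, hI.indep, hI.subset⟩

lemma eRank_eq_eRank (M : Matroid α) : eRank M = M.eRank := by
  rw [eRank, eRk_eq_eRk, eRk_ground]

/-- The rank of a set as an integer, so that rank inequalities can be rearranged without truncated
subtraction. It is `0` on sets of infinite rank. -/
noncomputable def rk (M : Matroid α) (X : Set α) : ℤ := (M.eRk X).toNat

lemma rk_nonneg (M : Matroid α) (X : Set α) : 0 ≤ rk M X := Int.natCast_nonneg _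

lemma rk_empty (M : Matroid α) : rk M ∅ = 0 := by
  rw [rk, eRk_empty, ENat.toNat_zero, Nat.cast_zero]

lemma rk_closure (M : Matroid α) (X : Set α) : rk M (M.closure X) = rk M X := by
  rw [rk, eRk_closure_eq, rk]

lemma rk_congr_closure (h : M.closure X = M.closure Y) : rk M X = rk M Y := by
  rw [← rk_closure, h, rk_closure]

lemma rk_restrict (M : Matroid α) (h : X ⊆ A) : rk (M ↾ A) X = rk M X := by
  rw [rk, restrict_eRk_eq _ h, rk]

lemma rk_delete (M : Matroid α) (h : X ⊆ M.E \ D) : rk (M ＼ D) X = rk M X :=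
  rk_restrict M h

lemma exists_eRk_eq (M : Matroid α) [M.RankFinite] (X : Set α) :
    ∃ n : ℕ, M.eRk X = n ∧ rk M X = n := by
  refine ⟨(M.eRk X).toNat, (ENat.natCast_toNat ?_).symm, rfl⟩
  exact eRk_ne_top_iff.mpr (M.isRkFinite_set X)

lemma rk_le_rk_iff [M.RankFinite] : rk M X ≤ rk M Y ↔ M.eRk X ≤ M.eRk Y := by
  obtain ⟨a, ha, ha'⟩ := exists_eRk_eq M X
  obtain ⟨b, hb, hb'⟩ := exists_eRk_eq M Y
  rw [ha, hb, ha', hb', Nat.cast_le, Nat.cast_le]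

lemma rk_mono [M.RankFinite] (h : X ⊆ Y) : rk M X ≤ rk M Y :=
  rk_le_rk_iff.mpr (M.eRk_mono h)

lemma rk_le_rk_ground (M : Matroid α) [M.RankFinite] (X : Set α) : rk M X ≤ rk M M.E :=
  rk_le_rk_iff.mpr ((M.eRk_le_eRank X).trans_eq M.eRk_ground.symm)

lemma rk_inter_add_rk_union_le (M : Matroid α) [M.RankFinite] (X Y : Set α) :
    rk M (X ∩ Y) + rk M (X ∪ Y) ≤ rk M X + rk M Y := by
  obtain ⟨a, ha, ha'⟩ := exists_eRk_eq M X
  obtain ⟨b, hb, hb'⟩ := exists_eRk_eq M Y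
  obtain ⟨c, hc, hc'⟩ := exists_eRk_eq M (X ∩ Y)
  obtain ⟨d, hd, hd'⟩ := exists_eRk_eq M (X ∪ Y)
  have h := M.eRk_inter_add_eRk_union_le X Y
  rw [ha, hb, hc, hd] at h
  rw [ha', hb', hc', hd']
  exact_mod_cast h

lemma rk_add_rk_le [M.RankFinite] (hC : C ⊆ A ∩ B) (hD : D ⊆ A ∪ B) :
    rk M C + rk M D ≤ rk M A + rk M B := by
  linarith [rk_inter_add_rk_union_le M A B, rk_mono (M := M) hC, rk_mono (M := M) hD]

lemma rk_union_le (M : Matroid α) [M.RankFinite] (X Y : Set α) :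
    rk M (X ∪ Y) ≤ rk M X + rk M Y := by
  linarith [rk_inter_add_rk_union_le M X Y, rk_nonneg M (X ∩ Y)]

lemma rk_singleton_le (M : Matroid α) [M.RankFinite] (x : α) : rk M {x} ≤ 1 := by
  obtain ⟨a, ha, ha'⟩ := exists_eRk_eq M {x}
  have h := M.eRk_singleton_le x
  rw [ha] at h
  rw [ha']
  exact_mod_cast h

lemma rk_insert_le (M : Matroid α) [M.RankFinite] (x : α) (X : Set α) :
    rk M (insert x X) ≤ rk M X + 1 := by
  rw [← union_singleton]
  linarith [rk_union_le M X {x}, rk_singleton_le M x]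

lemma rk_le_rk_diff_singleton_add_one (M : Matroid α) [M.RankFinite] (X : Set α) (x : α) :
    rk M X ≤ rk M (X \ {x}) + 1 :=
  (rk_mono (subset_insert_sdiff_singleton x X)).trans (rk_insert_le M x _)

lemma nontrivial_of_two_le_rk [M.RankFinite] (h : 2 ≤ rk M X) : X.Nontrivial := by
  by_contra hX
  obtain rfl | ⟨x, rfl⟩ := (not_nontrivial_iff.mp hX).eq_empty_or_singleton
  · linarith [rk_empty M]
  · linarith [rk_singleton_le M x]

lemma rk_insert_of_mem_closure (h : x ∈ M.closure X) : rk M (insert x X) = rk M X :=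
  rk_congr_closure (M.closure_insert_eq_of_mem_closure h)

lemma rk_insert_of_notMem_closure [M.RankFinite] (hx : x ∈ M.E) (h : x ∉ M.closure X) :
    rk M (insert x X) = rk M X + 1 := by
  obtain ⟨a, ha, ha'⟩ := exists_eRk_eq M X
  obtain ⟨b, hb, hb'⟩ := exists_eRk_eq M (insert x X)
  have h := M.eRk_insert_eq_add_one ⟨hx, h⟩
  rw [ha, hb] at h
  rw [ha', hb']
  exact_mod_cast h

lemma exists_notMem_closure_of_rk_lt [M.RankFinite] (h : rk M X < rk M Y) :
    ∃ y ∈ Y, y ∈ M.E ∧ y ∉ M.closure X := by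
  obtain ⟨y, hy, hrk⟩ := M.exists_eRk_insert_eq_add_one_of_lt
    (not_le.mp (mt rk_le_rk_iff.mpr (not_le.mpr h)))
  obtain ⟨a, ha, -⟩ := exists_eRk_eq M X
  have hne : M.eRk (insert y X) ≠ M.eRk X := by
    rw [hrk, ha]
    exact_mod_cast a.succ_ne_self
  refine ⟨y, hy.1, by_contra fun hyE ↦ hne (M.eRk_insert_of_notMem_ground X hyE), fun hcl ↦ hne ?_⟩
  rw [← M.eRk_closure_eq, M.closure_insert_eq_of_mem_closure hcl, M.eRk_closure_eq]

lemma closure_eq_closure_of_rk_le [M.RankFinite] (h : X ⊆ Y) (hrk : rk M Y ≤ rk M X) :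
    M.closure X = M.closure Y :=
  (M.isRkFinite_set X).closure_eq_closure_of_subset_of_eRk_ge_eRk h (rk_le_rk_iff.mp hrk)

lemma spanning_iff_rk_ground_le [M.RankFinite] (hX : X ⊆ M.E) :
    M.Spanning X ↔ rk M M.E ≤ rk M X := by
  rw [spanning_iff_eRk_le hX, rk_le_rk_iff, eRk_ground]

lemma rk_of_indep (h : M.Indep X) : rk M X = X.ncard := by
  rw [rk, h.eRk_eq_encard, ncard]

lemma natCast_le_rk_ground [M.RankFinite] {n : ℕ} (h : n ≤ M.eRank) : n ≤ rk M M.E := by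
  obtain ⟨a, ha, ha'⟩ := exists_eRk_eq M M.E
  rw [← eRk_ground, ha] at h
  rw [ha']
  exact_mod_cast h

lemma eRk_contract_add_eRk (M : Matroid α) (C X : Set α) :
    (M ／ C).eRk X + M.eRk C = M.eRk (X ∪ C) := by
  obtain ⟨I, hI⟩ := M.exists_isBasis' C
  obtain ⟨J, hJ⟩ := (M ／ C).exists_isBasis' X
  obtain ⟨hJI, hdj⟩ := hI.contract_indep_iff.mp hJ.indep
  have hcl : M.closure (J ∪ C) \ C = M.closure (X ∪ C) \ C := by
    rw [← contract_closure_eq, hJ.closure_eq_closure, contract_closure_eq]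
  have hcl' : M.closure (J ∪ C) = M.closure (X ∪ C) := by
    have key (Z : Set α) : M.closure (M.closure (Z ∪ C) \ C ∪ C) = M.closure (Z ∪ C) := by
      rw [sdiff_union_self, closure_union_closure_left_eq, union_assoc, union_self]
    rw [← key J, hcl, key]
  rw [← M.eRk_closure_eq (X ∪ C), ← hcl', ← closure_union_closure_right_eq,
    ← hI.closure_eq_closure, closure_union_closure_right_eq, eRk_closure_eq, hJI.eRk_eq_encard,
    hJ.eRk_eq_encard, hI.eRk_eq_encard,
    encard_union_eq (hdj.symm.mono_right hI.subset)]

lemma rk_contract (M : Matroid α) [M.RankFinite] (C X : Set α) :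
    rk (M ／ C) X = rk M (X ∪ C) - rk M C := by
  obtain ⟨a, ha, ha'⟩ := exists_eRk_eq (M ／ C) X
  obtain ⟨b, hb, hb'⟩ := exists_eRk_eq M (X ∪ C)
  obtain ⟨c, hc, hc'⟩ := exists_eRk_eq M C
  have h := eRk_contract_add_eRk M C X
  rw [ha, hb, hc] at h
  rw [ha', hb', hc', eq_sub_iff_add_eq]
  exact_mod_cast h

lemma rk_dual_add_rk_ground (M : Matroid α) [M.Finite] (hX : X ⊆ M.E) :
    rk M✶ X + rk M M.E = rk M (M.E \ X) + X.ncard := by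
  obtain ⟨a, ha, ha'⟩ := exists_eRk_eq M✶ X
  obtain ⟨b, hb, hb'⟩ := exists_eRk_eq M M.E
  obtain ⟨c, hc, hc'⟩ := exists_eRk_eq M (M.E \ X)
  have h := M.eRk_dual_add_eRank X hX
  rw [← eRk_ground, ha, hb, hc, ← (M.ground_finite.subset hX).cast_ncard_eq] at h
  rw [ha', hb', hc']
  exact_mod_cast h

end Rank

section ThreeConnected

variable {α : Type u} {M : Matroid α} {S T X : Set α} {x y : α}

lemma two_le_encard_iff_nontrivial : 2 ≤ X.encard ↔ X.Nontrivial := by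
  rw [← one_lt_encard_iff_nontrivial, ← one_add_one_eq_two, ENat.add_one_le_iff ENat.one_ne_top]

lemma exists_isKSep_iff [M.RankFinite] {k : ℕ} : (∃ X Y, IsKSep M k X Y) ↔
    ∃ X ⊆ M.E, k ≤ X.encard ∧ k ≤ (M.E \ X).encard ∧
      rk M X + rk M (M.E \ X) ≤ rk M M.E + (k - 1 : ℕ) := by
  have cast_le (X Y : Set α) : eRk M X + eRk M Y ≤ eRank M + ((k - 1 : ℕ) : ℕ∞) ↔
      rk M X + rk M Y ≤ rk M M.E + (k - 1 : ℕ) := by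
    obtain ⟨a, ha, ha'⟩ := exists_eRk_eq M X
    obtain ⟨b, hb, hb'⟩ := exists_eRk_eq M Y
    obtain ⟨c, hc, hc'⟩ := exists_eRk_eq M M.E
    rw [eRank, eRk_eq_eRk, eRk_eq_eRk, eRk_eq_eRk, ha, hb, hc, ha', hb', hc']
    norm_cast
  constructor
  · rintro ⟨X, Y, hXY, hdj, hX, hY, hrk⟩
    obtain rfl : Y = M.E \ X := by rw [← hXY, union_sdiff_left, hdj.symm.sdiff_eq_left]
    exact ⟨X, hXY ▸ subset_union_left, hX, hY, (cast_le _ _).mp hrk⟩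
  · rintro ⟨X, hXE, hX, hY, hrk⟩
    exact ⟨X, M.E \ X, union_sdiff_cancel hXE, disjoint_sdiff_right, hX, hY, (cast_le _ _).mpr hrk⟩

lemma mConnected_iff [M.RankFinite] : MConnected M ↔
    ∀ X ⊆ M.E, X.Nonempty → (M.E \ X).Nonempty → rk M M.E + 1 ≤ rk M X + rk M (M.E \ X) := by
  simp only [MConnected, exists_isKSep_iff, Nat.cast_one, one_le_encard_iff_nonempty, not_exists,
    not_and, not_le, Nat.sub_self, Nat.cast_zero, add_zero, Int.add_one_le_iff]

lemma threeConnected_iff [M.RankFinite] : ThreeConnected M ↔ MConnected M ∧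
    ∀ X ⊆ M.E, X.Nontrivial → (M.E \ X).Nontrivial → rk M M.E + 2 ≤ rk M X + rk M (M.E \ X) := by
  have lt_iff (a b : ℤ) : a + ((2 - 1 : ℕ) : ℤ) < b ↔ a + 2 ≤ b := by omega
  simp only [ThreeConnected, exists_isKSep_iff, Nat.cast_ofNat,
    two_le_encard_iff_nontrivial, not_exists, not_and, not_le, lt_iff]

lemma ThreeConnected.rk_add_two_le [M.RankFinite] (h : ThreeConnected M) (hST : M.E ⊆ S ∪ T)
    (hT : T ⊆ M.E) (hnt : T.Nontrivial) (hnt' : (M.E \ T).Nontrivial) :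
    rk M M.E + 2 ≤ rk M S + rk M T := by
  have hsep := (threeConnected_iff.mp h).2 T hT hnt hnt'
  have hS : rk M (M.E \ T) ≤ rk M S := rk_mono fun x hx ↦ (hST hx.1).resolve_right hx.2
  linarith

lemma diff_pair_nontrivial (h4 : 4 ≤ X.encard) (x y : α) : (X \ {x, y}).Nontrivial := by
  rw [← two_le_encard_iff_nontrivial]
  have hpair : ({x, y} : Set α).encard ≤ 2 :=
    (encard_insert_le _ _).trans_eq (by rw [encard_singleton, one_add_one_eq_two])
  calc (2 : ℕ∞) = 4 - 2 := rfl
    _ ≤ X.encard - ({x, y} : Set α).encard := tsub_le_tsub h4 hpair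
    _ ≤ (X \ {x, y}).encard := tsub_encard_le_encard_sdiff _ _

lemma ThreeConnected.two_le_rk [M.RankFinite] (h : ThreeConnected M) (h4 : 4 ≤ M.E.encard)
    (hX : X ⊆ M.E) (hnt : X.Nontrivial) : 2 ≤ rk M X := by
  obtain ⟨x, hx, y, hy, hxy⟩ := hnt
  have hsep := h.rk_add_two_le (S := M.E) subset_union_left (pair_subset (hX hx) (hX hy))
    (nontrivial_pair hxy) (diff_pair_nontrivial h4 x y)
  linarith [rk_mono (M := M) (pair_subset hx hy)]

lemma ThreeConnected.rk_singleton [M.RankFinite] (h : ThreeConnected M) (h4 : 4 ≤ M.E.encard)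
    (hx : x ∈ M.E) : rk M {x} = 1 := by
  obtain ⟨y, hy, hyx⟩ := (diff_pair_nontrivial h4 x x).nonempty
  have hpair := h.two_le_rk h4 (pair_subset hx hy) (nontrivial_pair (by rintro rfl; simp at hyx))
  rw [pair_comm] at hpair
  linarith [rk_insert_le M y {x}, rk_singleton_le M x]

lemma ThreeConnected.rk_diff_singleton [M.RankFinite] (h : ThreeConnected M)
    (h4 : 4 ≤ M.E.encard) (hx : x ∈ M.E) : rk M (M.E \ {x}) = rk M M.E := by
  have hne : (M.E \ {x}).Nonempty := (pair_eq_singleton x ▸ diff_pair_nontrivial h4 x x).nonempty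
  have hsep := mConnected_iff.mp h.1 {x} (singleton_subset_iff.mpr hx) (singleton_nonempty x) hne
  linarith [rk_singleton_le M x, rk_le_rk_ground M (M.E \ {x})]

lemma ThreeConnected.rankFinite (h : ThreeConnected M) (h4 : 4 ≤ M.E.encard) : M.RankFinite := by
  refine (eRank_ne_top_iff M).mp fun htop ↦ ?_
  have htwo : (2 : ℕ∞) ≤ M.E.encard := le_trans (by norm_num) h4
  obtain ⟨T, hT, hT2⟩ := exists_subset_encard_eq htwo
  obtain ⟨x, y, -, rfl⟩ := encard_eq_two.mp hT2
  refine h.2 ⟨{x, y}, M.E \ {x, y}, union_sdiff_cancel hT, disjoint_sdiff_right, hT2.ge,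
    two_le_encard_iff_nontrivial.mpr (diff_pair_nontrivial h4 x y), ?_⟩
  rw [eRank_eq_eRank, htop, top_add]
  exact le_top

lemma rk_dual_add_rk_dual_diff [M.Finite] (hX : X ⊆ M.E) :
    rk M✶ X + rk M✶ (M.E \ X) - rk M✶ M.E = rk M X + rk M (M.E \ X) - rk M M.E := by
  have h₁ := rk_dual_add_rk_ground M hX
  have h₂ := rk_dual_add_rk_ground M (X := M.E \ X) sdiff_subset
  have h₃ := rk_dual_add_rk_ground M Subset.rfl
  have hcard := ncard_sdiff_add_ncard_of_subset hX M.ground_finite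
  rw [sdiff_sdiff_cancel_left hX] at h₂
  rw [sdiff_self, rk_empty] at h₃
  push_cast [← hcard] at h₃
  linarith

lemma MConnected.dual [M.Finite] (h : MConnected M) : MConnected M✶ := by
  rw [mConnected_iff] at h ⊢
  intro X hX hne hne'
  rw [dual_ground] at hX hne' ⊢
  linarith [h X hX hne hne', rk_dual_add_rk_dual_diff hX]

lemma ThreeConnected.dual [M.Finite] (h : ThreeConnected M) : ThreeConnected M✶ := by
  rw [threeConnected_iff] at h ⊢
  refine ⟨h.1.dual, fun X hX hnt hnt' ↦ ?_⟩
  rw [dual_ground] at hX hnt' ⊢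
  linarith [h.2 X hX hnt hnt', rk_dual_add_rk_dual_diff hX]

end ThreeConnected

section Uniform

variable {α : Type u} {M : Matroid α} {k n : ℕ}

lemma isUnif_iff_indep :
    IsUnif k n M ↔ M.E.encard = n ∧ ∀ I ⊆ M.E, M.Indep I ↔ I.encard ≤ k := by
  have le_iff (I : Set α) : I.encard ≤ k ↔ ∀ C ⊆ I, C.encard ≠ k + 1 := by
    rw [← not_iff_not, not_le, ← ENat.add_one_le_iff (ENat.natCast_ne_top k)]
    push Not
    refine ⟨fun h ↦ exists_subset_encard_eq h, fun ⟨C, hCI, hC⟩ ↦ hC ▸ encard_le_encard hCI⟩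
  refine and_congr_right fun _ ↦ ⟨fun h I hI ↦ ?_, fun h C ↦ ?_⟩
  · rw [indep_iff_forall_subset_not_isCircuit hI, le_iff]
    exact forall₂_congr fun C hC ↦ not_congr ((h C).trans (and_iff_right (hC.trans hI)))
  · have dep_iff (D : Set α) : M.Dep D ↔ D ⊆ M.E ∧ k + 1 ≤ D.encard := by
      rw [Dep, and_comm, ENat.add_one_le_iff (ENat.natCast_ne_top k), ← not_le]
      exact and_congr_right fun hD ↦ not_congr (h D hD)
    rw [Circuit, minimal_iff]
    constructor
    · rintro ⟨hC, hmin⟩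
      obtain ⟨hCE, hle⟩ := (dep_iff C).mp hC
      obtain ⟨D, hDC, hD⟩ := exists_subset_encard_eq hle
      obtain rfl := hmin ((dep_iff D).mpr ⟨hDC.trans hCE, hD.ge⟩) hDC
      exact ⟨hCE, hD⟩
    · rintro ⟨hCE, hcard⟩
      refine ⟨(dep_iff C).mpr ⟨hCE, hcard.ge⟩, fun D hD hDC ↦ ?_⟩
      have hfin : C.Finite := finite_of_encard_le_coe (k := k + 1) (by exact_mod_cast hcard.le)
      exact ((hfin.subset hDC).eq_of_subset_of_encard_le hDC (hcard ▸ ((dep_iff D).mp hD).2)).symm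

lemma isUnif_iff_isBase (hkn : k ≤ n) :
    IsUnif k n M ↔ M.E.encard = n ∧ ∀ B ⊆ M.E, M.IsBase B ↔ B.encard = k := by
  rw [isUnif_iff_indep]
  refine and_congr_right fun hn ↦ ?_
  have exists_superset {I : Set α} (hI : I ⊆ M.E) (hIk : I.encard ≤ k) :
      ∃ B, I ⊆ B ∧ B ⊆ M.E ∧ B.encard = k :=
    exists_superset_subset_encard_eq hI hIk (hn ▸ Nat.cast_le.mpr hkn)
  constructor
  · intro h B hB
    have base_of_encard {B : Set α} (hB : B ⊆ M.E) (hBk : B.encard = k) : M.IsBase B := by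
      refine isBase_iff_maximal_indep.mpr ⟨(h B hB).mpr hBk.le, fun J hJ hBJ ↦ ?_⟩
      have hJk := (h J hJ.subset_ground).mp hJ
      have hfin := finite_of_encard_le_coe hJk
      exact ((hfin.subset hBJ).eq_of_subset_of_encard_le hBJ (hBk ▸ hJk)).superset
    refine ⟨fun hbase ↦ ?_, base_of_encard hB⟩
    obtain ⟨B', -, hB', hBk'⟩ := exists_superset (empty_subset M.E) (by simp)
    rw [hbase.encard_eq_encard_of_isBase (base_of_encard hB' hBk'), hBk']
  · refine fun h I hI ↦ ⟨fun hind ↦ ?_, fun hIk ↦ ?_⟩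
    · obtain ⟨B, hB, hIB⟩ := hind.exists_isBase_superset
      exact (encard_le_encard hIB).trans_eq ((h B hB.subset_ground).mp hB)
    · obtain ⟨B, hIB, hB, hBk⟩ := exists_superset hI hIk
      exact ((h B hB).mpr hBk).indep.subset hIB

lemma IsUnif.dual (hkn : k ≤ n) (h : IsUnif k n M) : IsUnif (n - k) n M✶ := by
  rw [isUnif_iff_isBase hkn] at h
  refine (isUnif_iff_isBase (Nat.sub_le n k)).mpr ⟨h.1, fun B hB ↦ ?_⟩
  rw [dual_ground] at hB
  have hfin : M.E.Finite := finite_of_encard_le_coe h.1.le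
  have hcard := ncard_sdiff_add_ncard_of_subset hB hfin
  have hE : M.E.ncard = n := by rw [ncard, h.1, ENat.toNat_natCast]
  rw [dual_isBase_iff hB, h.2 _ sdiff_subset, ← (hfin.subset hB).cast_ncard_eq,
    ← (hfin.subset sdiff_subset).cast_ncard_eq, Nat.cast_inj, Nat.cast_inj]
  omega

lemma HasU24Minor.dual (h : HasU24Minor M) : HasU24Minor M✶ := by
  obtain ⟨_, ⟨C, D, rfl⟩, hK⟩ := h
  refine ⟨_, ⟨D \ C, C, ?_⟩, hK.dual (by norm_num)⟩
  exact (dual_contract_delete M C D).trans (delete_contract_comm' M✶ C D)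

lemma HasU24Minor.four_le_encard (h : HasU24Minor M) : 4 ≤ M.E.encard := by
  obtain ⟨K, hKM, hK⟩ := h
  have hle : K.E ⊆ M.E := Matroid.IsMinor.subset hKM
  exact hK.1.symm.le.trans (encard_le_encard hle)

end Uniform

section FourPointLine

variable {α : Type u} {M : Matroid α} {C L L' R X Y Z : Set α} {v v' : Fin 4 → α} {i j : Fin 4}

/-- Four points `v i`, any two of which span `M` together with a set `L` of corank at least two:
a `U_{2,4}`-restriction of `M ／ L`, spanning it and described inside `M`. -/
structure FourPointLine (M : Matroid α) (L : Set α) (v : Fin 4 → α) : Prop where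
  subset_ground : L ⊆ M.E
  mem_ground : ∀ i, v i ∈ M.E
  rk_add_two_le : rk M L + 2 ≤ rk M M.E
  spanning : ∀ ⦃i j⦄, i ≠ j → M.Spanning (L ∪ {v i, v j})

namespace FourPointLine

lemma congr_closure (h : FourPointLine M L v) (hL' : L' ⊆ M.E)
    (hcl : M.closure L' = M.closure L) (hv' : ∀ i, v' i ∈ M.E)
    (hv : ∀ i, v i ∈ M.closure (insert (v' i) L')) : FourPointLine M L' v' where
  subset_ground := hL'
  mem_ground := hv'
  rk_add_two_le := rk_congr_closure hcl ▸ h.rk_add_two_le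
  spanning i j hij := by
    have hE : L' ∪ {v' i, v' j} ⊆ M.E := union_subset hL' (pair_subset (hv' i) (hv' j))
    rw [← closure_spanning_iff hE]
    refine (h.spanning hij).superset (union_subset ?_ (pair_subset ?_ ?_))
      (M.closure_subset_ground _)
    · exact (M.subset_closure L h.subset_ground).trans
        (hcl ▸ M.closure_subset_closure subset_union_left)
    · exact M.closure_subset_closure (insert_subset (by simp) subset_union_left) (hv i)
    · exact M.closure_subset_closure (insert_subset (by simp) subset_union_left) (hv j)

variable [M.RankFinite]

lemma rk_ground (h : FourPointLine M L v) : rk M M.E = rk M L + 2 := by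
  have hspan := (spanning_iff_rk_ground_le (h.spanning (Fin.zero_ne_one)).subset_ground).mp
    (h.spanning Fin.zero_ne_one)
  rw [union_insert, union_singleton] at hspan
  linarith [h.rk_add_two_le, rk_insert_le M (v 0) (insert (v 1) L), rk_insert_le M (v 1) L]

lemma notMem_closure_insert (h : FourPointLine M L v) (hij : i ≠ j) :
    v j ∉ M.closure (insert (v i) L) := by
  intro hmem
  have hspan := (spanning_iff_rk_ground_le (h.spanning hij).subset_ground).mp (h.spanning hij)
  rw [union_insert, union_singleton, insert_comm, rk_insert_of_mem_closure hmem] at hspan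
  linarith [h.rk_ground, rk_insert_le M (v i) L]

lemma eq_of_mem (h : FourPointLine M L v) (hX : rk M (L ∪ X) < rk M M.E) (hi : v i ∈ X)
    (hj : v j ∈ X) : i = j := by
  by_contra hij
  have hspan := (spanning_iff_rk_ground_le (h.spanning hij).subset_ground).mp (h.spanning hij)
  linarith [rk_mono (M := M) (union_subset_union_right L (pair_subset hi hj))]

lemma exists_notMem_union (h : FourPointLine M L v) (hX : rk M (L ∪ X) < rk M M.E)
    (hY : rk M (L ∪ Y) < rk M M.E) (hZ : rk M (L ∪ Z) < rk M M.E) : ∃ i, v i ∉ X ∪ Y ∪ Z := by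
  by_contra! hcov
  have hmem (i : Fin 4) : ∃ k : Fin 3, v i ∈ ![X, Y, Z] k := by
    rcases hcov i with (hi | hi) | hi
    exacts [⟨0, hi⟩, ⟨1, hi⟩, ⟨2, hi⟩]
  have hlt (k : Fin 3) : rk M (L ∪ ![X, Y, Z] k) < rk M M.E := by
    fin_cases k
    exacts [hX, hY, hZ]
  choose c hc using hmem
  obtain ⟨i, j, hij, hcij⟩ := Fintype.exists_ne_map_eq_of_card_lt c (by simp)
  exact hij (h.eq_of_mem (hlt _) (hc i) (hcij ▸ hc j))

lemma injective (h : FourPointLine M L v) : Function.Injective v := by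
  intro i j hij
  by_contra hne
  refine h.notMem_closure_insert hne (M.mem_closure_of_mem' ?_ (h.mem_ground j))
  exact hij ▸ mem_insert _ _

lemma notMem_closure (h : FourPointLine M L v) (i : Fin 4) : v i ∉ M.closure L := by
  obtain ⟨j, hj⟩ := exists_ne i
  exact fun hmem ↦ h.notMem_closure_insert hj (M.closure_subset_closure (subset_insert _ _) hmem)

lemma notMem (h : FourPointLine M L v) (i : Fin 4) : v i ∉ L := fun hmem ↦
  h.notMem_closure i (M.mem_closure_of_mem hmem h.subset_ground)

lemma restrict (h : FourPointLine M L v) (hR : R ⊆ M.E) (hLR : L ⊆ R) (hv : ∀ i, v i ∈ R) :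
    FourPointLine (M ↾ R) L v where
  subset_ground := hLR
  mem_ground := hv
  rk_add_two_le := by
    have hpair : L ∪ {v 0, v 1} ⊆ R := union_subset hLR (pair_subset (hv 0) (hv 1))
    have hspan : M.Spanning R := (h.spanning Fin.zero_ne_one).superset hpair hR
    rw [restrict_ground_eq, rk_restrict M hLR, rk_restrict M Subset.rfl]
    exact h.rk_add_two_le.trans ((spanning_iff_rk_ground_le hR).mp hspan)
  spanning i j hij := by
    have hpair : L ∪ {v i, v j} ⊆ R := union_subset hLR (pair_subset (hv i) (hv j))
    rw [restrict_spanning_iff hpair hR, (h.spanning hij).closure_eq]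
    exact hR

lemma contract (h : FourPointLine M L v) (hC : C ⊆ L) : FourPointLine (M ／ C) (L \ C) v where
  subset_ground := sdiff_subset_sdiff_left h.subset_ground
  mem_ground i := ⟨h.mem_ground i, fun hmem ↦ h.notMem i (hC hmem)⟩
  rk_add_two_le := by
    rw [contract_ground, rk_contract, rk_contract, sdiff_union_of_subset hC,
      sdiff_union_of_subset (hC.trans h.subset_ground)]
    linarith [h.rk_add_two_le]
  spanning i j hij := by
    rw [contract_spanning_iff (hC.trans h.subset_ground), union_right_comm,
      sdiff_union_of_subset hC]
    refine ⟨h.spanning hij, disjoint_union_left.mpr ⟨disjoint_sdiff_left, ?_⟩⟩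
    rw [disjoint_insert_left, disjoint_singleton_left]
    exact ⟨fun hmem ↦ h.notMem i (hC hmem), fun hmem ↦ h.notMem j (hC hmem)⟩

lemma isBase_pair (h : FourPointLine M L v) (hij : i ≠ j) :
    ((M ／ L) ↾ range v).IsBase {v i, v j} := by
  have hsub : range v ⊆ (M ／ L).E := range_subset_iff.mpr fun i ↦ ⟨h.mem_ground i, h.notMem i⟩
  have hpair : {v i, v j} ⊆ range v := pair_subset (mem_range_self i) (mem_range_self j)
  have hdj : Disjoint {v i, v j} L := (subset_sdiff.mp (hpair.trans hsub)).2
  have hspan : (M ／ L).Spanning {v i, v j} := by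
    rw [contract_spanning_iff h.subset_ground, union_comm]
    exact ⟨h.spanning hij, hdj⟩
  have hind : (M ／ L).Indep {v j, v i} := by
    have hi : (M ／ L).IsNonloop (v i) :=
      contract_isNonloop_iff.mpr ⟨h.mem_ground i, h.notMem_closure i⟩
    rw [hi.indep.insert_indep_iff_of_notMem (h.injective.ne hij.symm), contract_closure_eq,
      singleton_union]
    exact ⟨⟨h.mem_ground j, h.notMem j⟩, fun hmem ↦ h.notMem_closure_insert hij hmem.1⟩
  rw [isBase_restrict_iff hsub, isBasis_iff_indep_closure, hspan.closure_eq]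
  exact ⟨pair_comm (v i) (v j) ▸ hind, hsub, hpair⟩

lemma isUnif (h : FourPointLine M L v) : IsUnif 2 4 ((M ／ L) ↾ range v) := by
  refine (isUnif_iff_isBase (by norm_num)).mpr ⟨?_, fun B hB ↦ ⟨fun hbase ↦ ?_, fun hcard ↦ ?_⟩⟩
  · rw [restrict_ground_eq, ← image_univ, h.injective.encard_image, encard_univ]
    simp
  · rw [hbase.encard_eq_encard_of_isBase (h.isBase_pair Fin.zero_ne_one),
      encard_pair (h.injective.ne Fin.zero_ne_one), Nat.cast_ofNat]
  · obtain ⟨x, y, hxy, rfl⟩ := encard_eq_two.mp hcard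
    obtain ⟨i, rfl⟩ := hB (mem_insert x _)
    obtain ⟨j, rfl⟩ := hB (mem_insert_of_mem _ (mem_singleton y))
    exact h.isBase_pair (ne_of_apply_ne v hxy)

lemma hasU24Minor (h : FourPointLine M L v) : HasU24Minor M := by
  refine ⟨_, ⟨L, (M ／ L).E \ range v, ?_⟩, h.isUnif⟩
  have hsub : range v ⊆ (M ／ L).E := range_subset_iff.mpr fun i ↦ ⟨h.mem_ground i, h.notMem i⟩
  change (M ／ L) ↾ range v = (M ／ L) ↾ ((M ／ L).E \ ((M ／ L).E \ range v))
  rw [sdiff_sdiff_cancel_left hsub]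

end FourPointLine

lemma exists_fin_four_range_eq (h : X.encard = 4) :
    ∃ v : Fin 4 → α, Function.Injective v ∧ range v = X := by
  have : Finite X := finite_of_encard_le_coe (k := 4) h.le
  let e : Fin 4 ≃ X := (Finite.equivFinOfCardEq (by rw [Nat.card_coe_set_eq, ncard, h]; rfl)).symm
  exact ⟨fun i ↦ e i, Subtype.val_injective.comp e.injective, by
    rw [range_comp', e.range_eq_univ, image_univ, Subtype.range_val]⟩

lemma HasU24Minor.exists_fourPointLine [M.RankFinite] (h : HasU24Minor M) :
    ∃ L v, M.Indep L ∧ FourPointLine M L v := by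
  obtain ⟨_, ⟨C, D, rfl⟩, hK⟩ := h
  change IsUnif 2 4 (M ／ C ＼ D) at hK
  rw [isUnif_iff_isBase (by norm_num)] at hK
  obtain ⟨v, hv, hrange⟩ := exists_fin_four_range_eq hK.1
  have hvK (i) : v i ∈ (M ／ C ＼ D).E := hrange ▸ mem_range_self i
  have hvE (i) : v i ∈ M.E := (hvK i).1.1
  have hbase {i j} (hij : i ≠ j) : (M ／ C ＼ D).IsBase {v i, v j} :=
    (hK.2 _ (pair_subset (hvK i) (hvK j))).mpr (encard_pair (hv.ne hij))
  obtain ⟨J, hJ⟩ := M.exists_isBasis' C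
  have hind : (M ／ C).Indep {v 0, v 1} := (hbase Fin.zero_ne_one).indep.of_delete
  obtain ⟨hJind, hdj⟩ := hJ.contract_indep_iff.mp hind
  obtain ⟨B, hB, hJB⟩ := hJind.exists_isBase_superset
  obtain ⟨hpairB, hJB⟩ := union_subset_iff.mp hJB
  have hJL : J ⊆ B \ {v 0, v 1} := subset_sdiff.mpr ⟨hJB, hdj.mono_left hJ.subset⟩
  refine ⟨B \ {v 0, v 1}, v, hB.indep.sdiff _, sdiff_subset.trans hB.subset_ground, hvE, ?_, ?_⟩
  · have hBE : rk M B = rk M M.E := rk_congr_closure (hB.closure_eq.trans M.closure_ground.symm)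
    have hcard := ncard_sdiff_add_ncard_of_subset hpairB hB.finite
    rw [ncard_pair (hv.ne Fin.zero_ne_one)] at hcard
    rw [rk_of_indep (hB.indep.sdiff _), ← hBE, rk_of_indep hB.indep, ← hcard, Nat.cast_add,
      Nat.cast_ofNat]
  · intro i j hij
    have hE : B \ {v 0, v 1} ∪ {v i, v j} ⊆ M.E :=
      union_subset (sdiff_subset.trans hB.subset_ground) (pair_subset (hvE i) (hvE j))
    have hmem (k) : v k ∈ M.closure (B \ {v 0, v 1} ∪ {v i, v j}) := by
      have hk : v k ∈ (M ／ C ＼ D).closure {v i, v j} := (hbase hij).closure_eq ▸ hvK k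
      rw [delete_closure_eq, contract_closure_eq] at hk
      have hk' := M.closure_subset_closure (union_subset_union_left C sdiff_subset) hk.1.1
      rw [← closure_union_closure_right_eq, ← hJ.closure_eq_closure,
        closure_union_closure_right_eq, union_comm] at hk'
      exact M.closure_subset_closure (union_subset_union_left _ hJL) hk'
    rw [← closure_spanning_iff hE]
    refine hB.spanning.superset ?_ (M.closure_subset_ground _)
    exact (sdiff_union_of_subset hpairB).superset.trans <| union_subset
      (M.subset_closure_of_subset subset_union_left hE) (pair_subset (hmem 0) (hmem 1))

end FourPointLine

section VerticalSep

variable {α : Type u} {M : Matroid α} {L P P' Q W X Z : Set α} {v : Fin 4 → α} {i j : Fin 4}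
  {e q x : α}

/-- A vertical 3-separation `(P \ {e}, Q \ {e})` of `M` with `e` in the closure of both parts,
encoded by the two sides `P` and `Q`, both of which contain `e`. Such separations at `e` are what
keeps the simplification of `M ／ {e}` from being 3-connected. -/
structure VerticalSep (M : Matroid α) (e : α) (P Q : Set α) : Prop where
  union_eq : P ∪ Q = M.E
  inter_eq : P ∩ Q = {e}
  three_le_rk_left : 3 ≤ rk M P
  three_le_rk_right : 3 ≤ rk M Q
  rk_add_le : rk M P + rk M Q ≤ rk M M.E + 2

namespace VerticalSep

lemma symm (h : VerticalSep M e P Q) : VerticalSep M e Q P where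
  union_eq := union_comm P Q ▸ h.union_eq
  inter_eq := inter_comm P Q ▸ h.inter_eq
  three_le_rk_left := h.three_le_rk_right
  three_le_rk_right := h.three_le_rk_left
  rk_add_le := add_comm (rk M P) _ ▸ h.rk_add_le

lemma mem_left (h : VerticalSep M e P Q) : e ∈ P :=
  (h.inter_eq.superset (mem_singleton e)).1

lemma mem_right (h : VerticalSep M e P Q) : e ∈ Q := h.symm.mem_left

lemma eq_of_mem (h : VerticalSep M e P Q) (hP : x ∈ P) (hQ : x ∈ Q) : x = e :=
  h.inter_eq.subset ⟨hP, hQ⟩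

lemma mem_or_mem (h : VerticalSep M e P Q) (hx : x ∈ M.E) : x ∈ P ∨ x ∈ Q :=
  h.union_eq.superset hx

lemma left_subset_ground (h : VerticalSep M e P Q) : P ⊆ M.E := h.union_eq ▸ subset_union_left

lemma right_subset_ground (h : VerticalSep M e P Q) : Q ⊆ M.E := h.symm.left_subset_ground

lemma ground_diff_right (h : VerticalSep M e P Q) : M.E \ Q = P \ {e} := by
  rw [← h.union_eq, union_sdiff_right, ← h.inter_eq, sdiff_self_inter]

lemma inter_union_inter (h : VerticalSep M e P Q) (hX : X ⊆ M.E) : X ∩ P ∪ X ∩ Q = X := by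
  rw [← inter_union_distrib_left, h.union_eq, inter_eq_left.mpr hX]

variable [M.RankFinite]

lemma left_diff_nontrivial (h : VerticalSep M e P Q) : (P \ {e}).Nontrivial :=
  nontrivial_of_two_le_rk (M := M)
    (by linarith [rk_le_rk_diff_singleton_add_one M P e, h.three_le_rk_left])

lemma four_le_encard (h : VerticalSep M e P Q) : 4 ≤ M.E.encard := by
  have hP := two_le_encard_iff_nontrivial.mpr h.left_diff_nontrivial
  have hQ := two_le_encard_iff_nontrivial.mpr h.symm.left_diff_nontrivial
  rw [← encard_sdiff_add_encard_of_subset h.right_subset_ground, h.ground_diff_right]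
  exact (add_le_add hP (hQ.trans (encard_le_encard sdiff_subset))).trans' (by norm_num)

lemma rk_guts (h : VerticalSep M e P Q) (h3 : ThreeConnected M) : rk M {e} = 1 :=
  h3.rk_singleton h.four_le_encard (h.left_subset_ground h.mem_left)

lemma rk_ground_add_two_le (h : VerticalSep M e P Q) (h3 : ThreeConnected M) :
    rk M M.E + 2 ≤ rk M (P \ {e}) + rk M Q := by
  refine h3.rk_add_two_le ?_ h.right_subset_ground ?_ ?_
  · rw [← h.ground_diff_right, sdiff_union_self]
    exact subset_union_left
  · exact nontrivial_of_two_le_rk (M := M) (by linarith [h.three_le_rk_right])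
  · exact h.ground_diff_right ▸ h.left_diff_nontrivial

lemma rk_add_rk (h : VerticalSep M e P Q) (h3 : ThreeConnected M) :
    rk M P + rk M Q = rk M M.E + 2 := by
  linarith [h.rk_add_le, h.rk_ground_add_two_le h3, rk_mono (M := M) (sdiff_subset : P \ {e} ⊆ P)]

lemma rk_left_diff_singleton (h : VerticalSep M e P Q) (h3 : ThreeConnected M) :
    rk M (P \ {e}) = rk M P := by
  linarith [h.rk_add_le, h.rk_ground_add_two_le h3, rk_mono (M := M) (sdiff_subset : P \ {e} ⊆ P)]

lemma rk_union_lt_or (h : VerticalSep M e P Q) (h3 : ThreeConnected M)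
    (hL : FourPointLine M L v) (he : e ∈ L) :
    rk M (L ∪ P) < rk M M.E ∨ rk M (L ∪ Q) < rk M M.E := by
  have hcov : L ⊆ L ∩ P ∪ L ∩ Q := (h.inter_union_inter hL.subset_ground).superset
  have hpoint : {e} ⊆ L ∩ P ∩ (L ∩ Q) :=
    singleton_subset_iff.mpr ⟨⟨he, h.mem_left⟩, he, h.mem_right⟩
  by_contra! hcon
  linarith [hcon.1, hcon.2, rk_inter_add_rk_union_le M L P, rk_inter_add_rk_union_le M L Q,
    rk_add_rk_le (M := M) hpoint hcov, h.rk_guts h3, h.rk_add_le, hL.rk_ground]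

end VerticalSep

/-- `P` has rank at most one in some `M ／ L` witnessing, by a four-point line, that `M ／ {e}` has a
`U_{2,4}`-minor. -/
def IsSmallSide (M : Matroid α) (e : α) (P : Set α) : Prop :=
  ∃ L v, FourPointLine M L v ∧ e ∈ L ∧ rk M (L ∪ P) < rk M M.E

lemma IsSmallSide.subset [M.RankFinite] (h : IsSmallSide M e P) (hP : P' ⊆ P) :
    IsSmallSide M e P' := by
  obtain ⟨L, v, hL, he, hlt⟩ := h
  exact ⟨L, v, hL, he, (rk_mono (union_subset_union_right L hP)).trans_lt hlt⟩

lemma VerticalSep.isSmallSide_or [M.RankFinite] (h : VerticalSep M e P Q) (h3 : ThreeConnected M)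
    (hL : FourPointLine M L v) (he : e ∈ L) : IsSmallSide M e P ∨ IsSmallSide M e Q :=
  (h.rk_union_lt_or h3 hL he).imp (⟨L, v, hL, he, ·⟩) (⟨L, v, hL, he, ·⟩)

/-- A part `W` of the side `P` that spans `M` together with `Q` although its rank is smaller than
that of `P`. If `(P, Q)` is a vertical separation at `e`, then `W` and `Q` meet only in `e` up to
closure. -/
structure GutsComplement (M : Matroid α) (e : α) (P Q W : Set α) : Prop where
  mem : e ∈ W
  subset : W ⊆ P
  rk_ground_le : rk M M.E ≤ rk M (W ∪ Q)
  rk_lt : rk M W < rk M P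

namespace VerticalSep

variable [M.RankFinite]

lemma exists_gutsComplement (h : VerticalSep M e P Q) (h3 : ThreeConnected M)
    (hx : x ∈ P) (hxQ : x ∉ M.closure Q) : ∃ W, GutsComplement M e P Q W ∧ x ∈ W := by
  obtain ⟨I, hI⟩ := M.exists_isBasis Q h.right_subset_ground
  have hxI : M.Indep (insert x I) := by
    rw [hI.indep.insert_indep_iff, hI.closure_eq_closure]
    exact Or.inl ⟨h.left_subset_ground hx, hxQ⟩
  obtain ⟨B, hB, hIB⟩ := hxI.exists_isBase_superset
  have hBQ : B ∩ Q = I := by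
    refine (hI.eq_of_subset_indep (hB.indep.inter_right Q) ?_ inter_subset_right).symm
    exact subset_inter ((subset_insert _ _).trans hIB) hI.subset
  have hrk : rk M (B \ Q) + rk M Q = rk M M.E := by
    have hcard := ncard_inter_add_ncard_sdiff_eq_ncard B Q hB.finite
    rw [hBQ, add_comm] at hcard
    rw [rk_of_indep (hB.indep.sdiff Q), ← rk_congr_closure hI.closure_eq_closure,
      rk_of_indep hI.indep, ← rk_congr_closure (hB.closure_eq.trans M.closure_ground.symm),
      rk_of_indep hB.indep]
    exact_mod_cast hcard
  have hBP : B \ Q ⊆ P := fun z hz ↦ (h.mem_or_mem (hB.subset_ground hz.1)).resolve_right hz.2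
  have hWE : insert e (B \ Q) ∪ Q ⊆ M.E := union_subset (insert_subset
    (h.left_subset_ground h.mem_left) (hBP.trans h.left_subset_ground)) h.right_subset_ground
  have hspan : M.Spanning (insert e (B \ Q) ∪ Q) := by
    refine hB.spanning.superset ?_ hWE
    rw [insert_union, sdiff_union_self]
    exact subset_union_left.trans (subset_insert _ _)
  refine ⟨insert e (B \ Q), ⟨mem_insert _ _, insert_subset h.mem_left hBP,
    (spanning_iff_rk_ground_le hWE).mp hspan, ?_⟩, Or.inr ⟨hIB (mem_insert _ _), fun hmem ↦ ?_⟩⟩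
  · linarith [rk_insert_le M e (B \ Q), h.rk_add_rk h3]
  · exact hxQ (M.mem_closure_of_mem hmem h.right_subset_ground)

lemma inter_gutsComplement (h : VerticalSep M e P Q) (hL : FourPointLine M L v)
    (he : e ∈ L) (hlt : rk M (L ∪ P) < rk M M.E) (hx : x ∈ P) (hxL : x ∉ M.closure L) :
    GutsComplement M e P Q (L ∩ P) where
  mem := ⟨he, h.mem_left⟩
  subset := inter_subset_right
  rk_ground_le := by
    by_contra! hQ
    have hLQ : L ∪ Q = L ∩ P ∪ Q := by
      rw [inter_union_distrib_right, h.union_eq, inter_eq_left.mpr]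
      exact union_subset hL.subset_ground h.right_subset_ground
    rw [← hLQ] at hQ
    obtain ⟨i, hi⟩ := hL.exists_notMem_union hlt hQ hQ
    exact hi (Or.inl (h.union_eq.superset (hL.mem_ground i)))
  rk_lt := by
    by_contra! hle
    have hcl := closure_eq_closure_of_rk_le inter_subset_right hle
    have hxcl : x ∈ M.closure (L ∩ P) := hcl ▸ M.mem_closure_of_mem hx h.left_subset_ground
    exact hxL (M.closure_subset_closure inter_subset_left hxcl)

end VerticalSep

namespace GutsComplement

variable [M.RankFinite]

lemma rk_union (hW : GutsComplement M e P Q W) (h : VerticalSep M e P Q)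
    (h3 : ThreeConnected M) (he : e ∈ Z) (hZ : Z ⊆ Q) : rk M (Z ∪ W) = rk M Z + rk M P - 2 := by
  have hupper : rk M {e} + rk M (Z ∪ W) ≤ rk M Z + rk M W :=
    rk_add_rk_le (singleton_subset_iff.mpr ⟨he, hW.mem⟩) Subset.rfl
  have hlower : rk M Z + rk M (W ∪ Q) ≤ rk M (Z ∪ W) + rk M Q :=
    rk_add_rk_le (subset_inter subset_union_left hZ)
      (union_subset_union_left Q subset_union_right)
  linarith [h.rk_guts h3, h.rk_add_rk h3, hW.rk_ground_le, hW.rk_lt]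

lemma closure_insert (hW : GutsComplement M e P Q W) (h : VerticalSep M e P Q)
    (h3 : ThreeConnected M) (hq : q ∈ P) (hqW : q ∉ M.closure W) :
    M.closure (insert q W) = M.closure P := by
  refine closure_eq_closure_of_rk_le (insert_subset hq hW.subset) ?_
  have hrk := hW.rk_union h h3 (mem_singleton e) (singleton_subset_iff.mpr h.mem_right)
  rw [singleton_union, insert_eq_of_mem hW.mem, h.rk_guts h3] at hrk
  linarith [rk_insert_of_notMem_closure (h.left_subset_ground hq) hqW]

lemma rk_inter_union_union (hW : GutsComplement M e P Q W) (h : VerticalSep M e P Q)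
    (h3 : ThreeConnected M) (hL : L ⊆ M.E) (hLP : GutsComplement M e P Q (L ∩ P)) (hZ : Z ⊆ Q) :
    rk M (L ∩ Q ∪ W ∪ Z) = rk M (L ∪ Z) := by
  have he : e ∈ L ∩ Q ∪ Z := Or.inl ⟨hLP.mem.1, h.mem_right⟩
  have hsub : L ∩ Q ∪ Z ⊆ Q := union_subset inter_subset_right hZ
  rw [union_right_comm, hW.rk_union h h3 he hsub, ← hLP.rk_union h h3 he hsub, union_right_comm,
    h.symm.inter_union_inter hL]

lemma spanning_of_notMem (hW : GutsComplement M e P Q W) (h : VerticalSep M e P Q)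
    (h3 : ThreeConnected M) (hL : FourPointLine M L v) (hq : q ∈ P) (hqW : q ∉ M.closure W)
    (hij : i ≠ j) (hi : v i ∉ Q) : M.Spanning (L ∩ Q ∪ W ∪ {q, v j}) := by
  have hXE : L ∩ Q ∪ W ∪ {q, v j} ⊆ M.E :=
    union_subset (union_subset (inter_subset_left.trans hL.subset_ground)
      (hW.subset.trans h.left_subset_ground))
      (pair_subset (h.left_subset_ground hq) (hL.mem_ground j))
  have hP : P ⊆ M.closure (L ∩ Q ∪ W ∪ {q, v j}) := by
    refine (M.subset_closure P h.left_subset_ground).trans ?_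
    rw [← hW.closure_insert h h3 hq hqW]
    exact M.closure_subset_closure
      (insert_subset (by simp) (subset_union_right.trans subset_union_left))
  rw [← closure_spanning_iff hXE]
  refine (hL.spanning hij).superset ?_ (M.closure_subset_ground _)
  refine union_subset ((h.inter_union_inter hL.subset_ground).superset.trans ?_)
    (pair_subset (hP ?_) (M.mem_closure_of_mem (by simp) hXE))
  · exact union_subset (inter_subset_right.trans hP)
      (M.subset_closure_of_subset (subset_union_left.trans subset_union_left) hXE)
  · exact (h.mem_or_mem (hL.mem_ground i)).resolve_right hi

open Classical in
lemma fourPointLine (hW : GutsComplement M e P Q W) (h : VerticalSep M e P Q)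
    (h3 : ThreeConnected M) (hL : FourPointLine M L v) (hlt : rk M (L ∪ P) < rk M M.E)
    (hLP : GutsComplement M e P Q (L ∩ P)) (hq : q ∈ P) (hqW : q ∉ M.closure W) :
    FourPointLine M (L ∩ Q ∪ W) fun i ↦ if v i ∈ Q then v i else q where
  subset_ground := union_subset (inter_subset_left.trans hL.subset_ground)
    (hW.subset.trans h.left_subset_ground)
  mem_ground i := by
    split_ifs
    exacts [hL.mem_ground i, h.left_subset_ground hq]
  rk_add_two_le := by
    have hrk := hW.rk_inter_union_union h h3 hL.subset_ground hLP (empty_subset Q)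
    rw [union_empty, union_empty] at hrk
    exact hrk ▸ hL.rk_add_two_le
  spanning i j hij := by
    by_cases hi : v i ∈ Q <;> by_cases hj : v j ∈ Q
    · have hE : L ∩ Q ∪ W ∪ {v i, v j} ⊆ M.E :=
        union_subset (union_subset (inter_subset_left.trans hL.subset_ground)
          (hW.subset.trans h.left_subset_ground)) (pair_subset (hL.mem_ground i) (hL.mem_ground j))
      rw [if_pos hi, if_pos hj, spanning_iff_rk_ground_le hE,
        hW.rk_inter_union_union h h3 hL.subset_ground hLP (pair_subset hi hj)]
      exact (spanning_iff_rk_ground_le (hL.spanning hij).subset_ground).mp (hL.spanning hij)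
    · rw [if_pos hi, if_neg hj, pair_comm]
      exact hW.spanning_of_notMem h h3 hL hq hqW hij.symm hj
    · rw [if_neg hi, if_pos hj]
      exact hW.spanning_of_notMem h h3 hL hq hqW hij hi
    · exact absurd (hL.eq_of_mem hlt ((h.mem_or_mem (hL.mem_ground i)).resolve_right hi)
        ((h.mem_or_mem (hL.mem_ground j)).resolve_right hj)) hij

end GutsComplement

lemma VerticalSep.isSmallSide_of_notMem_closure [M.RankFinite] (h : VerticalSep M e P Q)
    (h3 : ThreeConnected M) (hs : IsSmallSide M e P) (hx : x ∈ P) (hxQ : x ∉ M.closure Q) :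
    IsSmallSide M x P := by
  obtain ⟨L, v, hL, he, hlt⟩ := hs
  by_cases hxL : x ∈ M.closure L
  · have hxE := h.left_subset_ground hx
    refine ⟨insert x L, v, hL.congr_closure (insert_subset hxE hL.subset_ground)
      (closure_insert_eq_of_mem_closure hxL) hL.mem_ground fun i ↦ ?_, mem_insert x L, ?_⟩
    · exact M.mem_closure_of_mem (mem_insert _ _)
        (insert_subset (hL.mem_ground i) (insert_subset hxE hL.subset_ground))
    · rwa [insert_union, insert_eq_of_mem (mem_union_right L hx)]
  · obtain ⟨W, hW, hxW⟩ := h.exists_gutsComplement h3 hx hxQ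
    obtain ⟨q, hq, -, hqW⟩ := exists_notMem_closure_of_rk_lt hW.rk_lt
    have hLP := h.inter_gutsComplement hL he hlt hx hxL
    refine ⟨_, _, hW.fourPointLine h h3 hL hlt hLP hq hqW, Or.inr hxW, ?_⟩
    refine (rk_mono ?_).trans_lt hlt
    exact union_subset (union_subset (inter_subset_left.trans subset_union_left)
      (hW.subset.trans subset_union_right)) subset_union_right

end VerticalSep

section MinimalSep

variable {α : Type u} {M : Matroid α} {A B L P Q U V W : Set α} {v : Fin 4 → α} {e x y : α}

/-- A vertical separation with small side `P`, where `P` has the least rank among all small sides of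
vertical separations of `M`, and contains no other of them. -/
structure MinimalSep (M : Matroid α) (e : α) (P Q : Set α) : Prop where
  verticalSep : VerticalSep M e P Q
  isSmallSide : IsSmallSide M e P
  rk_le : ∀ ⦃e' P' Q'⦄, VerticalSep M e' P' Q' → IsSmallSide M e' P' → rk M P ≤ rk M P'
  not_ssubset : ∀ ⦃e' P' Q'⦄, VerticalSep M e' P' Q' → IsSmallSide M e' P' → ¬ P' ⊂ P

lemma VerticalSep.exists_minimalSep [M.Finite] (h : VerticalSep M e P Q)
    (hs : IsSmallSide M e P) : ∃ e P Q, MinimalSep M e P Q := by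
  let S : Set (Set α) := {P | ∃ e Q, VerticalSep M e P Q ∧ IsSmallSide M e P}
  have hS : S.Finite := M.ground_finite.finite_subsets.subset
    fun P ⟨_, _, h, _⟩ ↦ h.left_subset_ground
  obtain ⟨P, ⟨e, Q, h, hs⟩, hmin⟩ :=
    hS.exists_minimalFor (fun P ↦ toLex (rk M P, P)) S ⟨P, e, Q, h, hs⟩
  have hnlt {P'} (hP' : P' ∈ S) : ¬ toLex (rk M P', P') < toLex (rk M P, P) :=
    fun hlt ↦ hlt.not_ge (hmin hP' hlt.le)
  refine ⟨e, P, Q, h, hs, fun e' P' Q' h' hs' ↦ ?_, fun e' P' Q' h' hs' hlt ↦ ?_⟩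
  · by_contra! hlt
    exact hnlt ⟨e', Q', h', hs'⟩ (Prod.Lex.toLex_lt_toLex.mpr (Or.inl hlt))
  · refine hnlt ⟨e', Q', h', hs'⟩ (Prod.Lex.toLex_lt_toLex.mpr ?_)
    exact (rk_mono hlt.subset).lt_or_eq.imp_right (⟨·, hlt⟩)

lemma VerticalSep.exists_notMem_left (h : VerticalSep M e P Q) (hx : x ≠ e) :
    ∃ P Q, VerticalSep M e P Q ∧ x ∉ P := by
  by_cases hxP : x ∈ P
  · exact ⟨Q, P, h.symm, fun hxQ ↦ hx (h.eq_of_mem hxP hxQ)⟩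
  · exact ⟨P, Q, h, hxP⟩

variable [M.RankFinite]

lemma VerticalSep.uncross (h : VerticalSep M e P Q) (h3 : ThreeConnected M)
    (hAB : VerticalSep M x A B) (hx : x ∈ P) (hPA : 3 ≤ rk M (P ∩ A))
    (hQB : (Q ∩ B).Nontrivial) : VerticalSep M x (P ∩ A) (Q \ {e} ∪ B) where
  union_eq := by
    refine Subset.antisymm (union_subset (inter_subset_left.trans h.left_subset_ground)
      (union_subset (sdiff_subset.trans h.right_subset_ground) hAB.right_subset_ground)) ?_
    intro z hz
    by_cases hzB : z ∈ B
    · exact Or.inr (Or.inr hzB)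
    by_cases hzP : z ∈ P
    · exact Or.inl ⟨hzP, (hAB.mem_or_mem hz).resolve_right hzB⟩
    · exact Or.inr (Or.inl ⟨(h.mem_or_mem hz).resolve_left hzP, fun hze ↦ hzP (hze ▸ h.mem_left)⟩)
  inter_eq := by
    refine Subset.antisymm ?_ (singleton_subset_iff.mpr ⟨⟨hx, hAB.mem_left⟩, Or.inr hAB.mem_right⟩)
    rintro z ⟨⟨hzP, hzA⟩, ⟨hzQ, hze⟩ | hzB⟩
    · exact absurd (h.eq_of_mem hzP hzQ) hze
    · exact hAB.eq_of_mem hzA hzB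
  three_le_rk_left := hPA
  three_le_rk_right := hAB.three_le_rk_right.trans (rk_mono subset_union_right)
  rk_add_le := by
    have hcov : M.E ⊆ P ∪ A ∪ (Q ∩ B) := fun z hz ↦ by
      grind [h.mem_or_mem hz, hAB.mem_or_mem hz]
    have hnt : (M.E \ (Q ∩ B)).Nontrivial := by
      refine h.left_diff_nontrivial.mono ?_
      rw [← h.ground_diff_right]
      exact sdiff_subset_sdiff_right inter_subset_left
    have hsep := h3.rk_add_two_le hcov (inter_subset_left.trans h.right_subset_ground) hQB hnt
    have hunion : rk M (Q \ {e} ∪ B) ≤ rk M (Q ∪ B) :=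
      rk_mono (union_subset_union_left B sdiff_subset)
    linarith [rk_inter_add_rk_union_le M P A, rk_inter_add_rk_union_le M Q B, h.rk_add_le,
      hAB.rk_add_le]

lemma ThreeConnected.rk_union_le_two (h3 : ThreeConnected M) (h4 : 4 ≤ M.E.encard)
    (hU : rk M U ≤ 2) (hV : rk M V ≤ 2) (hUE : U ⊆ M.E) (hUV : (U ∩ V).Nontrivial) :
    rk M (U ∪ V) ≤ 2 := by
  linarith [rk_inter_add_rk_union_le M U V, h3.two_le_rk h4 (inter_subset_left.trans hUE) hUV]

lemma ThreeConnected.rk_union_union_le_two (h3 : ThreeConnected M) (h4 : 4 ≤ M.E.encard)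
    (hU : rk M U ≤ 2) (hV : rk M V ≤ 2) (hW : rk M W ≤ 2) (hUE : U ⊆ M.E) (hVE : V ⊆ M.E)
    (hUV : (U ∩ V).Nontrivial) (hUVW : ((U ∪ V) ∩ W).Nontrivial) : rk M (U ∪ V ∪ W) ≤ 2 :=
  h3.rk_union_le_two h4 (h3.rk_union_le_two h4 hU hV hUE hUV) hW (union_subset hUE hVE) hUVW

namespace MinimalSep

lemma notMem_closure (h : MinimalSep M e P Q) (h3 : ThreeConnected M) (hx : x ∈ P) (hxe : x ≠ e) :
    x ∉ M.closure Q := by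
  intro hcl
  have hv := h.verticalSep
  have hrk : rk M (insert x Q) = rk M Q := rk_insert_of_mem_closure hcl
  have hle : rk M (P \ {x}) ≤ rk M P := rk_mono sdiff_subset
  have hunion : insert x Q ∪ P \ {x} = M.E := by
    rw [insert_union, ← union_insert, insert_sdiff_singleton, insert_eq_of_mem hx, union_comm,
      hv.union_eq]
  have hsep : rk M M.E + 2 ≤ rk M (insert x Q) + rk M (P \ {x}) := by
    refine h3.rk_add_two_le hunion.superset (sdiff_subset.trans hv.left_subset_ground) ?_ ?_
    · exact nontrivial_of_two_le_rk (M := M)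
        (by linarith [hv.three_le_rk_left, rk_le_rk_diff_singleton_add_one M P x])
    · exact hv.symm.left_diff_nontrivial.mono
        (hv.symm.ground_diff_right ▸ sdiff_subset_sdiff_right sdiff_subset)
  have hv' : VerticalSep M e (P \ {x}) (insert x Q) := by
    refine ⟨by rw [union_comm, hunion], ?_, ?_, ?_, ?_⟩
    · rw [inter_insert_of_notMem fun hmem ↦ hmem.2 rfl, sdiff_inter_right_comm, hv.inter_eq,
        sdiff_singleton_eq_self]
      exact hxe
    all_goals linarith [hv.three_le_rk_left, hv.three_le_rk_right, hv.rk_add_le]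
  exact h.not_ssubset hv' (h.isSmallSide.subset sdiff_subset) (sdiff_singleton_ssubset.mpr hx)

lemma isSmallSide_of_mem (h : MinimalSep M e P Q) (h3 : ThreeConnected M) (hx : x ∈ P)
    (hxe : x ≠ e) : IsSmallSide M x P :=
  h.verticalSep.isSmallSide_of_notMem_closure h3 h.isSmallSide hx (h.notMem_closure h3 hx hxe)

lemma not_ssubset_of_mem (h : MinimalSep M e P Q) (h3 : ThreeConnected M) (hx : x ∈ P)
    (hxe : x ≠ e) (hAB : VerticalSep M x A B) : ¬ A ⊂ P := fun hA ↦
  h.not_ssubset hAB ((h.isSmallSide_of_mem h3 hx hxe).subset hA.subset) hA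

lemma rk_inter_le_two (h : MinimalSep M e P Q) (h3 : ThreeConnected M) (hx : x ∈ P) (hxe : x ≠ e)
    (hAB : VerticalSep M x A B) (hPA : ¬ P ⊆ A) (hQB : (Q ∩ B).Nontrivial) :
    rk M (P ∩ A) ≤ 2 := by
  by_contra! hlt
  exact h.not_ssubset_of_mem h3 hx hxe (h.verticalSep.uncross h3 hAB hx hlt hQB)
    ⟨inter_subset_left, fun hsub ↦ hPA (hsub.trans inter_subset_right)⟩

lemma inter_nontrivial (h : MinimalSep M e P Q) (h3 : ThreeConnected M) (hx : x ∈ P)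
    (hxe : x ≠ e) (hAB : VerticalSep M x A B) : (P ∩ A).Nontrivial := by
  by_contra hsub
  have hAQ : A \ {x} ⊆ Q := fun z hz ↦ (h.verticalSep.mem_or_mem
    (hAB.left_subset_ground hz.1)).resolve_left fun hzP ↦
      hz.2 (not_nontrivial_iff.mp hsub ⟨hzP, hz.1⟩ ⟨hx, hAB.mem_left⟩)
  have hcl : M.closure (A \ {x}) = M.closure A :=
    closure_eq_closure_of_rk_le sdiff_subset (hAB.rk_left_diff_singleton h3).ge
  refine h.notMem_closure h3 hx hxe (M.closure_subset_closure hAQ ?_)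
  exact hcl ▸ M.mem_closure_of_mem hAB.mem_left hAB.left_subset_ground

lemma isSmallSide_left (h : MinimalSep M e P Q) (h3 : ThreeConnected M) (hx : x ∈ P)
    (hxe : x ≠ e) (hAB : VerticalSep M x A B) (hA : A ⊆ insert y P) : IsSmallSide M x A := by
  obtain ⟨L, v, hL, hxL, hlt⟩ := h.isSmallSide_of_mem h3 hx hxe
  refine ⟨L, v, hL, hxL, (hAB.rk_union_lt_or h3 hL hxL).resolve_right fun hltB ↦ ?_⟩
  have hlty : rk M (L ∪ {y}) < rk M M.E := by
    rw [union_singleton]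
    linarith [rk_insert_le M y L, hL.rk_ground]
  obtain ⟨i, hi⟩ := hL.exists_notMem_union hlt hltB hlty
  refine hi ((hAB.mem_or_mem (hL.mem_ground i)).elim (fun hiA ↦ ?_) fun hiB ↦ Or.inl (Or.inr hiB))
  exact (hA hiA).elim Or.inr fun hiP ↦ Or.inl (Or.inl hiP)

lemma rk_inter_le_two_of_subset_insert (h : MinimalSep M e P Q) (h3 : ThreeConnected M)
    (hx : x ∈ P) (hxe : x ≠ e) (hAB : VerticalSep M x A B) (hy : y ∈ M.E) (hA : A ⊆ insert y P) :
    rk M (P ∩ B) ≤ 2 := by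
  have hPA : rk M P ≤ rk M A := h.rk_le hAB (h.isSmallSide_left h3 hx hxe hAB hA)
  have hground : M.E \ {y} ⊆ P ∪ B := fun z hz ↦ (hAB.mem_or_mem hz.1).imp_left
    fun hzA ↦ (hA hzA).resolve_left hz.2
  linarith [rk_mono (M := M) hground, rk_inter_add_rk_union_le M P B, hAB.rk_add_le,
    h3.rk_diff_singleton hAB.four_le_encard hy]

lemma rk_inter_le_two_and (h : MinimalSep M e P Q) (h3 : ThreeConnected M) (hx : x ∈ P)
    (hxe : x ≠ e) (hAB : VerticalSep M x A B) (heA : e ∉ A) :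
    rk M (P ∩ A) ≤ 2 ∧ rk M (P ∩ B) ≤ 2 := by
  have hv := h.verticalSep
  have hPA : ¬ P ⊆ A := fun hsub ↦ heA (hsub hv.mem_left)
  obtain ⟨a, ⟨haP, haA⟩, hax⟩ := (h.inter_nontrivial h3 hx hxe hAB).exists_ne x
  have hPB : ¬ P ⊆ B := fun hsub ↦ hax (hAB.eq_of_mem haA (hsub haP))
  have heB : e ∈ B := (hAB.mem_or_mem (hv.left_subset_ground hv.mem_left)).resolve_left heA
  have hQB : (Q ∩ B).Nontrivial := by
    by_contra hsub
    refine h.not_ssubset_of_mem h3 hx hxe hAB.symm ⟨fun z hz ↦ ?_, hPB⟩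
    refine (hv.mem_or_mem (hAB.right_subset_ground hz)).elim id fun hzQ ↦ ?_
    exact not_nontrivial_iff.mp hsub ⟨hzQ, hz⟩ ⟨hv.mem_right, heB⟩ ▸ hv.mem_left
  have hrkA := h.rk_inter_le_two h3 hx hxe hAB hPA hQB
  refine ⟨hrkA, ?_⟩
  by_cases hQA : (Q ∩ A).Nontrivial
  · exact h.rk_inter_le_two h3 hx hxe hAB.symm hPB hQA
  · obtain ⟨y, hyA, hyP⟩ := not_subset.mp
      fun hsub ↦ h.not_ssubset_of_mem h3 hx hxe hAB ⟨hsub, hPA⟩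
    have hyE := hAB.left_subset_ground hyA
    have hyQ := (hv.mem_or_mem hyE).resolve_left hyP
    refine h.rk_inter_le_two_of_subset_insert h3 hx hxe hAB hyE fun z hz ↦ ?_
    exact (hv.mem_or_mem (hAB.left_subset_ground hz)).elim Or.inr fun hzQ ↦
      Or.inl (not_nontrivial_iff.mp hQA ⟨hzQ, hz⟩ ⟨hyQ, hyA⟩)

lemma exists_mem_inter_ne (h : MinimalSep M e P Q) (h3 : ThreeConnected M)
    (hAB : VerticalSep M x A B) (hPA : rk M (P ∩ A) ≤ 2) : ∃ b ∈ P ∩ B, b ≠ x ∧ b ≠ e := by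
  by_contra! hcon
  have hsub : P \ {e} ⊆ P ∩ A := fun z hz ↦ by
    refine ⟨hz.1, (hAB.mem_or_mem (h.verticalSep.left_subset_ground hz.1)).elim id fun hzB ↦ ?_⟩
    by_contra hzA
    exact hz.2 (hcon z ⟨hz.1, hzB⟩ fun hzx ↦ hzA (hzx ▸ hAB.mem_left))
  linarith [rk_mono (M := M) hsub, h.verticalSep.rk_left_diff_singleton h3,
    h.verticalSep.three_le_rk_left]

lemma exists_forall_not_verticalSep (h : MinimalSep M e P Q) (h3 : ThreeConnected M) :
    ∃ x ∈ P, x ≠ e ∧ ∀ A B, ¬ VerticalSep M x A B := by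
  by_contra! hcon
  have hv := h.verticalSep
  have hcover {A B y} (hAB : VerticalSep M y A B) : P ⊆ P ∩ A ∪ P ∩ B :=
    (hAB.inter_union_inter hv.left_subset_ground).superset
  have hPsub (X) : P ∩ X ⊆ M.E := inter_subset_left.trans hv.left_subset_ground
  have hsplit {y} (hy : y ∈ P) (hye : y ≠ e) : ∃ A B, VerticalSep M y A B ∧ e ∉ A :=
    (hcon y hy hye).elim fun _ ⟨_, hAB⟩ ↦ hAB.exists_notMem_left hye.symm
  obtain ⟨x, hxP, hxe⟩ := hv.left_diff_nontrivial.nonempty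
  obtain ⟨A, B, hAB, heA⟩ := hsplit hxP hxe
  obtain ⟨hA, hB⟩ := h.rk_inter_le_two_and h3 hxP hxe hAB heA
  obtain ⟨a, ⟨haP, haA⟩, hax⟩ := (h.inter_nontrivial h3 hxP hxe hAB).exists_ne x
  have hae : a ≠ e := fun hae ↦ heA (hae ▸ haA)
  obtain ⟨A', B', hAB', heA'⟩ := hsplit haP hae
  obtain ⟨hA', hB'⟩ := h.rk_inter_le_two_and h3 haP hae hAB' heA'
  obtain ⟨b, hb, hba, hbe⟩ := h.exists_mem_inter_ne h3 hAB' hA'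
  have he {A B y} (hAB : VerticalSep M y A B) (heA : e ∉ A) : e ∈ P ∩ B :=
    ⟨hv.mem_left, (hcover hAB hv.mem_left).elim (fun he ↦ absurd he.2 heA) And.right⟩
  have hrk : 3 ≤ rk M (P ∩ A ∪ P ∩ B) := hv.three_le_rk_left.trans (rk_mono (hcover hAB))
  rcases hcover hAB hb.1 with hbA | hbB
  · have hline := h3.rk_union_union_le_two hv.four_le_encard hA hB' hB (hPsub A) (hPsub B')
      ⟨a, ⟨⟨haP, haA⟩, haP, hAB'.mem_right⟩, b, ⟨hbA, hb⟩, hba.symm⟩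
      ⟨x, ⟨Or.inl ⟨hxP, hAB.mem_left⟩, hxP, hAB.mem_right⟩, e,
        ⟨Or.inr (he hAB' heA'), he hAB heA⟩, hxe⟩
    linarith [rk_mono (M := M) (union_subset_union_left (P ∩ B)
      (subset_union_left : P ∩ A ⊆ P ∩ A ∪ P ∩ B'))]
  · have hline := h3.rk_union_union_le_two hv.four_le_encard hB hB' hA (hPsub B) (hPsub B')
      ⟨b, ⟨hbB, hb⟩, e, ⟨he hAB heA, he hAB' heA'⟩, hbe⟩
      ⟨x, ⟨Or.inl ⟨hxP, hAB.mem_right⟩, hxP, hAB.mem_left⟩, a,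
        ⟨Or.inr ⟨haP, hAB'.mem_right⟩, haP, haA⟩, hax.symm⟩
    rw [union_comm] at hrk
    linarith [rk_mono (M := M) (union_subset_union_left (P ∩ A)
      (subset_union_left : P ∩ B ⊆ P ∩ B ∪ P ∩ B'))]

end MinimalSep

lemma FourPointLine.exists_forall_not_verticalSep [M.Finite] (hL : FourPointLine M L v)
    (h3 : ThreeConnected M) (hrk : 3 ≤ rk M M.E) :
    ∃ e L v, FourPointLine M L v ∧ e ∈ L ∧ ∀ P Q, ¬ VerticalSep M e P Q := by
  obtain ⟨e, he⟩ : L.Nonempty := by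
    by_contra hemp
    have hground := hL.rk_ground
    rw [not_nonempty_iff_eq_empty.mp hemp, rk_empty] at hground
    linarith
  by_cases hsep : ∀ P Q, ¬ VerticalSep M e P Q
  · exact ⟨e, L, v, hL, he, hsep⟩
  push Not at hsep
  obtain ⟨P, Q, hPQ⟩ := hsep
  obtain ⟨e, P, Q, hmin⟩ : ∃ e P Q, MinimalSep M e P Q :=
    (hPQ.isSmallSide_or h3 hL he).elim hPQ.exists_minimalSep hPQ.symm.exists_minimalSep
  obtain ⟨x, hx, hxe, hsep⟩ := hmin.exists_forall_not_verticalSep h3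
  obtain ⟨L, v, hL, hxL, -⟩ := hmin.isSmallSide_of_mem h3 hx hxe
  exact ⟨x, L, v, hL, hxL, hsep⟩

end MinimalSep

section ParallelTransversal

variable {α : Type u} {M K : Matroid α} {P T X : Set α} {e f g x y : α}

lemma mem_closure_of_mem_closure_singleton (hg : g ∈ X) (hf : f ∈ M.closure {g}) :
    f ∈ M.closure X :=
  M.closure_subset_closure (singleton_subset_iff.mpr hg) hf

/-- A set of representatives of the parallel classes of `K`, so that `K ↾ T` is the simplification
of `K`. -/
structure ParallelTransversal (K : Matroid α) (T : Set α) : Prop where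
  isNonloop : ∀ f ∈ T, K.IsNonloop f
  eq_of_mem_closure : ∀ f ∈ T, ∀ g ∈ T, g ∈ K.closure {f} → f = g
  exists_mem_closure : ∀ f ∈ K.E, ∃ g ∈ T, f ∈ K.closure {g}

namespace ParallelTransversal

lemma subset_ground (h : ParallelTransversal K T) : T ⊆ K.E :=
  fun f hf ↦ (h.isNonloop f hf).mem_ground

lemma closure_inter_closure (h : ParallelTransversal K T) (hX : ∀ f ∈ X, K.IsNonloop f) :
    K.closure (T ∩ K.closure X) = K.closure X := by
  refine subset_antisymm (K.closure_subset_closure_of_subset_closure inter_subset_right)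
    (K.closure_subset_closure_of_subset_closure fun f hf ↦ ?_)
  obtain ⟨g, hgT, hfg⟩ := h.exists_mem_closure f (hX f hf).mem_ground
  have hgf : g ∈ K.closure {f} := (hX f hf).mem_closure_singleton hfg
  exact mem_closure_of_mem_closure_singleton
    ⟨hgT, mem_closure_of_mem_closure_singleton hf hgf⟩ hfg

lemma hasU24Minor_restrict [K.RankFinite] (h : ParallelTransversal K T) (hU : HasU24Minor K) :
    HasU24Minor (K ↾ T) := by
  obtain ⟨L, v, hLind, hL⟩ := hU.exists_fourPointLine
  choose! g hgT hg using h.exists_mem_closure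
  have hline : FourPointLine K (T ∩ K.closure L) (g ∘ v) :=
    hL.congr_closure (inter_subset_left.trans h.subset_ground)
      (h.closure_inter_closure fun f hf ↦ hLind.isNonloop_of_mem hf)
      (fun i ↦ h.subset_ground (hgT _ (hL.mem_ground i)))
      (fun i ↦ mem_closure_of_mem_closure_singleton (mem_insert _ _) (hg _ (hL.mem_ground i)))
  exact (hline.restrict h.subset_ground inter_subset_left
    fun i ↦ hgT _ (hL.mem_ground i)).hasU24Minor

lemma ground_diff_closure_subset (h : ParallelTransversal K T) :
    K.E \ K.closure X ⊆ K.closure (T \ X) := by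
  rintro f ⟨hfE, hfX⟩
  obtain ⟨g, hgT, hfg⟩ := h.exists_mem_closure f hfE
  have hgX : g ∉ X := fun hgX ↦ hfX (mem_closure_of_mem_closure_singleton hgX hfg)
  exact mem_closure_of_mem_closure_singleton ⟨hgT, hgX⟩ hfg

variable [K.RankFinite]

lemma rk_pos (h : ParallelTransversal K T) (hX : X ⊆ T) (hne : X.Nonempty) : 1 ≤ rk K X := by
  obtain ⟨f, hf⟩ := hne
  have hrk := rk_of_indep (h.isNonloop f (hX hf)).indep
  rw [ncard_singleton] at hrk
  exact_mod_cast hrk ▸ rk_mono (singleton_subset_iff.mpr hf)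

lemma two_le_rk (h : ParallelTransversal K T) (hX : X ⊆ T) (hnt : X.Nontrivial) : 2 ≤ rk K X := by
  obtain ⟨f, hf, g, hg, hfg⟩ := hnt
  have hgf : g ∉ K.closure {f} := fun hmem ↦ hfg (h.eq_of_mem_closure f (hX hf) g (hX hg) hmem)
  have hpair := rk_insert_of_notMem_closure (h.isNonloop g (hX hg)).mem_ground hgf
  linarith [rk_mono (M := K) (pair_subset hg hf),
    h.rk_pos (singleton_subset_iff.mpr (hX hf)) (singleton_nonempty f)]

lemma rk_eq_rk_ground (h : ParallelTransversal K T) : rk K T = rk K K.E := by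
  have hsub : K.E ⊆ K.closure T := fun f hf ↦ by
    obtain ⟨g, hgT, hfg⟩ := h.exists_mem_closure f hf
    exact mem_closure_of_mem_closure_singleton hgT hfg
  exact (rk_le_rk_ground K T).antisymm (rk_closure K T ▸ rk_mono hsub)

lemma rk_ground_le_or_rk_add_one_le (h : ParallelTransversal K T) (hK : MConnected K) (hX : X ⊆ T)
    (hne : X.Nonempty) :
    rk K K.E ≤ rk K X ∨ rk K K.E + 1 ≤ rk K X + rk K (K.E \ K.closure X) := by
  obtain hemp | hne' := (K.E \ K.closure X).eq_empty_or_nonempty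
  · exact .inl (rk_closure K X ▸ rk_mono (sdiff_eq_empty.mp hemp))
  · have hcl : X ⊆ K.closure X := K.subset_closure X (hX.trans h.subset_ground)
    exact .inr (rk_closure K X ▸
      mConnected_iff.mp hK _ (K.closure_subset_ground X) (hne.mono hcl) hne')

lemma mConnected_restrict (h : ParallelTransversal K T) (hK : MConnected K) :
    MConnected (K ↾ T) := by
  refine mConnected_iff.mpr fun X hX hne hne' ↦ ?_
  rw [restrict_ground_eq] at hX hne' ⊢
  rw [rk_restrict K Subset.rfl, rk_restrict K hX, rk_restrict K sdiff_subset, h.rk_eq_rk_ground]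
  have hle : rk K (K.E \ K.closure X) ≤ rk K (T \ X) :=
    rk_closure K (T \ X) ▸ rk_mono h.ground_diff_closure_subset
  rcases h.rk_ground_le_or_rk_add_one_le hK hX hne with hspan | hsep
  · linarith [h.rk_pos sdiff_subset hne']
  · linarith

lemma threeConnected_restrict (h : ParallelTransversal K T) (hK : MConnected K)
    (hsep : ∀ P ⊆ K.E, 2 ≤ rk K P → 2 ≤ rk K (K.E \ P) →
      rk K K.E + 2 ≤ rk K P + rk K (K.E \ P)) :
    ThreeConnected (K ↾ T) := by
  refine threeConnected_iff.mpr ⟨h.mConnected_restrict hK, fun X hX hnt hnt' ↦ ?_⟩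
  rw [restrict_ground_eq] at hX hnt' ⊢
  rw [rk_restrict K Subset.rfl, rk_restrict K hX, rk_restrict K sdiff_subset, h.rk_eq_rk_ground]
  have hle : rk K (K.E \ K.closure X) ≤ rk K (T \ X) :=
    rk_closure K (T \ X) ▸ rk_mono h.ground_diff_closure_subset
  have htwo : 2 ≤ rk K (T \ X) := h.two_le_rk sdiff_subset hnt'
  rcases h.rk_ground_le_or_rk_add_one_le hK hX hnt.nonempty with hspan | hone
  · linarith
  by_cases hQ : 2 ≤ rk K (K.E \ K.closure X)
  · have := hsep _ (K.closure_subset_ground X) (rk_closure K X ▸ h.two_le_rk hX hnt) hQ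
    rw [rk_closure] at this
    linarith
  · linarith

end ParallelTransversal

lemma ThreeConnected.mConnected_contract [M.RankFinite] (h3 : ThreeConnected M)
    (h4 : 4 ≤ M.E.encard) (he : e ∈ M.E) : MConnected (M ／ {e}) := by
  refine mConnected_iff.mpr fun X hX hne hne' ↦ ?_
  rw [contract_ground] at hX hne' ⊢
  have hcompl : (M.E \ {e}) \ X ∪ {e} = M.E \ X := by
    rw [sdiff_sdiff_comm, sdiff_union_of_subset]
    exact singleton_subset_iff.mpr ⟨he, fun heX ↦ (hX heX).2 rfl⟩
  rw [rk_contract, rk_contract, rk_contract, hcompl,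
    sdiff_union_of_subset (singleton_subset_iff.mpr he)]
  have hXE : X ⊆ M.E := hX.trans sdiff_subset
  suffices hsep : rk M M.E + 2 ≤ rk M (X ∪ {e}) + rk M (M.E \ X) by
    linarith [rk_singleton_le M e]
  have hY : (M.E \ X).Nontrivial := by
    obtain ⟨y, ⟨hyE, hye⟩, hyX⟩ := hne'
    exact ⟨e, ⟨he, fun heX ↦ (hX heX).2 rfl⟩, y, ⟨hyE, hyX⟩, Ne.symm hye⟩
  by_cases hnt : X.Nontrivial
  · refine h3.rk_add_two_le ?_ sdiff_subset hY ?_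
    · rw [union_right_comm, union_sdiff_cancel hXE]
      exact subset_union_left
    · rwa [sdiff_sdiff_cancel_left hXE]
  · obtain ⟨x, rfl⟩ := (not_nontrivial_iff.mp hnt).eq_empty_or_singleton.resolve_left hne.ne_empty
    rw [singleton_union, add_comm (rk M {x, e})]
    refine h3.rk_add_two_le ?_ (pair_subset (hXE rfl) he)
      (nontrivial_pair (hX rfl).2) (diff_pair_nontrivial h4 x e)
    rw [← singleton_union, ← union_assoc, sdiff_union_of_subset hXE]
    exact subset_union_left

lemma rk_contract_add_two_le_of_forall_not_verticalSep [M.RankFinite] (he : e ∈ M.E)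
    (hrk : rk M {e} = 1) (hsep : ∀ P Q, ¬ VerticalSep M e P Q) (hP : P ⊆ (M ／ {e}).E)
    (h2 : 2 ≤ rk (M ／ {e}) P) (h2' : 2 ≤ rk (M ／ {e}) ((M ／ {e}).E \ P)) :
    rk (M ／ {e}) (M ／ {e}).E + 2 ≤ rk (M ／ {e}) P + rk (M ／ {e}) ((M ／ {e}).E \ P) := by
  rw [contract_ground] at hP h2' ⊢
  rw [rk_contract, hrk] at h2 h2'
  rw [rk_contract, rk_contract, rk_contract, hrk,
    sdiff_union_of_subset (singleton_subset_iff.mpr he)]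
  by_contra! hlt
  refine hsep (P ∪ {e}) ((M.E \ {e}) \ P ∪ {e}) ⟨?_, ?_, by linarith, by linarith, by linarith⟩
  · rw [← union_union_distrib_right, union_sdiff_cancel hP,
      sdiff_union_of_subset (singleton_subset_iff.mpr he)]
  · rw [← inter_union_distrib_right, inter_sdiff_self, empty_union]

lemma ThreeConnected.coindep_pair [M.RankFinite] (h3 : ThreeConnected M)
    (h4 : 4 ≤ M.E.encard) (hx : x ∈ M.E) (hy : y ∈ M.E) : M.Coindep {x, y} := by
  rw [coindep_iff_compl_spanning (pair_subset hx hy), spanning_iff_rk_ground_le sdiff_subset]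
  obtain rfl | hxy := eq_or_ne x y
  · rw [pair_eq_singleton, h3.rk_diff_singleton h4 hx]
  · have hsep := h3.rk_add_two_le (S := M.E \ {x, y}) (T := {x, y})
      (sdiff_union_of_subset (pair_subset hx hy)).superset (pair_subset hx hy)
      (nontrivial_pair hxy) (diff_pair_nontrivial h4 x y)
    linarith [rk_insert_le M x {y}, rk_singleton_le M y]

lemma ThreeConnected.exists_threeConnected_contract [M.Finite] (h3 : ThreeConnected M)
    (hU : HasU24Minor M) (hrk : 3 ≤ rk M M.E) :
    ∃ e ∈ M.E, ∀ T, ParallelTransversal (M ／ {e}) T →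
      ThreeConnected ((M ／ {e}) ↾ T) ∧ HasU24Minor ((M ／ {e}) ↾ T) := by
  obtain ⟨L₀, v₀, -, hL₀⟩ := hU.exists_fourPointLine
  obtain ⟨e, L, v, hL, heL, hsep⟩ := hL₀.exists_forall_not_verticalSep h3 hrk
  have he : e ∈ M.E := hL.subset_ground heL
  have h4 := hU.four_le_encard
  have hUe : HasU24Minor (M ／ {e}) := (hL.contract (singleton_subset_iff.mpr heL)).hasU24Minor
  have hsep' := fun P ↦ rk_contract_add_two_le_of_forall_not_verticalSep (P := P) he
    (h3.rk_singleton h4 he) hsep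
  exact ⟨e, he, fun T hT ↦ ⟨hT.threeConnected_restrict (h3.mConnected_contract h4 he) hsep',
    hT.hasU24Minor_restrict hUe⟩⟩

end ParallelTransversal

section Cosimplification

variable {α : Type u} {M K : Matroid α} {X : Set α} {f g : α}

lemma exists_isCircuit_inter_eq_singleton (h : M.Coindep X) (hf : f ∈ X) :
    ∃ C, M.IsCircuit C ∧ C ∩ X = {f} := by
  obtain ⟨B, hB, hBsub⟩ := h.exists_isBase_subset_compl
  have hfB : f ∉ B := fun hfB ↦ (hBsub hfB).2 hf
  refine ⟨M.fundCircuit f B, hB.fundCircuit_isCircuit (h.subset_ground hf) hfB,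
    subset_antisymm ?_ (singleton_subset_iff.mpr ⟨M.mem_fundCircuit f B, hf⟩)⟩
  rintro g ⟨hg, hgX⟩
  exact (M.fundCircuit_subset_insert f B hg).resolve_right fun hgB ↦ (hBsub hgB).2 hgX

lemma mem_of_isCocircuit_pair (hK : M.IsCocircuit {f, g}) (hC : M.IsCircuit X) (hf : f ∈ X) :
    g ∈ X := by
  by_contra hg
  refine hC.inter_isCocircuit_ne_singleton hK (e := f) ?_
  rw [inter_insert_of_mem hf, inter_singleton_eq_empty.mpr hg, insert_empty_eq]

lemma seriesPair_iff_mem_closure_dual (hf : M✶.IsNonloop f) (hg : M✶.IsNonloop g) :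
    SeriesPair M f g ↔ g ∈ M✶.closure {f} := by
  constructor
  · intro hfg
    by_contra hmem
    have hcoindep : M.Coindep {g, f} :=
      hf.indep.insert_indep_iff.mpr (.inl ⟨hg.mem_ground, hmem⟩)
    obtain ⟨C, hC, hCgf⟩ := exists_isCircuit_inter_eq_singleton hcoindep (mem_insert g {f})
    have hgC : g ∈ C := (hCgf.superset rfl).1
    obtain rfl : f = g :=
      hCgf.subset ⟨(hfg.1 C hC).mpr hgC, mem_insert_of_mem g rfl⟩
    exact hmem (M✶.mem_closure_self f hf.mem_ground)
  · intro hmem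
    obtain ⟨C, hC, hCf⟩ := exists_isCircuit_inter_eq_singleton hf.indep (mem_singleton f)
    have hfC : f ∈ C := (hCf.superset rfl).1
    obtain rfl | hne := eq_or_ne f g
    · exact ⟨fun _ _ ↦ Iff.rfl, C, hC, hfC, hfC⟩
    have hcocircuit : M.IsCocircuit {f, g} :=
      (hf.closure_eq_closure_iff_isCircuit_of_ne hne).mp (hg.closure_eq_of_mem_closure hmem).symm
    have hiff (C : Set α) (hC : Circuit M C) : f ∈ C ↔ g ∈ C :=
      ⟨mem_of_isCocircuit_pair hcocircuit hC,
        mem_of_isCocircuit_pair (pair_comm f g ▸ hcocircuit) hC⟩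
    exact ⟨hiff, C, hC, hfC, (hiff C hC).mp hfC⟩

lemma isSeriesClass_setOf (hf : SeriesPair M f f) : IsSeriesClass M {g | SeriesPair M f g} := by
  refine ⟨⟨⟨f, hf⟩, fun g hg h hh ↦ ⟨fun C hC ↦ (hg.1 C hC).symm.trans (hh.1 C hC), ?_⟩⟩,
    fun S hS hsub g hg ↦ hS.2 f (hsub hf) g hg⟩
  obtain ⟨C, hC, hfC, hgC⟩ := hg.2
  exact ⟨C, hC, hgC, (hh.1 C hC).mp hfC⟩

lemma IsCosimplification.exists_parallelTransversal (h : IsCosimplification M K)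
    (hM : ∀ f ∈ M.E, M✶.IsNonloop f) : ∃ T, ParallelTransversal M✶ T ∧ K✶ = M✶ ↾ T := by
  obtain ⟨D, -, rfl, -, hclass⟩ := h
  have mem_closure {f g : α} (hfg : SeriesPair M f g) : g ∈ M.E ∧ g ∈ M✶.closure {f} := by
    obtain ⟨C, hC, hfC, hgC⟩ := hfg.2
    have hg := hC.prop.subset_ground hgC
    have hf := hC.prop.subset_ground hfC
    exact ⟨hg, (seriesPair_iff_mem_closure_dual (hM f hf) (hM g hg)).mp hfg⟩
  have seriesPair {f g : α} (hf : f ∈ M.E) (hg : g ∈ M.E) (hgf : g ∈ M✶.closure {f}) :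
      SeriesPair M f g :=
    (seriesPair_iff_mem_closure_dual (hM f hf) (hM g hg)).mpr hgf
  have exists_rep (f : α) (hf : f ∈ M.E) : ∃ x, {g | SeriesPair M f g} \ D = {x} := by
    obtain ⟨x, -, hx⟩ := hclass _
      (isSeriesClass_setOf (seriesPair hf hf (M✶.mem_closure_self f)))
    exact ⟨x, hx⟩
  refine ⟨M.E \ D, ⟨fun f hf ↦ hM f hf.1, fun f hf g hg hgf ↦ ?_, fun f hf ↦ ?_⟩,
    dual_dual (M✶ ↾ (M.E \ D))⟩
  · obtain ⟨x, hx⟩ := exists_rep f hf.1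
    obtain rfl : f = x := hx.subset ⟨seriesPair hf.1 hf.1 (M✶.mem_closure_self f), hf.2⟩
    exact (hx.subset ⟨seriesPair hf.1 hg.1 hgf, hg.2⟩).symm
  · obtain ⟨x, hx⟩ := exists_rep f hf
    have hxmem := hx.superset rfl
    obtain ⟨hxE, hxf⟩ := mem_closure hxmem.1
    exact ⟨x, ⟨hxE, hxmem.2⟩, (hM x hxE).mem_closure_singleton hxf⟩

lemma ThreeConnected.notMem_closure_dual_singleton [M.RankFinite] (h3 : ThreeConnected M)
    (h4 : 4 ≤ M.E.encard) (hf : f ∈ M.E) (hg : g ∈ M.E) (hfg : f ≠ g) :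
    f ∉ M✶.closure {g} := by
  have hmem := Indep.notMem_closure_sdiff_of_mem (h3.coindep_pair h4 hf hg) (mem_insert f {g})
  rwa [pair_sdiff_left hfg] at hmem

lemma exists_forall_isCosimplification_of_finite [M.Finite] (h3 : ThreeConnected M)
    (hU : HasU24Minor M) (hrk : 3 ≤ rk M✶ M.E) :
    ∃ e ∈ M.E, ∀ K, IsCosimplification (M ＼ {e}) K → ThreeConnected K ∧ HasU24Minor K := by
  obtain ⟨e, he, hT⟩ := h3.dual.exists_threeConnected_contract hU.dual hrk
  refine ⟨e, he, fun K hK ↦ ?_⟩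
  have hnonloop (f : α) (hf : f ∈ (M ＼ {e}).E) : (M ＼ {e})✶.IsNonloop f := by
    rw [dual_delete, contract_isNonloop_iff]
    exact ⟨hf.1, h3.notMem_closure_dual_singleton hU.four_le_encard hf.1 he hf.2⟩
  obtain ⟨T, hTK, hKT⟩ := hK.exists_parallelTransversal hnonloop
  rw [dual_delete] at hTK hKT
  obtain ⟨h3T, hUT⟩ := hT T hTK
  have : ((M✶ ／ {e}) ↾ T).Finite := ⟨(M✶ ／ {e}).ground_finite.subset hTK.subset_ground⟩
  rw [← dual_dual K, hKT]
  exact ⟨h3T.dual, hUT.dual⟩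

end Cosimplification

section InfiniteGroundSet

variable {α : Type u} {M K : Matroid α} {A F F₀ S T : Set α} {e : α}

lemma exists_finite_superset_spanning_diff_singleton [M.RankFinite]
    (hM : ∀ z ∈ M.E, M.Spanning (M.E \ {z})) (hF₀ : F₀.Finite) (hF₀E : F₀ ⊆ M.E) :
    ∃ F, F₀ ⊆ F ∧ F.Finite ∧ F ⊆ M.E ∧ ∀ z, M.Spanning (F \ {z}) := by
  obtain ⟨B, hB⟩ := M.exists_isBase
  choose! b hb hbsub using fun z hz ↦ (hM z hz).exists_isBase_subset
  have hFE : F₀ ∪ (B ∪ ⋃ z ∈ B, b z) ⊆ M.E := union_subset hF₀E (union_subset hB.subset_ground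
    (iUnion₂_subset fun z hz ↦ (hb z (hB.subset_ground hz)).subset_ground))
  refine ⟨F₀ ∪ (B ∪ ⋃ z ∈ B, b z), subset_union_left, ?_, hFE, fun z ↦ ?_⟩
  · exact hF₀.union (hB.finite.union
      (hB.finite.biUnion fun z hz ↦ (hb z (hB.subset_ground hz)).finite))
  by_cases hz : z ∈ B
  · have hzE := hB.subset_ground hz
    refine (hb z hzE).spanning.superset (fun w hw ↦ ⟨.inr (.inr (mem_iUnion₂_of_mem hz hw)), ?_⟩)
      (sdiff_subset.trans hFE)
    exact (hbsub z hzE hw).2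
  · exact hB.spanning.superset
      (subset_sdiff_singleton (subset_union_left.trans subset_union_right) hz)
      (sdiff_subset.trans hFE)

lemma inter_nontrivial_of_rk_lt [M.RankFinite] (hF : ∀ z, M.Spanning (F \ {z})) (hFST : F ⊆ S ∪ T)
    (hT : rk M T < rk M M.E) : (S ∩ F).Nontrivial := by
  by_contra hS
  obtain ⟨z, hz⟩ : ∃ z, S ∩ F ⊆ {z} := by
    obtain ⟨x, -⟩ := exists_notMem_closure_of_rk_lt hT
    obtain hemp | ⟨z, hz⟩ := (not_nontrivial_iff.mp hS).eq_empty_or_singleton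
    exacts [⟨x, hemp.trans_subset (empty_subset {x})⟩, ⟨z, hz.subset⟩]
  have hFT : F \ {z} ⊆ T := fun w hw ↦
    (hFST hw.1).resolve_left fun hwS ↦ hw.2 (hz ⟨hwS, hw.1⟩)
  linarith [(spanning_iff_rk_ground_le (hF z).subset_ground).mp (hF z), rk_mono (M := M) hFT]

lemma ThreeConnected.exists_rk_lt_of_not_threeConnected_delete [M.RankFinite]
    (h3 : ThreeConnected M) (h4 : 4 ≤ M.E.encard) (he : ¬ ThreeConnected (M ＼ {e})) :
    ∃ X ⊆ M.E \ {e}, rk M X < rk M M.E ∧ rk M ((M.E \ {e}) \ X) < rk M M.E ∧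
      rk M X + rk M ((M.E \ {e}) \ X) ≤ rk M M.E + 1 := by
  have one_le_rk {X : Set α} (hX : X ⊆ M.E \ {e}) : X.Nonempty → 1 ≤ rk M X := fun ⟨x, hx⟩ ↦
    h3.rk_singleton h4 (hX hx).1 ▸ rk_mono (singleton_subset_iff.mpr hx)
  have two_le_rk {X : Set α} (hX : X ⊆ M.E \ {e}) : X.Nontrivial → 2 ≤ rk M X :=
    h3.two_le_rk h4 (hX.trans sdiff_subset)
  have hdel := rk_le_rk_ground M (M.E \ {e})
  by_contra! hnone
  refine he (threeConnected_iff.mpr ⟨mConnected_iff.mpr fun X hX hne hne' ↦ ?_,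
    fun X hX hnt hnt' ↦ ?_⟩)
  all_goals
    rw [delete_ground] at *
    rw [rk_delete M Subset.rfl, rk_delete M hX, rk_delete M sdiff_subset]
    by_contra! hlt
  · have hX1 := one_le_rk hX hne
    have hY1 := one_le_rk sdiff_subset hne'
    linarith [hnone X hX (by linarith) (by linarith)]
  · have hX2 := two_le_rk hX hnt
    have hY2 := two_le_rk sdiff_subset hnt'
    linarith [hnone X hX (by linarith) (by linarith)]

/-- `X'` is the limit of the sets `X e` along an ultrafilter on `A` that avoids all finite sets. -/
lemma exists_limit_rk_le (M : Matroid α) [M.RankFinite] (hA : A.Infinite) (X : α → Set α)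
    (hF : F.Finite) (hFE : F ⊆ M.E) :
    ∃ X' ⊆ M.E, ∃ e ∈ A, (∀ z ∈ F, z ∈ X' ↔ z ∈ X e) ∧ rk M X' ≤ rk M (X e) ∧
      rk M (M.E \ X') ≤ rk M ((M.E \ {e}) \ X e) := by
  have : (Filter.cofinite ⊓ Filter.principal A).NeBot :=
    Filter.cofinite_inf_principal_neBot_iff.mpr hA
  let U : Ultrafilter α := .of (Filter.cofinite ⊓ Filter.principal A)
  have hU : (U : Filter α) ≤ Filter.cofinite ⊓ Filter.principal A := Ultrafilter.of_le _
  let X' : Set α := {z ∈ M.E | ∀ᶠ e in U, z ∈ X e}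
  have hagree (z : α) (hz : z ∈ M.E) : ∀ᶠ e in U, z ≠ e ∧ (z ∈ X' ↔ z ∈ X e) := by
    have hne : ∀ᶠ e in U, z ≠ e := by
      filter_upwards [hU (Filter.mem_inf_of_left (finite_singleton z).compl_mem_cofinite)]
        with e hze using Ne.symm hze
    by_cases hzX : z ∈ X'
    · filter_upwards [hne, hzX.2] with e hze hze'
      exact ⟨hze, iff_of_true hzX hze'⟩
    · have hnot : ∀ᶠ e in U, z ∉ X e := Ultrafilter.eventually_not.mpr fun h ↦ hzX ⟨hz, h⟩
      filter_upwards [hne, hnot] with e hze hze'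
      exact ⟨hze, iff_of_false hzX hze'⟩
  obtain ⟨I, hI⟩ := M.exists_isBasis X' (sep_subset _ _)
  obtain ⟨J, hJ⟩ := M.exists_isBasis (M.E \ X')
  have hfin : (F ∪ (I ∪ J)).Finite := hF.union (hI.indep.finite.union hJ.indep.finite)
  have hsub : F ∪ (I ∪ J) ⊆ M.E :=
    union_subset hFE (union_subset hI.indep.subset_ground hJ.indep.subset_ground)
  have hall := (Filter.eventually_all_finite hfin).mpr fun z hz ↦ hagree z (hsub hz)
  have hAU : ∀ᶠ e in U, e ∈ A := hU (Filter.mem_inf_of_right (Filter.mem_principal_self A))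
  obtain ⟨e, heA, he⟩ := (hAU.and hall).exists
  refine ⟨X', sep_subset _ _, e, heA, fun z hz ↦ (he z (.inl hz)).2, ?_, ?_⟩
  · rw [← rk_congr_closure hI.closure_eq_closure]
    exact rk_mono fun z hz ↦ (he z (.inr (.inl hz))).2.mp (hI.subset hz)
  · rw [← rk_congr_closure hJ.closure_eq_closure]
    refine rk_mono fun z hz ↦ ?_
    have hze := he z (.inr (.inr hz))
    exact ⟨⟨(hJ.subset hz).1, hze.1⟩, fun hzX ↦ (hJ.subset hz).2 (hze.2.mpr hzX)⟩

lemma ThreeConnected.exists_threeConnected_delete [M.RankFinite] (h3 : ThreeConnected M)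
    (hinf : M.E.Infinite) (hF₀ : F₀.Finite) (hF₀E : F₀ ⊆ M.E) :
    ∃ e ∈ M.E, e ∉ F₀ ∧ ThreeConnected (M ＼ {e}) := by
  have h4 : 4 ≤ M.E.encard := hinf.encard_eq ▸ le_top
  obtain ⟨F, hF₀F, hFfin, hFE, hF⟩ := exists_finite_superset_spanning_diff_singleton
    (fun z hz ↦ (spanning_iff_rk_ground_le sdiff_subset).mpr (h3.rk_diff_singleton h4 hz).ge)
    hF₀ hF₀E
  by_contra! hnone
  choose! X hX hXlt hYlt hle using fun e (he : e ∈ M.E \ F) ↦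
    h3.exists_rk_lt_of_not_threeConnected_delete h4 (hnone e he.1 (notMem_subset hF₀F he.2))
  obtain ⟨X', hX', e, he, hagree, hrkX, hrkY⟩ :=
    exists_limit_rk_le M (hinf.sdiff hFfin) X hFfin hFE
  have hcover : F ⊆ (M.E \ {e}) \ X e ∪ X e := by
    rw [sdiff_union_of_subset (hX e he)]
    exact subset_sdiff_singleton hFE he.2
  have hXnt : X'.Nontrivial :=
    (inter_nontrivial_of_rk_lt hF (union_comm _ _ ▸ hcover) (hYlt e he)).mono
      fun z hz ↦ (hagree z hz.2).mpr hz.1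
  have hYnt : (M.E \ X').Nontrivial :=
    (inter_nontrivial_of_rk_lt hF hcover (hXlt e he)).mono
      fun z hz ↦ ⟨hFE hz.2, fun hzX ↦ hz.1.2 ((hagree z hz.2).mp hzX)⟩
  linarith [(threeConnected_iff.mp h3).2 X' hX' hXnt hYnt, hle e he]

lemma IsCosimplification.eq_of_threeConnected [M.RankFinite] (h : IsCosimplification M K)
    (h3 : ThreeConnected M) (h4 : 4 ≤ M.E.encard) : K = M := by
  have hnonloop (f : α) (hf : f ∈ M.E) : M✶.IsNonloop f :=
    (h3.coindep_pair h4 hf hf).isNonloop_of_mem (mem_insert f {f})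
  obtain ⟨T, hT, hKT⟩ := h.exists_parallelTransversal hnonloop
  have hTE : T = M✶.E := by
    refine hT.subset_ground.antisymm fun f hf ↦ ?_
    obtain ⟨g, hg, hfg⟩ := hT.exists_mem_closure f hf
    obtain rfl : f = g := by
      by_contra hne
      exact h3.notMem_closure_dual_singleton h4 hf (hT.subset_ground hg) hne hfg
    exact hg
  rwa [hTE, restrict_ground_eq_self, dual_inj] at hKT

lemma exists_forall_isCosimplification_of_infinite [M.RankFinite] (hinf : M.E.Infinite)
    (h3 : ThreeConnected M) (hU : HasU24Minor M) :
    ∃ e ∈ M.E, ∀ K, IsCosimplification (M ＼ {e}) K → ThreeConnected K ∧ HasU24Minor K := by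
  obtain ⟨L, v, hLind, hL⟩ := hU.exists_fourPointLine
  have hvE : range v ⊆ M.E := range_subset_iff.mpr hL.mem_ground
  obtain ⟨e, he, heLv, h3e⟩ := h3.exists_threeConnected_delete hinf
    (hLind.finite.union (finite_range v)) (union_subset hL.subset_ground hvE)
  have hUe : HasU24Minor (M ＼ {e}) :=
    (hL.restrict sdiff_subset
      (subset_sdiff_singleton hL.subset_ground fun heL ↦ heLv (.inl heL))
      fun i ↦ subset_sdiff_singleton hvE (fun hev ↦ heLv (.inr hev))
        (mem_range_self i)).hasU24Minor
  refine ⟨e, he, fun K hK ↦ ?_⟩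
  rw [hK.eq_of_threeConnected h3e hUe.four_le_encard]
  exact ⟨h3e, hUe⟩

end InfiniteGroundSet

theorem statement_12 {α : Type u} (N : Matroid α) (h3 : ThreeConnected N)
    (hU : HasU24Minor N) (hcr : 3 ≤ eRank N✶) :
    ∃ e ∈ N.E, ∀ N', IsCosimplification (del N {e}) N' →
      ThreeConnected N' ∧ HasU24Minor N' := by
  have := h3.rankFinite hU.four_le_encard
  obtain hfin | hinf := N.E.finite_or_infinite
  · have : N.Finite := ⟨hfin⟩
    exact exists_forall_isCosimplification_of_finite h3 hU
      (natCast_le_rk_ground (n := 3) (eRank_eq_eRank N✶ ▸ hcr))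
  · exact exists_forall_isCosimplification_of_infinite hinf h3 hU

end BLFormal
end

section
/- Let N be a matroid and G a graph with N = L(G). Assume N is not graphic and that r(co(N)) \ge 4 and r*(N) \ge 4. Then for every edge e of G: if e is a link of G (its end-vertices are distinct), the contraction N/e is not graphic; and if e is a loop of G or is contained in a parallel class of G of size at least two, the deletion N\\e is not graphic. -/
/-!
The finite edge sets of a graph in which all degrees are even form a vector space over the
two-element field under symmetric difference. A set is independent in the cycle matroid if it
contains no nonempty even set, and independent in `L(G)` if it contains at most one. Minors of
`L(G)` have the same description with the space replaced by its traces or by the members avoiding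
a set.

Suppose that such a minor has corank at least two and is graphic, hence binary. Its space is then a
cactus, that is, no two of its cycles overlap: otherwise there are a theta and an ear on it, whose
union is a restriction of corank two that is not binary.

In a cactus all elements of a cycle lie in the same even sets and are therefore in series. If the
cosimplification of `L(G)` has rank at least three, then some independent set contains three
elements of distinct series classes together with all but one element of every series class. Up to
the edge `e`, it contains the cycles of the cactus through these three elements, which gives
distinct nonempty even sets inside an independent set of `L(G)`.
-/

open Set Matroid

universe u

namespace BLFormal

/-! ### Spaces of finite sets -/

section CycleSpaces

open scoped symmDiff

variable {α : Type u}

/-- A family of finite subsets of `α` that contains `∅` and is closed under symmetric difference,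
that is, a vector space over the two-element field. The binary cycle space of a graph is the
motivating example; its minors need not be given by a graph here. -/
structure CycleSpace (α : Type u) where
  carrier : Set (Set α)
  finite_of_mem' : ∀ Z ∈ carrier, Z.Finite
  empty_mem' : ∅ ∈ carrier
  symmDiff_mem' : ∀ A ∈ carrier, ∀ B ∈ carrier, A ∆ B ∈ carrier

namespace CycleSpace

instance : SetLike (CycleSpace α) (Set α) where
  coe := carrier
  coe_injective C D h := by cases C; congr

variable {C : CycleSpace α} {A B F I J T W Z p q r : Set α} {x y : α}

lemma finite_of_mem (hZ : Z ∈ C) : Z.Finite := C.finite_of_mem' Z hZ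

lemma symmDiff_mem (hA : A ∈ C) (hB : B ∈ C) : A ∆ B ∈ C := C.symmDiff_mem' A hA B hB

lemma sdiff_mem (hA : A ∈ C) (hB : B ∈ C) (hBA : B ⊆ A) : A \ B ∈ C :=
  symmDiff_of_ge hBA ▸ symmDiff_mem hA hB

/-- The nonempty members of `C` that are contained in `I`. -/
def membersIn (C : CycleSpace α) (I : Set α) : Set (Set α) := {Z | Z ∈ C ∧ Z.Nonempty ∧ Z ⊆ I}

lemma membersIn_mono (hIJ : I ⊆ J) : C.membersIn I ⊆ C.membersIn J :=
  fun _ hZ ↦ ⟨hZ.1, hZ.2.1, hZ.2.2.trans hIJ⟩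

/-- The cycles of `C`: its minimal nonempty members. -/
def IsCycle (C : CycleSpace α) (A : Set α) : Prop := Minimal (fun Z ↦ Z ∈ C ∧ Z.Nonempty) A

lemma IsCycle.mem (hA : C.IsCycle A) : A ∈ C := hA.prop.1

lemma IsCycle.eq_of_subset (hA : C.IsCycle A) (hZ : Z ∈ C) (hne : Z.Nonempty) (hZA : Z ⊆ A) :
    Z = A :=
  hZA.antisymm (hA.le_of_le ⟨hZ, hne⟩ hZA)

lemma exists_isCycle_subset (hZ : Z ∈ C) (hx : x ∈ Z) : ∃ A, C.IsCycle A ∧ x ∈ A ∧ A ⊆ Z := by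
  obtain ⟨A, hAZ, ⟨hA, hxA⟩, hmin⟩ := ((finite_of_mem hZ).finite_subsets.subset
    fun A hA ↦ hA.2.2 : {A | A ∈ C ∧ x ∈ A ∧ A ⊆ Z}.Finite).exists_le_minimal ⟨hZ, hx, subset_rfl⟩
  refine ⟨A, ⟨⟨hA, x, hxA.1⟩, fun Y ⟨hY, y, hy⟩ hYA ↦ ?_⟩, hxA.1, hAZ⟩
  by_cases hxY : x ∈ Y
  · exact hmin ⟨hY, hxY, hYA.trans hAZ⟩ hYA
  · have hle : A ≤ A \ Y :=
      hmin ⟨sdiff_mem hA hY hYA, ⟨hxA.1, hxY⟩, sdiff_subset.trans hAZ⟩ sdiff_subset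
    exact absurd hy (hle (hYA hy)).2

/-- `C` is a cactus if a cycle is contained in every member that it meets. For the cycle space of
a graph this says that no two cycles share an edge. -/
def IsCactus (C : CycleSpace α) : Prop :=
  ∀ A Z, C.IsCycle A → Z ∈ C → (A ∩ Z).Nonempty → A ⊆ Z

lemma IsCactus.eq_of_mem (hC : C.IsCactus) (hA : C.IsCycle A) (hB : C.IsCycle B) (hxA : x ∈ A)
    (hxB : x ∈ B) : A = B :=
  (hC A B hA hB.mem ⟨x, hxA, hxB⟩).antisymm (hC B A hB hA.mem ⟨x, hxB, hxA⟩)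

lemma exists_mem_minimal_sdiff {P : Set α → Prop} (A : Set α) (h : ∃ Z ∈ C, P Z) :
    ∃ B ∈ C, P B ∧ ∀ Z ∈ C, P Z → Z \ A ⊆ B → Z \ A = B \ A := by
  obtain ⟨B, ⟨hB, hPB⟩, hmin⟩ := exists_minimalFor_of_wellFoundedLT
    (fun Z ↦ Z ∈ C ∧ P Z) (fun Z ↦ (Z \ A).ncard) h
  have hfin : (B \ A).Finite := (finite_of_mem hB).sdiff
  refine ⟨B, hB, hPB, fun Z hZ hPZ hsub ↦ ?_⟩
  have hsub' : Z \ A ⊆ B \ A := fun z hz ↦ ⟨hsub hz, hz.2⟩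
  exact eq_of_subset_of_ncard_le hsub' (hmin ⟨hZ, hPZ⟩ (ncard_le_ncard hsub' hfin)) hfin

/-! ### Thetas and ears -/

/-- `p`, `q` and `r` are the three paths of a theta of `C`: disjoint nonempty sets such that the
nonempty members of `C` inside their union are the three unions of two of them. -/
structure IsTheta (C : CycleSpace α) (p q r : Set α) : Prop where
  nonempty₁ : p.Nonempty
  nonempty₂ : q.Nonempty
  nonempty₃ : r.Nonempty
  disjoint₁₂ : Disjoint p q
  disjoint₂₃ : Disjoint q r
  disjoint₃₁ : Disjoint r p
  membersIn_eq : C.membersIn (p ∪ q ∪ r) = {p ∪ q, q ∪ r, r ∪ p}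

lemma IsTheta.rotate (h : C.IsTheta p q r) : C.IsTheta q r p where
  nonempty₁ := h.nonempty₂
  nonempty₂ := h.nonempty₃
  nonempty₃ := h.nonempty₁
  disjoint₁₂ := h.disjoint₂₃
  disjoint₂₃ := h.disjoint₃₁
  disjoint₃₁ := h.disjoint₁₂
  membersIn_eq := by
    rw [union_comm, ← union_assoc, h.membersIn_eq]
    grind

lemma IsTheta.mem_union (h : C.IsTheta p q r) : p ∪ q ∈ C :=
  (h.membersIn_eq.symm.subset (mem_insert _ _)).1

lemma IsTheta.membersIn_sdiff_singleton (h : C.IsTheta p q r) (hx : x ∈ p) :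
    C.membersIn ((p ∪ q ∪ r) \ {x}) = {q ∪ r} := by
  have hxq : x ∉ q := h.disjoint₁₂.notMem_of_mem_left hx
  have hxr : x ∉ r := h.disjoint₃₁.notMem_of_mem_right hx
  refine subset_antisymm (fun Z hZ ↦ ?_) (singleton_subset_iff.2 ⟨h.rotate.mem_union, ?_, ?_⟩)
  · have hxZ : x ∉ Z := fun hxZ ↦ (hZ.2.2 hxZ).2 rfl
    rcases h.membersIn_eq.subset (membersIn_mono sdiff_subset hZ) with rfl | rfl | rfl
    exacts [absurd (Or.inl hx) hxZ, rfl, absurd (Or.inr hx) hxZ]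
  · exact h.nonempty₂.inl
  · grind

lemma IsTheta.exists_membersIn_sdiff_singleton (h : C.IsTheta p q r) (hx : x ∈ p ∪ q ∪ r) :
    ∃ Z, C.membersIn ((p ∪ q ∪ r) \ {x}) = {Z} := by
  rcases hx with (hx | hx) | hx
  · exact ⟨_, h.membersIn_sdiff_singleton hx⟩
  · exact ⟨_, by rw [← h.rotate.membersIn_sdiff_singleton hx]; grind⟩
  · exact ⟨_, by rw [← h.rotate.rotate.membersIn_sdiff_singleton hx]; grind⟩

lemma IsTheta.exists_mem (h : C.IsTheta p q r) (hx : x ∈ p ∪ q ∪ r) :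
    ∃ Z ∈ C, x ∈ Z ∧ Z ⊆ p ∪ q ∪ r := by
  rcases hx with hx | hx
  · exact ⟨_, h.mem_union, hx, subset_union_left⟩
  · exact ⟨_, h.rotate.mem_union, Or.inr hx, by grind⟩

lemma IsTheta.mem_of_subset (h : C.IsTheta p q r) (hZ : Z ∈ C) (hne : Z.Nonempty)
    (hsub : Z ⊆ p ∪ q ∪ r) (hx : x ∈ p) (hxZ : x ∉ Z) (hy : y ∈ q) : y ∈ Z := by
  rcases h.membersIn_eq.subset ⟨hZ, hne, hsub⟩ with rfl | rfl | rfl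
  exacts [Or.inr hy, Or.inl hy, absurd (Or.inr hx) hxZ]

lemma symmDiff_subset_of_sdiff_eq (h : A \ F = B \ F) : A ∆ B ⊆ F := by
  rintro x (⟨hxA, hxB⟩ | ⟨hxB, hxA⟩) <;> by_contra hxF
  exacts [hxB (h.le ⟨hxA, hxF⟩).1, hxA (h.ge ⟨hxB, hxF⟩).1]

lemma IsCycle.eq_or_eq_symmDiff_of_sdiff_eq (hA : C.IsCycle A) (hB : B ∈ C) (hZ : Z ∈ C)
    (hZA : Z \ A = B \ A) : Z = B ∨ Z = B ∆ A := by
  rcases (B ∆ Z).eq_empty_or_nonempty with h0 | hne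
  · exact Or.inl (symmDiff_eq_empty.1 h0).symm
  · rw [← hA.eq_of_subset (symmDiff_mem hB hZ) hne (symmDiff_subset_of_sdiff_eq hZA.symm),
      symmDiff_symmDiff_cancel_left]
    exact Or.inr rfl

lemma membersIn_union_of_minimal (hA : C.IsCycle A) (hB : B ∈ C) (hAB : (A ∩ B).Nonempty)
    (hnB : ¬ A ⊆ B)
    (hmin : ∀ Z ∈ C, (A ∩ Z).Nonempty ∧ ¬ A ⊆ Z → Z \ A ⊆ B → Z \ A = B \ A) :
    C.membersIn (A ∪ B) = {A, B, B ∆ A} := by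
  obtain ⟨a, haA, haB⟩ := hAB
  have hempty : ∀ Y ∈ C, Y ⊆ B \ A → Y = ∅ := by
    intro Y hY hsub
    have hcut : (A ∩ (B \ Y)).Nonempty ∧ ¬ A ⊆ B \ Y :=
      ⟨⟨a, haA, haB, fun haY ↦ (hsub haY).2 haA⟩, fun h ↦ hnB (h.trans sdiff_subset)⟩
    have hBYA : (B \ Y) \ A = B \ A :=
      hmin (B \ Y) (sdiff_mem hB hY (hsub.trans sdiff_subset)) hcut (by grind)
    grind
  refine subset_antisymm ?_ ?_
  · rintro Z ⟨hZ, hne, hsub⟩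
    by_cases hAZ : A ⊆ Z
    · have hZA : Z \ A = ∅ := hempty (Z \ A) (sdiff_mem hZ hA.mem hAZ) (by grind)
      exact Or.inl ((sdiff_eq_empty.1 hZA).antisymm hAZ)
    · by_cases hmeet : (A ∩ Z).Nonempty
      · exact Or.inr (hA.eq_or_eq_symmDiff_of_sdiff_eq hB hZ (hmin Z hZ ⟨hmeet, hAZ⟩ (by grind)))
      · have hZA : ∀ z ∈ Z, z ∉ A := fun z hz hzA ↦ hmeet ⟨z, hzA, hz⟩
        exact absurd (hempty Z hZ (by grind)) hne.ne_empty
  · rintro Z (rfl | rfl | rfl)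
    · exact ⟨hA.mem, hA.prop.2, subset_union_left⟩
    · exact ⟨hB, ⟨a, haB⟩, subset_union_right⟩
    · obtain ⟨a', haA', haB'⟩ := not_subset.1 hnB
      exact ⟨symmDiff_mem hB hA.mem, ⟨a', Or.inr ⟨haA', haB'⟩⟩, by grind⟩

/-- A cycle `A` together with a member `B` that meets it without containing it, and with `B \ A` as
small as possible, form a theta. -/
lemma exists_isTheta (h : ¬ C.IsCactus) : ∃ p q r, C.IsTheta p q r := by
  simp only [IsCactus, not_forall] at h
  obtain ⟨A, B₀, hA, hB₀, hAB₀, hnB₀⟩ := h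
  obtain ⟨B, hB, ⟨hAB, hnB⟩, hmin⟩ := exists_mem_minimal_sdiff (C := C)
    (P := fun Z ↦ (A ∩ Z).Nonempty ∧ ¬ A ⊆ Z) A ⟨B₀, hB₀, hAB₀, hnB₀⟩
  have hBA : (B \ A).Nonempty := sdiff_nonempty.2 fun hBA ↦
    hnB (hA.eq_of_subset hB (hAB.mono inter_subset_right) hBA).ge
  have hpq : A \ B ∪ A ∩ B = A := sdiff_union_inter A B
  have hqr : A ∩ B ∪ B \ A = B := by grind
  have hrp : B \ A ∪ A \ B = B ∆ A := rfl
  refine ⟨A \ B, A ∩ B, B \ A, sdiff_nonempty.2 hnB, hAB, hBA, disjoint_sdiff_inter,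
    disjoint_sdiff_self_right.mono_left inter_subset_left, disjoint_sdiff_sdiff, ?_⟩
  rw [hpq, hqr, hrp, union_sdiff_self]
  exact membersIn_union_of_minimal hA hB hAB hnB hmin

/-- `W` is an ear of `C` on `T`: a minimal nonempty trace outside `T` of a member of `C`. -/
structure IsEar (C : CycleSpace α) (T W : Set α) : Prop where
  nonempty : W.Nonempty
  disjoint : Disjoint T W
  exists_mem : ∃ D ∈ C, D \ T = W
  subset_or : ∀ Z ∈ C, Z ⊆ T ∪ W → Z ⊆ T ∨ W ⊆ Z

lemma exists_isEar (h : ∃ Z ∈ C, ¬ Z ⊆ T) : ∃ W, C.IsEar T W := by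
  obtain ⟨D, hD, hDT, hmin⟩ := exists_mem_minimal_sdiff T h
  refine ⟨D \ T, sdiff_nonempty.2 hDT, disjoint_sdiff_self_right, ⟨D, hD, rfl⟩, ?_⟩
  intro Z hZ hsub
  by_cases hZT : Z ⊆ T
  · exact Or.inl hZT
  · rw [← hmin Z hZ hZT (by grind)]
    exact Or.inr sdiff_subset

lemma IsTheta.not_subsingleton_membersIn (h : C.IsTheta p q r) (hW : C.IsEar (p ∪ q ∪ r) W)
    (hx : x ∈ p ∪ q ∪ r) : ¬ (C.membersIn ((p ∪ q ∪ r ∪ W) \ {x})).Subsingleton := by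
  obtain ⟨Z, hZ⟩ := h.exists_membersIn_sdiff_singleton hx
  obtain ⟨hZC, hne, hZT⟩ : Z ∈ C.membersIn ((p ∪ q ∪ r) \ {x}) := hZ.symm ▸ rfl
  obtain ⟨Y, hY, hxY, hYT⟩ := h.exists_mem hx
  obtain ⟨w, hw⟩ := hW.nonempty
  have hwT : w ∉ p ∪ q ∪ r := hW.disjoint.notMem_of_mem_right hw
  obtain ⟨D, hD, hDW⟩ : ∃ D ∈ C, x ∉ D ∧ D \ (p ∪ q ∪ r) = W := by
    obtain ⟨D, hD, hDW⟩ := hW.exists_mem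
    by_cases hxD : x ∈ D
    · exact ⟨D ∆ Y, symmDiff_mem hD hY, by grind, by grind⟩
    · exact ⟨D, hD, hxD, hDW⟩
  have hwD : w ∈ D := (hDW.2 ▸ hw : w ∈ D \ _).1
  intro hsub
  have : Z = D := hsub ⟨hZC, hne, by grind⟩ ⟨hD, ⟨w, hwD⟩, by grind⟩
  grind

lemma IsTheta.subsingleton_membersIn_of_mem_ear (h : C.IsTheta p q r)
    (hW : C.IsEar (p ∪ q ∪ r) W) (hx : x ∈ p ∪ q ∪ r) (hy : y ∈ W) :
    (C.membersIn ((p ∪ q ∪ r ∪ W) \ {x, y})).Subsingleton := by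
  obtain ⟨Z, hZ⟩ := h.exists_membersIn_sdiff_singleton hx
  refine (hZ ▸ subsingleton_singleton : (C.membersIn _).Subsingleton).anti ?_
  rintro Y ⟨hY, hne, hsub⟩
  have hYT : Y ⊆ p ∪ q ∪ r := (hW.subset_or Y hY (hsub.trans sdiff_subset)).resolve_right
    fun hWY ↦ (hsub (hWY hy)).2 (Or.inr rfl)
  exact ⟨hY, hne, fun z hz ↦ ⟨hYT hz, fun hzx ↦ (hsub hz).2 (Or.inl hzx)⟩⟩

lemma IsTheta.subsingleton_membersIn_of_mem (h : C.IsTheta p q r)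
    (hW : C.IsEar (p ∪ q ∪ r) W) (hx : x ∈ p) (hy : y ∈ q) :
    (C.membersIn ((p ∪ q ∪ r ∪ W) \ {x, y})).Subsingleton := by
  have hempty : ∀ Z ∈ C, Z ⊆ p ∪ q ∪ r → x ∉ Z → y ∉ Z → Z = ∅ := fun Z hZ hsub hxZ hyZ ↦
    not_nonempty_iff_eq_empty.1 fun hne ↦ hyZ (h.mem_of_subset hZ hne hsub hx hxZ hy)
  have hWZ : ∀ Z ∈ C.membersIn ((p ∪ q ∪ r ∪ W) \ {x, y}), W ⊆ Z := fun Z ⟨hZ, hne, hsub⟩ ↦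
    (hW.subset_or Z hZ (hsub.trans sdiff_subset)).resolve_left
      fun hZT ↦ hne.ne_empty (hempty Z hZ hZT (by grind) (by grind))
  intro Y hY Z hZ
  have hWY := hWZ Y hY
  have hWZ := hWZ Z hZ
  obtain ⟨hY, -, hYsub⟩ := hY
  obtain ⟨hZ, -, hZsub⟩ := hZ
  exact symmDiff_eq_empty.1 <| hempty (Y ∆ Z) (symmDiff_mem hY hZ) (by grind) (by grind) (by grind)

/-! ### Cycle matroids and lift matroids -/

/-- `M` is the binary matroid whose circuits are the cycles of `C`; for the cycle space of a graph
this is its cycle matroid. -/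
structure IsCycleMatroid (C : CycleSpace α) (M : Matroid α) : Prop where
  subset_ground : ∀ Z ∈ C, Z ⊆ M.E
  indep_iff : ∀ I, M.Indep I ↔ I ⊆ M.E ∧ C.membersIn I = ∅

/-- `M` is the matroid in which a set is independent if it contains at most one nonempty member
of `C`; for the cycle space of a graph this is its bicircular lift matroid. -/
structure IsLiftMatroid (C : CycleSpace α) (M : Matroid α) : Prop where
  subset_ground : ∀ Z ∈ C, Z ⊆ M.E
  indep_iff : ∀ I, M.Indep I ↔ I ⊆ M.E ∧ (C.membersIn I).Subsingleton

variable {M N : Matroid α} {Q : CycleSpace α} {K : Set α}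

lemma IsCycleMatroid.eq_empty_of_indep (hQ : Q.IsCycleMatroid M) (hI : M.Indep I) (hK : K ∈ Q)
    (hKI : K ⊆ I) : K = ∅ := by
  by_contra hne
  exact (((hQ.indep_iff I).1 hI).2.subset ⟨hK, nonempty_iff_ne_empty.2 hne, hKI⟩).elim

lemma IsCycleMatroid.exists_mem_of_not_indep (hQ : Q.IsCycleMatroid M) (hI : I ⊆ M.E)
    (hnI : ¬ M.Indep I) : ∃ K ∈ Q, K.Nonempty ∧ K ⊆ I := by
  rw [hQ.indep_iff, and_iff_right hI, ← ne_eq, ← nonempty_iff_ne_empty] at hnI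
  exact hnI

lemma IsLiftMatroid.isTheta_subset_ground (hM : C.IsLiftMatroid M) (h : C.IsTheta p q r) :
    p ∪ q ∪ r ⊆ M.E := fun _ hx ↦
  have ⟨_, hZ, hxZ, _⟩ := h.exists_mem hx
  hM.subset_ground _ hZ hxZ

lemma IsLiftMatroid.isEar_subset_ground (hM : C.IsLiftMatroid M) (hW : C.IsEar T W) :
    W ⊆ M.E := by
  obtain ⟨D, hD, rfl⟩ := hW.exists_mem
  exact sdiff_subset.trans (hM.subset_ground D hD)

lemma IsLiftMatroid.eq_of_isTheta (hM : C.IsLiftMatroid M) (hQ : Q.IsCycleMatroid M)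
    (h : C.IsTheta p q r) (hK : K ∈ Q) (hne : K.Nonempty) (hKT : K ⊆ p ∪ q ∪ r) :
    K = p ∪ q ∪ r := by
  refine hKT.antisymm fun x hx ↦ by_contra fun hxK ↦ hne.ne_empty ?_
  obtain ⟨Z, hZ⟩ := h.exists_membersIn_sdiff_singleton hx
  have hI : M.Indep ((p ∪ q ∪ r) \ {x}) :=
    (hM.indep_iff _).2
      ⟨sdiff_subset.trans (hM.isTheta_subset_ground h), hZ ▸ subsingleton_singleton⟩
  exact hQ.eq_empty_of_indep hI hK (subset_sdiff_singleton hKT hxK)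

lemma IsLiftMatroid.exists_mem_of_isTheta (hM : C.IsLiftMatroid M) (hQ : Q.IsCycleMatroid M)
    (h : C.IsTheta p q r) (hW : C.IsEar (p ∪ q ∪ r) W) (hx : x ∈ p) (hy : y ∈ q) :
    ∃ K ∈ Q, x ∉ K ∧ y ∈ K ∧ W ⊆ K ∧ K ⊆ p ∪ q ∪ r ∪ W := by
  have hE : p ∪ q ∪ r ∪ W ⊆ M.E :=
    union_subset (hM.isTheta_subset_ground h) (hM.isEar_subset_ground hW)
  have hxT : x ∈ p ∪ q ∪ r := Or.inl (Or.inl hx)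
  obtain ⟨K, hK, hne, hsub⟩ := hQ.exists_mem_of_not_indep (sdiff_subset.trans hE)
    fun hI ↦ h.not_subsingleton_membersIn hW hxT ((hM.indep_iff _).1 hI).2
  have hmem : ∀ z, (C.membersIn ((p ∪ q ∪ r ∪ W) \ {x, z})).Subsingleton → z ∈ K := by
    intro z hz
    by_contra hzK
    have hI := (hM.indep_iff _).2 ⟨sdiff_subset.trans hE, hz⟩
    exact hne.ne_empty (hQ.eq_empty_of_indep hI hK (by grind))
  exact ⟨K, hK, fun hxK ↦ (hsub hxK).2 rfl, hmem y (h.subsingleton_membersIn_of_mem hW hx hy),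
    fun w hw ↦ hmem w (h.subsingleton_membersIn_of_mem_ear hW hxT hw), hsub.trans sdiff_subset⟩

lemma IsLiftMatroid.exists_not_subset_of_isTheta (hM : C.IsLiftMatroid M) (h : C.IsTheta p q r)
    (hco : ∀ x, ¬ M.Indep (M.E \ {x})) : ∃ Z ∈ C, ¬ Z ⊆ p ∪ q ∪ r := by
  by_contra! hall
  obtain ⟨x, hx⟩ := h.nonempty₁
  refine hco x ((hM.indep_iff _).2 ⟨sdiff_subset, ?_⟩)
  have hsub : C.membersIn (M.E \ {x}) ⊆ C.membersIn ((p ∪ q ∪ r) \ {x}) :=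
    fun Z ⟨hZ, hne, hZx⟩ ↦ ⟨hZ, hne, fun z hz ↦ ⟨hall Z hZ hz, (hZx hz).2⟩⟩
  exact (h.membersIn_sdiff_singleton hx ▸ subsingleton_singleton).anti hsub

/-- The restriction to a theta `T` and an ear `W` has corank two. Each path of `T` is avoided by a
circuit containing `W`, and in a binary matroid any two of these three circuits would differ by the
circuit `T`. -/
theorem IsLiftMatroid.isCactus (hM : C.IsLiftMatroid M) (hQ : Q.IsCycleMatroid M)
    (hco : ∀ x, ¬ M.Indep (M.E \ {x})) : C.IsCactus := by
  by_contra hC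
  obtain ⟨p, q, r, h⟩ := exists_isTheta hC
  obtain ⟨W, hW⟩ := exists_isEar (hM.exists_not_subset_of_isTheta h hco)
  have hcircuit {K : Set α} (hK : K ∈ Q) (hne : K.Nonempty) (hsub : K ⊆ p ∪ q ∪ r) :
      K = p ∪ q ∪ r := hM.eq_of_isTheta hQ h hK hne hsub
  have hqr : q ∪ r ∪ p = p ∪ q ∪ r := by rw [union_comm, union_assoc]
  have hrp : r ∪ p ∪ q = p ∪ q ∪ r := by rw [union_assoc, union_comm]
  have h₂ := h.rotate
  have h₃ := h₂.rotate
  obtain ⟨a, ha⟩ := h.nonempty₁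
  obtain ⟨b, hb⟩ := h.nonempty₂
  obtain ⟨c, hc⟩ := h.nonempty₃
  obtain ⟨Ka, hKa, haKa, hbKa, hWKa, hKaT⟩ :=
    hM.exists_mem_of_isTheta hQ h hW ha hb
  obtain ⟨Kb, hKb, hbKb, hcKb, hWKb, hKbT⟩ :=
    hM.exists_mem_of_isTheta hQ h₂ (hqr ▸ hW) hb hc
  obtain ⟨Kc, hKc, hcKc, haKc, hWKc, hKcT⟩ :=
    hM.exists_mem_of_isTheta hQ h₃ (hrp ▸ hW) hc ha
  rw [hqr] at hKbT
  rw [hrp] at hKcT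
  have hab : Ka ∆ Kb = p ∪ q ∪ r :=
    hcircuit (symmDiff_mem hKa hKb) ⟨b, Or.inl ⟨hbKa, hbKb⟩⟩ (by grind)
  have hbc : Kb ∆ Kc = p ∪ q ∪ r :=
    hcircuit (symmDiff_mem hKb hKc) ⟨c, Or.inl ⟨hcKb, hcKc⟩⟩ (by grind)
  have haT : a ∈ p ∪ q ∪ r := Or.inl (Or.inl ha)
  have haKb : a ∈ Kb := (hab.ge haT).elim (fun h ↦ absurd h.1 haKa) And.left
  exact (hbc.ge haT).elim (fun h ↦ h.2 haKc) fun h ↦ h.2 haKb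

/-! ### Minors -/

/-- The members of `C` that avoid `F`. For the cycle space of a graph this corresponds to deleting
the edges in `F`. -/
def delete (C : CycleSpace α) (F : Set α) : CycleSpace α where
  carrier := {Z | Z ∈ C ∧ Disjoint Z F}
  finite_of_mem' _ hZ := finite_of_mem hZ.1
  empty_mem' := ⟨C.empty_mem', empty_disjoint F⟩
  symmDiff_mem' _ hA _ hB :=
    ⟨symmDiff_mem hA.1 hB.1, (disjoint_union_left.2 ⟨hA.2, hB.2⟩).mono_left symmDiff_subset_union⟩

/-- The traces outside `F` of the members of `C`. For the cycle space of a graph this corresponds to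
contracting the edges in `F`. -/
def contract (C : CycleSpace α) (F : Set α) : CycleSpace α where
  carrier := (· \ F) '' C
  finite_of_mem' := forall_mem_image.2 fun _ hZ ↦ (finite_of_mem hZ).sdiff
  empty_mem' := ⟨∅, C.empty_mem', empty_sdiff F⟩
  symmDiff_mem' := by
    rintro _ ⟨A, hA, rfl⟩ _ ⟨B, hB, rfl⟩
    exact ⟨A ∆ B, symmDiff_mem hA hB, by grind⟩

lemma membersIn_delete (hIF : Disjoint I F) : (C.delete F).membersIn I = C.membersIn I :=
  subset_antisymm (fun _ hZ ↦ ⟨hZ.1.1, hZ.2⟩) fun _ hZ ↦ ⟨⟨hZ.1, hIF.mono_left hZ.2.2⟩, hZ.2⟩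

lemma eq_of_sdiff_eq (hF : C.membersIn F = ∅) (hA : A ∈ C) (hB : B ∈ C) (hAB : A \ F = B \ F) :
    A = B := by
  refine symmDiff_eq_empty.1 (not_nonempty_iff_eq_empty.1 fun hne ↦ ?_)
  have hmem : A ∆ B ∈ C.membersIn F :=
    ⟨symmDiff_mem hA hB, hne, symmDiff_subset_of_sdiff_eq hAB⟩
  exact hF.subset hmem

lemma membersIn_contract (hF : C.membersIn F = ∅) :
    (C.contract F).membersIn I = (· \ F) '' C.membersIn (I ∪ F) := by
  ext Z
  constructor
  · rintro ⟨⟨A, hA, rfl⟩, hne, hsub⟩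
    exact ⟨A, ⟨hA, hne.mono sdiff_subset, union_comm F I ▸ sdiff_subset_iff.1 hsub⟩, rfl⟩
  · rintro ⟨A, ⟨hA, hne, hsub⟩, rfl⟩
    refine ⟨⟨A, hA, rfl⟩, ?_, sdiff_subset_iff.2 (union_comm I F ▸ hsub)⟩
    exact sdiff_nonempty.2 fun hAF ↦ hF.subset (⟨hA, hne, hAF⟩ : A ∈ C.membersIn F)

lemma subsingleton_membersIn_contract (hF : C.membersIn F = ∅) :
    ((C.contract F).membersIn I).Subsingleton ↔ (C.membersIn (I ∪ F)).Subsingleton := by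
  rw [membersIn_contract hF]
  refine ⟨fun h ↦ ?_, fun h ↦ h.image _⟩
  exact fun A hA B hB ↦
    eq_of_sdiff_eq hF hA.1 hB.1 (h (mem_image_of_mem _ hA) (mem_image_of_mem _ hB))

lemma IsLiftMatroid.delete (hN : C.IsLiftMatroid N) (F : Set α) :
    (C.delete F).IsLiftMatroid (del N F) where
  subset_ground Z hZ := subset_sdiff.2 ⟨hN.subset_ground Z hZ.1, hZ.2⟩
  indep_iff I := by
    change (N ＼ F).Indep I ↔ I ⊆ N.E \ F ∧ _
    rw [delete_indep_iff, hN.indep_iff, subset_sdiff, and_right_comm]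
    exact and_congr_right fun h ↦ by rw [membersIn_delete h.2]

lemma IsLiftMatroid.indep_of_membersIn_eq_empty (hN : C.IsLiftMatroid N) (hFE : F ⊆ N.E)
    (hF : C.membersIn F = ∅) : N.Indep F :=
  (hN.indep_iff F).2 ⟨hFE, hF ▸ subsingleton_empty⟩

lemma IsLiftMatroid.contract (hN : C.IsLiftMatroid N) (hFE : F ⊆ N.E) (hF : C.membersIn F = ∅) :
    (C.contract F).IsLiftMatroid (con N F) where
  subset_ground := forall_mem_image.2 fun Z hZ ↦ sdiff_subset_sdiff_left (hN.subset_ground Z hZ)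
  indep_iff I := by
    change (N ／ F).Indep I ↔ I ⊆ N.E \ F ∧ _
    rw [(hN.indep_of_membersIn_eq_empty hFE hF).contract_indep_iff, hN.indep_iff, union_subset_iff,
      and_iff_left hFE, subset_sdiff, subsingleton_membersIn_contract hF]
    tauto

end CycleSpace

end CycleSpaces

/-! ### The cycle space of a graph -/

section GraphCycleSpace

open scoped symmDiff

variable {V α : Type u}

lemma count_toMultiset_eq [DecidableEq V] (z : Sym2 V) (v : V) :
    z.toMultiset.count v = (if v ∈ z then 1 else 0) + if z = Sym2.diag v then 1 else 0 := by
  induction z with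
  | h a b =>
    simp only [Sym2.toMultiset, Sym2.lift_mk, Multiset.coe_count, List.count_cons, List.count_nil,
      beq_iff_eq, Sym2.mem_iff, Sym2.diag, Sym2.eq_iff]
    grind

lemma isDiag_iff_forall_even_count [DecidableEq V] (z : Sym2 V) :
    z.IsDiag ↔ ∀ v, Even (z.toMultiset.count v) := by
  induction z with
  | h a b =>
    simp only [Sym2.toMultiset, Sym2.lift_mk, Multiset.coe_count, List.count_cons, List.count_nil,
      beq_iff_eq, Sym2.mk_isDiag_iff]
    exact ⟨by grind, fun h ↦ by have := h a; grind⟩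

namespace Graph

variable (G : Graph V α) {S T Z A B : Set α} {W : Finset V} {e f : α} {v : V}

lemma deg_coe [DecidableEq V] (S : Finset α) (v : V) :
    G.deg (S : Set α) v = ∑ e ∈ S, (G.inc e).toMultiset.count v := by
  simp only [count_toMultiset_eq, Finset.sum_add_distrib, ← Finset.card_filter,
    ← ncard_coe_finset, Finset.coe_filter]
  rfl

lemma deg_symmDiff_add (hA : A.Finite) (hB : B.Finite) (v : V) :
    G.deg (A ∆ B) v + 2 * G.deg (A ∩ B) v = G.deg A v + G.deg B v := by
  classical
  lift A to Finset α using hA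
  lift B to Finset α using hB
  rw [← Finset.coe_symmDiff, ← Finset.coe_inter]
  simp only [deg_coe]
  rw [symmDiff_def, Finset.sup_eq_union, Finset.sum_union disjoint_sdiff_sdiff,
    ← Finset.sum_inter_add_sum_sdiff A B, ← Finset.sum_inter_add_sum_sdiff B A,
    Finset.inter_comm B A]
  ring

lemma even_deg_symmDiff (hA : A.Finite) (hB : B.Finite) :
    Even (G.deg (A ∆ B) v) ↔ (Even (G.deg A v) ↔ Even (G.deg B v)) := by
  rw [← Nat.even_add, ← G.deg_symmDiff_add hA hB, Nat.even_add, iff_true_right (even_two_mul _)]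

lemma deg_eq_zero (h : v ∉ G.vertsOf S) : G.deg S v = 0 := by
  have hmem : {e ∈ S | v ∈ G.inc e} = ∅ :=
    sep_eq_empty_iff_mem_false.2 fun e he hv ↦ h ⟨e, he, hv⟩
  have hdiag : {e ∈ S | G.inc e = Sym2.diag v} = ∅ :=
    sep_eq_empty_iff_mem_false.2 fun e he hd ↦ h ⟨e, he, hd ▸ Sym2.mem_mk_left v v⟩
  rw [deg, hmem, hdiag, ncard_empty]

lemma deg_pos (hS : S.Finite) (h : v ∈ G.vertsOf S) : 0 < G.deg S v := by
  obtain ⟨e, he, hv⟩ := h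
  exact Nat.add_pos_left ((ncard_pos (hS.subset (sep_subset _ _))).2 ⟨e, he, hv⟩) _

lemma vertsOf_mono (h : S ⊆ T) : G.vertsOf S ⊆ G.vertsOf T :=
  fun _ ⟨e, he, hv⟩ ↦ ⟨e, h he, hv⟩

lemma finite_vertsOf (hS : S.Finite) : (G.vertsOf S).Finite := by
  classical
  refine (hS.biUnion fun e _ ↦ (G.inc e).toFinset.finite_toSet).subset fun v ⟨e, he, hv⟩ ↦ ?_
  exact mem_biUnion he (Sym2.mem_toFinset.2 hv)

lemma sum_deg (hS : S.Finite) (hW : G.vertsOf S ⊆ W) : ∑ v ∈ W, G.deg S v = 2 * S.ncard := by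
  classical
  lift S to Finset α using hS
  have hsum : ∀ e ∈ S, ∑ v ∈ W, (G.inc e).toMultiset.count v = 2 := fun e he ↦ by
    rw [Multiset.sum_count_eq_card fun v hv ↦ hW ⟨e, he, Sym2.mem_toMultiset.1 hv⟩,
      Sym2.card_toMultiset]
  simp only [deg_coe]
  rw [Finset.sum_comm, Finset.sum_congr rfl hsum, Finset.sum_const, ncard_coe_finset, mul_comm,
    smul_eq_mul, mul_comm]

lemma even_deg_of_forall_ne (hS : S.Finite) (h : ∀ w ≠ v, Even (G.deg S w)) :
    Even (G.deg S v) := by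
  classical
  have hfin : (insert v (G.vertsOf S)).Finite := (G.finite_vertsOf hS).insert v
  have hsum := G.sum_deg (W := hfin.toFinset) hS (by simp)
  rw [← Finset.add_sum_erase _ _ (hfin.mem_toFinset.2 (mem_insert v _))] at hsum
  have hrest : Even (∑ w ∈ hfin.toFinset.erase v, G.deg S w) :=
    Finset.even_sum _ fun w hw ↦ h w (Finset.ne_of_mem_erase hw)
  exact (Nat.even_add.1 (hsum ▸ even_two_mul _)).2 hrest

/-- The binary cycle space of `G`: the finite sets of edges in which all degrees are even. -/
def cycleSpace : CycleSpace α where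
  carrier := {Z | Z ⊆ G.E ∧ Z.Finite ∧ ∀ v, Even (G.deg Z v)}
  finite_of_mem' _ hZ := hZ.2.1
  empty_mem' := ⟨empty_subset _, finite_empty, fun v ↦ by simp [deg]⟩
  symmDiff_mem' _ hA _ hB := ⟨symmDiff_subset_union.trans (union_subset hA.1 hB.1),
    hA.2.1.symmDiff hB.2.1, fun v ↦
      (G.even_deg_symmDiff hA.2.1 hB.2.1).2 (iff_of_true (hA.2.2 v) (hB.2.2 v))⟩

lemma mem_cycleSpace : Z ∈ G.cycleSpace ↔ Z ⊆ G.E ∧ Z.Finite ∧ ∀ v, Even (G.deg Z v) := Iff.rfl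

variable {G}

lemma IsCycle.mem_cycleSpace (hZ : G.IsCycle Z) : Z ∈ G.cycleSpace := by
  refine ⟨hZ.1, hZ.2.1, fun v ↦ ?_⟩
  by_cases hv : v ∈ G.vertsOf Z
  · exact hZ.2.2.2.1 v hv ▸ even_two
  · exact G.deg_eq_zero hv ▸ Even.zero

lemma singleton_mem_cycleSpace_iff (he : e ∈ G.E) : {e} ∈ G.cycleSpace ↔ (G.inc e).IsDiag := by
  classical
  have hdeg (v : V) : G.deg {e} v = (G.inc e).toMultiset.count v := by
    rw [← Finset.coe_singleton, deg_coe, Finset.sum_singleton]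
  simp [mem_cycleSpace, he, hdeg, isDiag_iff_forall_even_count]

lemma membersIn_singleton_eq_empty (he : e ∈ G.E) (hlink : ¬ (G.inc e).IsDiag) :
    G.cycleSpace.membersIn {e} = ∅ :=
  eq_empty_of_forall_notMem fun _ hZ ↦ hlink <| (singleton_mem_cycleSpace_iff he).1 <|
    hZ.2.1.subset_singleton_iff.1 hZ.2.2 ▸ hZ.1

lemma pair_mem_cycleSpace (he : e ∈ G.E) (hf : f ∈ G.E) (hef : e ≠ f) (h : G.inc e = G.inc f) :
    {e, f} ∈ G.cycleSpace := by
  classical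
  refine ⟨pair_subset he hf, toFinite _, fun v ↦ ?_⟩
  rw [← Finset.coe_pair, deg_coe, Finset.sum_pair hef, h]
  exact Even.add_self _

/-- The edges of `Z` in the component of `u` form a member of the cycle space. -/
lemma connectedOn_of_isCycle_cycleSpace (hZ : G.cycleSpace.IsCycle Z) : G.ConnectedOn Z := by
  intro u ⟨e, he, hue⟩ v ⟨f, hf, hvf⟩
  set Y : Set α := {e ∈ Z | ∃ w ∈ G.inc e, Relation.ReflTransGen (G.AdjOn Z) u w}
  have hYZ : Y ⊆ Z := sep_subset _ _
  have hreach : ∀ e ∈ Y, ∀ x ∈ G.inc e, Relation.ReflTransGen (G.AdjOn Z) u x := by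
    rintro e ⟨heZ, w, hw, hr⟩ x hx
    rcases eq_or_ne w x with rfl | hwx
    · exact hr
    · exact hr.tail ⟨e, heZ, (Sym2.mem_and_mem_iff hwx).1 ⟨hw, hx⟩⟩
  have hdeg : ∀ x, Relation.ReflTransGen (G.AdjOn Z) u x → G.deg Y x = G.deg Z x := by
    intro x hx
    have hmem : {e ∈ Y | x ∈ G.inc e} = {e ∈ Z | x ∈ G.inc e} :=
      subset_antisymm (fun e he ↦ ⟨he.1.1, he.2⟩) fun e he ↦ ⟨⟨he.1, x, he.2, hx⟩, he.2⟩
    have hdiag : {e ∈ Y | G.inc e = Sym2.diag x} = {e ∈ Z | G.inc e = Sym2.diag x} :=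
      subset_antisymm (fun e he ↦ ⟨he.1.1, he.2⟩)
        fun e he ↦ ⟨⟨he.1, x, he.2 ▸ Sym2.mem_mk_left x x, hx⟩, he.2⟩
    rw [deg, deg, hmem, hdiag]
  have hYG : Y ∈ G.cycleSpace := by
    refine ⟨hYZ.trans hZ.mem.1, hZ.mem.2.1.subset hYZ, fun x ↦ ?_⟩
    by_cases hx : Relation.ReflTransGen (G.AdjOn Z) u x
    · exact hdeg x hx ▸ hZ.mem.2.2 x
    · exact G.deg_eq_zero (fun ⟨e, he, hxe⟩ ↦ hx (hreach e he x hxe)) ▸ Even.zero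
  have hYZ' : Y = Z := hZ.eq_of_subset hYG ⟨e, he, u, hue, .refl⟩ hYZ
  exact hreach f (hYZ' ▸ hf) v hvf

lemma eq_of_forall_even_deg_iff (hZ : G.cycleSpace.IsCycle Z) (he : e ∈ Z) (hS : S ⊆ Z \ {e})
    (hT : T ⊆ Z \ {e}) (h : ∀ w ≠ v, Even (G.deg S w) ↔ Even (G.deg T w)) : S = T := by
  have hfin : (Z \ {e}).Finite := hZ.mem.2.1.sdiff
  have hST : S ∆ T ⊆ Z \ {e} := symmDiff_subset_union.trans (union_subset hS hT)
  have heven : ∀ w ≠ v, Even (G.deg (S ∆ T) w) := fun w hw ↦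
    (G.even_deg_symmDiff (hfin.subset hS) (hfin.subset hT)).2 (h w hw)
  have hmem : S ∆ T ∈ G.cycleSpace := by
    refine ⟨hST.trans (sdiff_subset.trans hZ.mem.1), hfin.subset hST, fun w ↦ ?_⟩
    rcases eq_or_ne w v with rfl | hw
    exacts [G.even_deg_of_forall_ne (hfin.subset hST) heven, heven w hw]
  refine symmDiff_eq_empty.1 (not_nonempty_iff_eq_empty.1 fun hne ↦ ?_)
  exact (hST (hZ.eq_of_subset hmem hne (hST.trans sdiff_subset) ▸ he)).2 rfl

/-- Subsets of `Z` avoiding a fixed edge are determined by the parities of their degrees at all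
vertices of `Z` but one. -/
lemma ncard_le_ncard_vertsOf (hZ : G.cycleSpace.IsCycle Z) : Z.ncard ≤ (G.vertsOf Z).ncard := by
  have hfin : Z.Finite := hZ.mem.2.1
  have hVfin : (G.vertsOf Z).Finite := G.finite_vertsOf hfin
  obtain ⟨e, he⟩ := hZ.prop.2
  obtain ⟨v, hv⟩ : ∃ v, v ∈ G.inc e := ⟨_, (G.inc e).out_fst_mem⟩
  have hvZ : v ∈ G.vertsOf Z := ⟨e, he, hv⟩
  have hcard : (𝒫 (Z \ {e})).ncard ≤ (𝒫 (G.vertsOf Z \ {v})).ncard := by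
    refine ncard_le_ncard_of_injOn (fun S ↦ {w ∈ G.vertsOf Z \ {v} | ¬ Even (G.deg S w)})
      (fun S _ ↦ sep_subset _ _) (fun S hS T hT hST ↦ ?_) hVfin.sdiff.finite_subsets
    refine eq_of_forall_even_deg_iff (v := v) hZ he hS hT fun w hw ↦ ?_
    by_cases hwZ : w ∈ G.vertsOf Z
    · have := congrArg (w ∈ ·) hST
      grind
    · have hzero : ∀ S ⊆ Z \ {e}, G.deg S w = 0 := fun S hS ↦
        G.deg_eq_zero fun hw ↦ hwZ (G.vertsOf_mono (hS.trans sdiff_subset) hw)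
      rw [hzero S hS, hzero T hT]
  rw [ncard_powerset _ hfin.sdiff, ncard_powerset _ hVfin.sdiff,
    Nat.pow_le_pow_iff_right one_lt_two] at hcard
  rw [← ncard_sdiff_singleton_add_one he hfin, ← ncard_sdiff_singleton_add_one hvZ hVfin]
  exact Nat.succ_le_succ hcard

/-- All degrees are at least two, and the handshake lemma forces equality because there are at most
as many edges as vertices. -/
lemma isCycle_of_isCycle_cycleSpace (hZ : G.cycleSpace.IsCycle Z) : G.IsCycle Z := by
  have hfin : Z.Finite := hZ.mem.2.1
  refine ⟨hZ.mem.1, hfin, hZ.prop.2, fun v hv ↦ ?_, connectedOn_of_isCycle_cycleSpace hZ⟩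
  obtain ⟨W, hW⟩ := (G.finite_vertsOf hfin).exists_finset_coe
  have hge : ∀ w ∈ W, 2 ≤ G.deg Z w := fun w hw ↦ by
    have := G.deg_pos hfin (hW ▸ hw : w ∈ G.vertsOf Z)
    obtain ⟨k, hk⟩ := hZ.mem.2.2 w
    lia
  have hle : ∑ w ∈ W, G.deg Z w ≤ ∑ w ∈ W, 2 := by
    have := ncard_le_ncard_vertsOf hZ
    rw [← hW, ncard_coe_finset] at this
    rw [G.sum_deg hfin hW.ge, Finset.sum_const, smul_eq_mul, mul_comm]
    gcongr
  exact ((Finset.sum_eq_sum_iff_of_le hge).1 (hle.antisymm' (Finset.sum_le_sum hge)) v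
    (hW ▸ hv : v ∈ (W : Set V))).symm

lemma exists_isCycle_of_mem_cycleSpace (hZ : Z ∈ G.cycleSpace) (he : e ∈ Z) :
    ∃ A, G.IsCycle A ∧ e ∈ A ∧ A ⊆ Z := by
  obtain ⟨A, hA, heA, hAZ⟩ := CycleSpace.exists_isCycle_subset hZ he
  exact ⟨A, isCycle_of_isCycle_cycleSpace hA, heA, hAZ⟩

lemma hasTwoCycles_iff : G.HasTwoCycles S ↔ ¬ (G.cycleSpace.membersIn S).Subsingleton := by
  constructor
  · rintro ⟨A, B, hA, hB, hAB, hAS, hBS⟩ h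
    exact hAB (h ⟨hA.mem_cycleSpace, hA.2.2.1, hAS⟩ ⟨hB.mem_cycleSpace, hB.2.2.1, hBS⟩)
  · intro h
    obtain ⟨Y, hY, Z, hZ, hne⟩ := not_subsingleton_iff.1 h
    wlog hs : ¬ Z ⊆ Y generalizing Y Z
    · exact this Z hZ Y hY hne.symm fun hYZ ↦ hne (hYZ.antisymm (not_not.1 hs))
    obtain ⟨hY, ⟨e, he⟩, hYS⟩ := hY
    obtain ⟨f, hf, hfY⟩ := not_subset.1 hs
    obtain ⟨A, hA, -, hAY⟩ := exists_isCycle_of_mem_cycleSpace hY he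
    obtain ⟨B, hB, hfB, hBZ⟩ := exists_isCycle_of_mem_cycleSpace hZ.1 hf
    exact ⟨A, B, hA, hB, fun hAB ↦ hfY (hAY (hAB ▸ hfB)), hAY.trans hYS, hBZ.trans hZ.2.2⟩

end Graph

variable {G : Graph V α} {M N : Matroid α}

lemma IsGraphicRep.isCycleMatroid (h : IsGraphicRep G M) : G.cycleSpace.IsCycleMatroid M where
  subset_ground Z hZ := h.1 ▸ hZ.1
  indep_iff I := by
    refine ⟨fun hI ↦ ⟨hI.subset_ground, eq_empty_of_forall_notMem ?_⟩, fun ⟨hIE, hI⟩ ↦ ?_⟩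
    · rintro Z ⟨hZ, ⟨e, he⟩, hZI⟩
      obtain ⟨A, hA, -, hAZ⟩ := Graph.exists_isCycle_of_mem_cycleSpace hZ he
      have hcirc : M.IsCircuit A := (h.2 A).2 hA
      exact hcirc.not_indep (hI.subset (hAZ.trans hZI))
    · rw [indep_iff_forall_subset_not_isCircuit hIE]
      intro A hAI hA
      have hcyc : G.IsCycle A := (h.2 A).1 hA
      exact hI.subset ⟨hcyc.mem_cycleSpace, hcyc.2.2.1, hAI⟩

lemma IsLiftRep.isLiftMatroid (h : IsLiftRep G N) : G.cycleSpace.IsLiftMatroid N where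
  subset_ground Z hZ := h.1 ▸ hZ.1
  indep_iff I := by
    refine ⟨fun hI ↦ ⟨hI.subset_ground, fun Y hY Z hZ ↦ by_contra fun hne ↦ ?_⟩,
      fun ⟨hIE, hI⟩ ↦ ?_⟩
    · have htwo : G.HasTwoCycles (Y ∪ Z) := Graph.hasTwoCycles_iff.2 fun hsub ↦
        hne (hsub ⟨hY.1, hY.2.1, subset_union_left⟩ ⟨hZ.1, hZ.2.1, subset_union_right⟩)
      have hE : Y ∪ Z ⊆ G.E := union_subset hY.1.1 hZ.1.1
      have hfin : {X | X ⊆ G.E ∧ G.HasTwoCycles X ∧ X ⊆ Y ∪ Z}.Finite :=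
        (hY.1.2.1.union hZ.1.2.1).finite_subsets.subset fun X hX ↦ hX.2.2
      obtain ⟨X, hXYZ, hX, hmin⟩ := hfin.exists_le_minimal ⟨hE, htwo, subset_rfl⟩
      have hcirc : N.IsCircuit X := (h.2 X).2
        ⟨⟨hX.1, hX.2.1⟩, fun S hS hSX ↦ hmin ⟨hS.1, hS.2, hSX.trans hXYZ⟩ hSX⟩
      exact hcirc.not_indep (hI.subset (hXYZ.trans (union_subset hY.2.2 hZ.2.2)))
    · rw [indep_iff_forall_subset_not_isCircuit hIE]
      intro X hXI hX
      have hL : G.LiftCircuit X := (h.2 X).1 hX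
      exact Graph.hasTwoCycles_iff.1 hL.prop.2 (hI.anti (CycleSpace.membersIn_mono hXI))

end GraphCycleSpace

/-! ### Corank and cosimplification -/

section Cosimplification

variable {α : Type u} {N : Matroid α} {B F R S X : Set α} {x y z : α}

lemma eRank_eq_encard (hB : N.IsBase B) : eRank N = B.encard := by
  refine le_antisymm (iSup_le fun ⟨I, hI, _⟩ ↦ ?_) ?_
  · exact hI.encard_le_eRank.trans_eq hB.encard_eq_eRank.symm
  · exact le_iSup (fun I : {I : Set α // N.Indep I ∧ I ⊆ N.E} ↦ (I : Set α).encard)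
      ⟨B, hB.indep, hB.subset_ground⟩

lemma eRank_dual_le_encard (hF : N.Indep (N.E \ F)) : eRank N✶ ≤ F.encard := by
  obtain ⟨B, hB, hFB⟩ := hF.exists_isBase_superset
  rw [eRank_eq_encard hB.compl_isBase_dual]
  exact encard_le_encard (sdiff_subset_comm.1 hFB)

lemma SeriesPair.symm (h : SeriesPair N x y) : SeriesPair N y x :=
  ⟨fun X hX ↦ (h.1 X hX).symm, h.2.imp fun _ ⟨hX, hx, hy⟩ ↦ ⟨hX, hy, hx⟩⟩

lemma SeriesPair.trans (h : SeriesPair N x y) (h' : SeriesPair N y z) : SeriesPair N x z :=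
  ⟨fun X hX ↦ (h.1 X hX).trans (h'.1 X hX),
    h.2.imp fun X ⟨hX, hx, hy⟩ ↦ ⟨hX, hx, (h'.1 X hX).1 hy⟩⟩

lemma SeriesPair.mem_ground (h : SeriesPair N x y) : x ∈ N.E :=
  have ⟨_, _, hX, hx, _⟩ := h
  hX.prop.subset_ground hx

lemma seriesPair_self_of_circuit (hX : Circuit N X) (hx : x ∈ X) : SeriesPair N x x :=
  ⟨fun _ _ ↦ Iff.rfl, X, hX, hx, hx⟩

lemma IsSeriesClass.eq_setOf_seriesPair (hS : IsSeriesClass N S) (hx : x ∈ S) :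
    S = {y | SeriesPair N x y} := by
  have hsub : S ⊆ {y | SeriesPair N x y} := fun y hy ↦ hS.prop.2 x hx y hy
  refine hsub.antisymm (hS.le_of_ge ⟨⟨x, hsub hx⟩, fun y hy z hz ↦ ?_⟩ hsub)
  exact (show SeriesPair N x y from hy).symm.trans hz

/-- `R` is a transversal of the series classes of `N`: it contains exactly one element of each.
The elements of series classes are those in series with themselves, that is, the non-coloops. -/
structure IsSeriesTransversal (N : Matroid α) (R : Set α) : Prop where
  seriesPair_self : ∀ x ∈ R, SeriesPair N x x
  exists_seriesPair : ∀ x, SeriesPair N x x → ∃ y ∈ R, SeriesPair N x y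
  eq_of_seriesPair : ∀ x ∈ R, ∀ y ∈ R, SeriesPair N x y → x = y

lemma exists_isSeriesTransversal (N : Matroid α) : ∃ R, IsSeriesTransversal N R := by
  let s : Setoid {x // SeriesPair N x x} :=
    ⟨fun x y ↦ SeriesPair N x y, fun x ↦ x.2, SeriesPair.symm, SeriesPair.trans⟩
  refine ⟨range fun c : Quotient s ↦ (c.out : α), forall_mem_range.2 fun c ↦ c.out.2,
    fun x hx ↦ ⟨_, mem_range_self ⟦⟨x, hx⟩⟧, ?_⟩, ?_⟩
  · exact s.symm (Quotient.mk_out (⟨x, hx⟩ : {x // SeriesPair N x x}))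
  · rintro _ ⟨c, rfl⟩ _ ⟨d, rfl⟩ hcd
    exact congrArg (fun c ↦ (c.out : α)) ((Quotient.out_equiv_out (s := s)).1 hcd)

namespace IsSeriesTransversal

lemma indep_compl (hR : IsSeriesTransversal N R) : N.Indep (N.E \ R) := by
  rw [indep_iff_forall_subset_not_isCircuit sdiff_subset]
  intro X hXR hX
  obtain ⟨x, hx⟩ := hX.nonempty
  obtain ⟨y, hyR, hxy⟩ := hR.exists_seriesPair x (seriesPair_self_of_circuit hX hx)
  exact (hXR ((hxy.1 X hX).1 hx)).2 hyR

lemma isCosimplification (hR : IsSeriesTransversal N R) :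
    IsCosimplification N (con N (N.E \ R)) := by
  refine ⟨N.E \ R, sdiff_subset, rfl, fun e he ↦ ?_, fun S hS ↦ ?_⟩
  · have he' : N.IsColoop e := dual_isLoop_iff_isColoop.1 (singleton_dep.1 he)
    refine ⟨he'.mem_ground, fun heR ↦ ?_⟩
    obtain ⟨-, X, hX, heX, -⟩ := hR.seriesPair_self e heR
    exact IsCircuit.not_isColoop_of_mem hX heX he'
  · obtain ⟨x, hx⟩ := hS.prop.1
    obtain ⟨y, hyR, hxy⟩ := hR.exists_seriesPair x (hS.prop.2 x hx x hx)
    have hyS : y ∈ S := (hS.eq_setOf_seriesPair hx).ge hxy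
    refine ⟨y, hyS, subset_antisymm ?_ ?_⟩
    · rintro z ⟨hzS, hz⟩
      have hyz : SeriesPair N y z := hS.prop.2 y hyS z hzS
      have hzR : z ∈ R := by_contra fun hzR ↦ hz ⟨hyz.symm.mem_ground, hzR⟩
      exact (hR.eq_of_seriesPair y hyR z hzR hyz).symm
    · exact singleton_subset_iff.2 ⟨hyS, fun h ↦ h.2 hyR⟩

lemma mem_insert_of_seriesPair (hR : IsSeriesTransversal N R) (hx : x ∈ R)
    (hxy : SeriesPair N x y) : y ∈ insert x (N.E \ R) := by
  by_cases hy : y ∈ R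
  · exact Or.inl (hR.eq_of_seriesPair x hx y hy hxy).symm
  · exact Or.inr ⟨hxy.symm.mem_ground, hy⟩

end IsSeriesTransversal

lemma exists_indep_of_cosimplification {k : ℕ∞}
    (h : ∀ N', IsCosimplification N N' → k ≤ eRank N') :
    ∃ R, IsSeriesTransversal N R ∧ ∃ J ⊆ R, k ≤ J.encard ∧ N.Indep (J ∪ (N.E \ R)) := by
  obtain ⟨R, hR⟩ := exists_isSeriesTransversal N
  obtain ⟨J, hJ⟩ := (con N (N.E \ R)).exists_isBase
  obtain ⟨hdisj, hI⟩ := (hR.indep_compl.contract_indep_iff (J := J)).1 hJ.indep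
  refine ⟨R, hR, J, fun x hx ↦ ?_, eRank_eq_encard hJ ▸ h _ hR.isCosimplification, hI⟩
  by_contra hxR
  exact hdisj.notMem_of_mem_left hx ⟨hI.subset_ground (Or.inl hx), hxR⟩

end Cosimplification

/-! ### Cosimplifications of rank at least three -/

section CosimplificationRank

open scoped symmDiff

variable {α : Type u} {C D : CycleSpace α} {N : Matroid α} {F I R S X Z : Set α}
  {e f w x y : α}

lemma exists_indep_con (hI : N.Indep I) (he : N.Indep {e}) :
    ∃ w, (con N {e}).Indep (I \ {w}) ∧ (e ∈ I → w = e) := by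
  suffices h : ∃ w, N.Indep (insert e (I \ {w})) ∧ (e ∈ I → w = e) ∧ e ∉ I \ {w} by
    obtain ⟨w, hw, hwe, heI⟩ := h
    exact ⟨w, he.contract_indep_iff.2
      ⟨disjoint_singleton_right.2 heI, union_singleton (a := e) ▸ hw⟩, hwe⟩
  by_cases hind : N.Indep (insert e I)
  · exact ⟨e, hind.subset (insert_subset_insert sdiff_subset), fun _ ↦ rfl, fun h ↦ h.2 rfl⟩
  · have heI : e ∉ I := fun heI ↦ hind (by rwa [insert_eq_of_mem heI])
    have hcl : e ∈ N.closure I := by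
      by_contra hcl
      exact hind ((hI.insert_indep_iff_of_notMem heI).2 ⟨he.subset_ground rfl, hcl⟩)
    obtain ⟨w, hw, hwe⟩ : ∃ w ∈ N.fundCircuit e I, w ≠ e := by
      by_contra! hall
      exact (hI.fundCircuit_isCircuit hcl heI).not_indep (he.subset hall)
    refine ⟨w, ?_, fun h ↦ absurd h heI, fun h ↦ heI h.1⟩
    rw [insert_sdiff_singleton_comm hwe.symm]
    exact (hI.mem_fundCircuit_iff hcl heI).1 hw

lemma not_indep_con_sdiff_singleton (hcr : 2 ≤ eRank N✶) (he : N.Indep {e}) (x : α) :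
    ¬ (con N {e}).Indep ((con N {e}).E \ {x}) := by
  intro hx
  have hind : N.Indep (N.E \ {x}) := (he.contract_indep_iff.1 hx).2.subset fun y hy ↦
    or_iff_not_imp_right.2 fun hye ↦ ⟨⟨hy.1, hye⟩, hy.2⟩
  exact absurd (hcr.trans (eRank_dual_le_encard hind)) (by simp)

lemma not_indep_del_sdiff_singleton (hcr : 3 ≤ eRank N✶) (e x : α) :
    ¬ (del N {e}).Indep ((del N {e}).E \ {x}) := by
  intro hx
  have hind : N.Indep (N.E \ {e, x}) := (delete_indep_iff.1 hx).1.subset fun y hy ↦ by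
    simp only [mem_sdiff, mem_insert_iff, mem_singleton_iff, not_or] at hy
    exact ⟨⟨hy.1, hy.2.1⟩, hy.2.2⟩
  have hpair : ({e, x} : Set α).encard ≤ 2 :=
    (encard_insert_le _ _).trans_eq (by rw [encard_singleton, one_add_one_eq_two])
  exact absurd ((hcr.trans (eRank_dual_le_encard hind)).trans hpair) (by decide)

lemma encard_le_two_of_subsingleton_sdiff (h : (S \ {x}).Subsingleton) : S.encard ≤ 2 := by
  calc S.encard ≤ (insert x (S \ {x})).encard := encard_le_encard (by simp)
    _ ≤ (S \ {x}).encard + 1 := encard_insert_le _ _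
    _ ≤ 1 + 1 := by gcongr; exact encard_le_one_iff_subsingleton.2 h
    _ = 2 := one_add_one_eq_two

namespace CycleSpace

lemma IsLiftMatroid.exists_mem_of_circuit (hN : C.IsLiftMatroid N) (hX : Circuit N X)
    (hx : x ∈ X) : ∃ Z ∈ C, x ∈ Z ∧ Z ⊆ X := by
  by_contra! hall
  have hind : N.Indep (X \ {x}) := IsCircuit.sdiff_singleton_indep hX hx
  have hsub : C.membersIn X ⊆ C.membersIn (X \ {x}) := fun Z ⟨hZ, hne, hZX⟩ ↦
    ⟨hZ, hne, subset_sdiff_singleton hZX fun hxZ ↦ hall Z hZ hxZ hZX⟩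
  exact hX.prop.not_indep
    ((hN.indep_iff X).2 ⟨hX.prop.subset_ground, ((hN.indep_iff _).1 hind).2.anti hsub⟩)

lemma IsLiftMatroid.seriesPair (hN : C.IsLiftMatroid N) (hx : SeriesPair N x x)
    (hxy : ∀ Z ∈ C, x ∈ Z ↔ y ∈ Z) : SeriesPair N x y := by
  have hcirc : ∀ X, Circuit N X → (x ∈ X ↔ y ∈ X) := by
    refine fun X hX ↦ ⟨fun h ↦ ?_, fun h ↦ ?_⟩ <;>
      obtain ⟨Z, hZ, hmem, hZX⟩ := hN.exists_mem_of_circuit hX h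
    exacts [hZX ((hxy Z hZ).1 hmem), hZX ((hxy Z hZ).2 hmem)]
  obtain ⟨-, X, hX, hxX, -⟩ := hx
  exact ⟨hcirc, X, hX, hxX, (hcirc X hX).1 hxX⟩

/-- The elements of a cycle of a cactus lie in the same members, hence are in series. -/
lemma IsLiftMatroid.exists_isCycle_subset_insert (hN : C.IsLiftMatroid N) (hD : D.IsCactus)
    (hCD : ∀ Z ∈ C, ∃ Z' ∈ D, Z' \ F = Z \ F) (hR : IsSeriesTransversal N R) (hxR : x ∈ R)
    (hxF : x ∉ F) : ∃ K, D.IsCycle K ∧ x ∈ K ∧ K \ F ⊆ insert x (N.E \ R) := by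
  have hmem : ∀ Z ∈ C, ∃ Z' ∈ D, ∀ y ∉ F, y ∈ Z' ↔ y ∈ Z := fun Z hZ ↦
    have ⟨Z', hZ', h⟩ := hCD Z hZ
    ⟨Z', hZ', fun y hy ↦ ⟨fun hyZ ↦ (h.le ⟨hyZ, hy⟩).1, fun hyZ ↦ (h.ge ⟨hyZ, hy⟩).1⟩⟩
  have hxx := hR.seriesPair_self x hxR
  obtain ⟨-, X, hX, hxX, -⟩ := id hxx
  obtain ⟨Z, hZ, hxZ, -⟩ := hN.exists_mem_of_circuit hX hxX
  obtain ⟨Z', hZ', hZZ'⟩ := hmem Z hZ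
  obtain ⟨K, hK, hxK, -⟩ := exists_isCycle_subset hZ' ((hZZ' x hxF).2 hxZ)
  refine ⟨K, hK, hxK, fun y ⟨hyK, hyF⟩ ↦ hR.mem_insert_of_seriesPair hxR ?_⟩
  refine hN.seriesPair hxx fun Y hY ↦ ?_
  obtain ⟨Y', hY', hYY'⟩ := hmem Y hY
  rw [← hYY' x hxF, ← hYY' y hyF]
  exact ⟨fun h ↦ hD K Y' hK hY' ⟨x, hxK, h⟩ hyK, fun h ↦ hD K Y' hK hY' ⟨y, hyK, h⟩ hxK⟩

lemma subsingleton_of_subsingleton_membersIn (hI : (C.membersIn I).Subsingleton)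
    (hS : ∀ x ∈ S, ∃ Z ∈ C, x ∈ Z ∧ Z ⊆ I ∧ Z ∩ S ⊆ {x}) : S.Subsingleton := by
  intro x hx y hy
  obtain ⟨Y, hY, hxY, hYI, -⟩ := hS x hx
  obtain ⟨Z, hZ, hyZ, hZI, hZS⟩ := hS y hy
  have hYZ : Y = Z := hI ⟨hY, ⟨x, hxY⟩, hYI⟩ ⟨hZ, ⟨y, hyZ⟩, hZI⟩
  exact hZS ⟨hYZ ▸ hxY, hx⟩

lemma IsCactus.encard_le_two (hD : D.IsCactus) (hI : (D.membersIn I).Subsingleton)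
    (hS : ∀ x ∈ S, ∃ K, D.IsCycle K ∧ x ∈ K ∧ K ⊆ insert w I ∧ K ∩ S ⊆ {x}) :
    S.encard ≤ 2 := by
  choose! K hK hxK hKI hKS using hS
  have hnot : {x ∈ S | w ∉ K x}.Subsingleton :=
    subsingleton_of_subsingleton_membersIn hI fun x ⟨hx, hwx⟩ ↦ ⟨K x, (hK x hx).mem, hxK x hx,
      (subset_insert_iff_of_notMem hwx).1 (hKI x hx), fun y hy ↦ hKS x hx ⟨hy.1, hy.2.1⟩⟩
  have hmem : {x ∈ S | w ∈ K x}.Subsingleton := fun x ⟨hx, hwx⟩ y ⟨hy, hwy⟩ ↦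
    have hxy : K x = K y := hD.eq_of_mem (hK x hx) (hK y hy) hwx hwy
    hKS y hy ⟨hxy ▸ hxK x hx, hx⟩
  calc S.encard ≤ ({x ∈ S | w ∉ K x} ∪ {x ∈ S | w ∈ K x}).encard :=
        encard_le_encard fun x hx ↦ by by_cases hw : w ∈ K x <;> simp [hx, hw]
    _ ≤ 1 + 1 := (encard_union_le _ _).trans (add_le_add (encard_le_one_iff_subsingleton.2 hnot)
        (encard_le_one_iff_subsingleton.2 hmem))
    _ = 2 := one_add_one_eq_two

lemma IsLiftMatroid.not_isCactus_contract (hN : C.IsLiftMatroid N) (heE : {e} ⊆ N.E)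
    (he : C.membersIn {e} = ∅) (hrco : ∀ N', IsCosimplification N N' → 3 ≤ eRank N') :
    ¬ (C.contract {e}).IsCactus := by
  intro hD
  obtain ⟨R, hR, J, hJR, hJ, hI⟩ := exists_indep_of_cosimplification hrco
  have hcycle : ∀ x ∈ J, x ≠ e → ∃ K, (C.contract {e}).IsCycle K ∧ x ∈ K ∧ e ∉ K ∧
      K ⊆ insert x (N.E \ R) := by
    intro x hx hxe
    obtain ⟨K, hK, hxK, hKR⟩ := hN.exists_isCycle_subset_insert (F := {e}) hD
      (fun Z hZ ↦ ⟨Z \ {e}, ⟨Z, hZ, rfl⟩, by simp⟩) hR (hJR hx) hxe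
    obtain ⟨Z, -, rfl⟩ := hK.mem
    exact ⟨_, hK, hxK, fun h ↦ h.2 rfl, by simpa using hKR⟩
  obtain ⟨w, hw, hwe⟩ := exists_indep_con hI (hN.indep_of_membersIn_eq_empty heE he)
  have hsub := (((hN.contract heE he).indep_iff _).1 hw).2
  refine absurd (hJ.trans ?_) (by decide : ¬ (3 : ℕ∞) ≤ 2)
  by_cases heJ : e ∈ J ∪ (N.E \ R)
  · obtain rfl := hwe heJ
    refine encard_le_two_of_subsingleton_sdiff (x := w)
      (subsingleton_of_subsingleton_membersIn hsub fun x hx ↦ ?_)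
    obtain ⟨K, hK, hxK, heK, hKR⟩ := hcycle x hx.1 hx.2
    exact ⟨K, hK.mem, hxK, by grind, by grind⟩
  · refine hD.encard_le_two (w := w) hsub fun x hx ↦ ?_
    obtain ⟨K, hK, hxK, -, hKR⟩ := hcycle x hx fun hxe ↦ heJ (Or.inl (hxe ▸ hx))
    exact ⟨K, hK, hxK, by grind, by grind⟩

lemma exists_mem_delete_sdiff_eq (hef : {e, f} ∈ C) (hZ : Z ∈ C) :
    ∃ Z' ∈ C.delete {e}, Z' \ {e, f} = Z \ {e, f} := by
  by_cases heZ : e ∈ Z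
  · exact ⟨Z ∆ {e, f}, ⟨symmDiff_mem hZ hef, by grind⟩, by grind⟩
  · exact ⟨Z, ⟨hZ, disjoint_singleton_right.2 heZ⟩, rfl⟩

lemma IsLiftMatroid.not_isCactus_delete (hN : C.IsLiftMatroid N) (hef : {e, f} ∈ C)
    (hrco : ∀ N', IsCosimplification N N' → 3 ≤ eRank N') : ¬ (C.delete {e}).IsCactus := by
  intro hD
  obtain ⟨R, hR, J, hJR, hJ, hI⟩ := exists_indep_of_cosimplification hrco
  have hcycle : ∀ x ∈ J, x ≠ e → x ≠ f → ∃ K, (C.delete {e}).IsCycle K ∧ x ∈ K ∧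
      K ⊆ insert f (insert x (N.E \ R)) := by
    intro x hx hxe hxf
    obtain ⟨K, hK, hxK, hKR⟩ := hN.exists_isCycle_subset_insert hD
      (fun Z ↦ exists_mem_delete_sdiff_eq hef) hR (hJR hx) (by simp [hxe, hxf])
    have heK : e ∉ K := disjoint_singleton_right.1 hK.mem.2
    refine ⟨K, hK, hxK, fun y hy ↦ or_iff_not_imp_left.2 fun hyf ↦ hKR ⟨hy, ?_⟩⟩
    rintro (rfl | rfl)
    exacts [heK hy, hyf rfl]
  have hsub := ((hN.indep_iff _).1 hI).2
  refine absurd (hJ.trans ?_) (by decide : ¬ (3 : ℕ∞) ≤ 2)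
  by_cases hfI : f ∈ J ∪ (N.E \ R)
  · refine encard_le_two_of_subsingleton_sdiff (x := f)
      (subsingleton_of_subsingleton_membersIn hsub fun x ⟨hx, hxf⟩ ↦ ?_)
    by_cases hxe : x = e
    · exact ⟨{e, f}, hef, Or.inl hxe, by grind, by grind⟩
    · obtain ⟨K, hK, hxK, hKR⟩ := hcycle x hx hxe hxf
      exact ⟨K, hK.mem.1, hxK, by grind, by grind⟩
  · by_cases heI : e ∈ J ∪ (N.E \ R)
    · refine encard_le_two_of_subsingleton_sdiff (x := e)
        (subsingleton_of_subsingleton_membersIn hsub fun x ⟨hx, hxe⟩ ↦ ?_)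
      obtain ⟨K, hK, hxK, hKR⟩ := hcycle x hx hxe (by grind)
      by_cases hfK : f ∈ K
      · exact ⟨K ∆ {e, f}, symmDiff_mem hK.mem.1 hef, by grind, by grind, by grind⟩
      · exact ⟨K, hK.mem.1, hxK, by grind, by grind⟩
    · refine hD.encard_le_two (w := f)
        (hsub.anti (membersIn_delete (disjoint_singleton_right.2 heI)).le) fun x hx ↦ ?_
      obtain ⟨K, hK, hxK, hKR⟩ := hcycle x hx (by grind) (by grind)
      exact ⟨K, hK, hxK, by grind, by grind⟩

lemma IsLiftMatroid.isCactus_of_isGraphic (hN : C.IsLiftMatroid N) (hg : IsGraphic N)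
    (hco : ∀ x, ¬ N.Indep (N.E \ {x})) : C.IsCactus := by
  obtain ⟨V, H, hH⟩ := hg
  exact hN.isCactus hH.isCycleMatroid hco

end CycleSpace

end CosimplificationRank

theorem statement_15_general {V α : Type u} (N : Matroid α) (G : Graph V α)
    (hrep : IsLiftRep G N) (hrco : ∀ N', IsCosimplification N N' → 3 ≤ eRank N')
    (hcr : 3 ≤ eRank N✶) (e : α) (he : e ∈ G.E) :
    (¬ (G.inc e).IsDiag → ¬ IsGraphic (con N {e})) ∧
    (((G.inc e).IsDiag ∨ ∃ f ∈ G.E, f ≠ e ∧ ¬ (G.inc e).IsDiag ∧ G.inc f = G.inc e) →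
      ¬ IsGraphic (del N {e})) := by
  have hN := hrep.isLiftMatroid
  refine ⟨fun hlink hg ↦ ?_, fun h hg ↦ ?_⟩
  · have heN : {e} ⊆ N.E := singleton_subset_iff.2 (hrep.1 ▸ he)
    have hempty : G.cycleSpace.membersIn {e} = ∅ := Graph.membersIn_singleton_eq_empty he hlink
    have hcr₂ : 2 ≤ eRank N✶ := le_trans (by decide) hcr
    exact hN.not_isCactus_contract heN hempty hrco <|
      (hN.contract heN hempty).isCactus_of_isGraphic hg <|
        not_indep_con_sdiff_singleton hcr₂ (hN.indep_of_membersIn_eq_empty heN hempty)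
  · obtain ⟨f, hef⟩ : ∃ f, {e, f} ∈ G.cycleSpace := by
      rcases h with hloop | ⟨f, hf, hfe, -, hinc⟩
      · have he' := (Graph.singleton_mem_cycleSpace_iff he).2 hloop
        exact ⟨e, by rwa [pair_eq_singleton]⟩
      · exact ⟨f, Graph.pair_mem_cycleSpace he hf hfe.symm hinc.symm⟩
    exact hN.not_isCactus_delete hef hrco <|
      (hN.delete {e}).isCactus_of_isGraphic hg (not_indep_del_sdiff_singleton hcr e)

theorem statement_15 {V α : Type u} (N : Matroid α) (G : Graph V α)
    (hrep : IsLiftRep G N) (hng : ¬ IsGraphic N)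
    (hrco : ∀ N', IsCosimplification N N' → 4 ≤ eRank N')
    (hcr : 4 ≤ eRank N✶) (e : α) (he : e ∈ G.E) :
    (¬ (G.inc e).IsDiag → ¬ IsGraphic (con N {e})) ∧
    (((G.inc e).IsDiag ∨ ∃ f ∈ G.E, f ≠ e ∧ ¬ (G.inc e).IsDiag ∧ G.inc f = G.inc e) →
      ¬ IsGraphic (del N {e})) :=
  statement_15_general N G hrep (fun N' h ↦ le_trans (by decide) (hrco N' h))
    (le_trans (by decide) hcr) e he

end BLFormal
end
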